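/- arXiv:1606.05443 — 3 statements merged into one kernel-verified Lean document; each statement's English description precedes it below -/
import Mathlib

section
/- Let p ∈ {0,1,2,...} ∪ {∞} and let Ω ⊆ ℂ be a bounded domain (a bounded connected open set) whose boundary ∂Ω is the union of the images of finitely many pairwise disjoint Jordan curves. Then the class of nowhere holomorphically extendable functions f ∈ A^p(Ω) — that is, those f for which there exist no point z0 ∈ ∂Ω, radius r > 0 and holomorphic function F : D(z0, r) → ℂ such that F(z) = f(z) for every z ∈ D(z0, r) ∩ ∂Ω — is a dense and Gδ subset of A^p(Ω). -/
open Set Metric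

/-- `f` belongs to `A^p(U)`: `f` is holomorphic on `U` and, for every integer
`j ≤ p`, the derivative `f⁽ʲ⁾` extends continuously to the closure of `U` in `ℂ`. -/
def MemAp (p : ℕ∞) (U : Set ℂ) (f : ℂ → ℂ) : Prop :=
  DifferentiableOn ℂ f U ∧
    ∀ j : ℕ, (j : ℕ∞) ≤ p →
      ∃ g : ℂ → ℂ, ContinuousOn g (closure U) ∧ Set.EqOn g (iteratedDeriv j f) U

/-- The space `A^p(U)` as a type. -/
def ApSpace (p : ℕ∞) (U : Set ℂ) : Type :=
  {f : ℂ → ℂ // MemAp p U f}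

/-- The topology of `A^p(U)` for bounded `U`: uniform convergence on the closure of
`U` of (the continuous extensions of) all derivatives `f⁽ʲ⁾`, `j ≤ p`; by density of
`U` in its closure this is the topology of uniform convergence on `U` of the
derivatives `f⁽ʲ⁾`, `j ≤ p`. -/
noncomputable def apTop (p : ℕ∞) (U : Set ℂ) : TopologicalSpace (ApSpace p U) :=
  TopologicalSpace.induced
    (fun f => fun j : ℕ =>
      UniformFun.ofFun
        (fun z : ↥U => if (j : ℕ∞) ≤ p then iteratedDeriv j f.1 (z : ℂ) else 0))
    inferInstance

/-- `f ∈ A^p(Ω)` is nowhere holomorphically extendable: there are no `z0 ∈ ∂Ω`,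
`r > 0` and holomorphic `F : D(z0, r) → ℂ` with `F = f` on `D(z0, r) ∩ ∂Ω`, where
`f` is identified with its continuous extension `g` to the closure of `Ω`. -/
def NowhereExtAp (Ω : Set ℂ) (f : ℂ → ℂ) : Prop :=
  ¬ ∃ z0 ∈ frontier Ω, ∃ r : ℝ, 0 < r ∧ ∃ F : ℂ → ℂ,
      DifferentiableOn ℂ F (ball z0 r) ∧
      ∃ g : ℂ → ℂ, ContinuousOn g (closure Ω) ∧ Set.EqOn g f Ω ∧
        ∀ z ∈ ball z0 r ∩ frontier Ω, F z = g z


lemma aux_exists_log {A : Type*} [TopologicalSpace A] [SimplyConnectedSpace A]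
    [LocallyPathConnectedSpace A] (f : A → ℂ) (hf : Continuous f) (h0 : ∀ a, f a ≠ 0) :
    ∃ g : A → ℂ, Continuous g ∧ ∀ a, Complex.exp (g a) = f a := by
  obtain ⟨a₀⟩ : Nonempty A := inferInstance
  obtain ⟨F, ⟨-, hF⟩, -⟩ := Complex.isCoveringMapOn_exp.existsUnique_continuousMap_lifts
    ⟨f, hf⟩ (a₀ := a₀) (e₀ := Complex.log (f a₀)) (Complex.exp_log (h0 a₀)) (fun a => h0 a)
  exact ⟨F, F.continuous, fun a => congrFun hF a⟩

lemma aux_tietze {s : Set ℂ} (hs : IsClosed s) {f : ℂ → ℂ} (hf : ContinuousOn f s) :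
    ∃ g : ℂ → ℂ, Continuous g ∧ EqOn g f s := by
  obtain ⟨g, hg⟩ := ContinuousMap.exists_restrict_eq hs
    (⟨s.domRestrict f, continuousOn_iff_continuous_domRestrict.mp hf⟩ : C(s, ℂ))
  exact ⟨g, g.continuous, fun z hz => DFunLike.congr_fun hg ⟨z, hz⟩⟩

lemma aux_exp_const {A : Type*} [TopologicalSpace A] [PreconnectedSpace A] (d : A → ℂ)
    (hd : Continuous d) (c : ℂ) (h : ∀ t, Complex.exp (d t) = c) (s t : A) : d s = d t := by
  have := Complex.isCoveringMap_exp.eq_of_comp_eq (g₁ := d) (g₂ := fun _ => d t) hd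
    continuous_const (by funext x; simp [h]) t rfl
  exact congrFun this s

lemma aux_circle_no_log (c : ℂ) (R : ℝ) (hR : 0 < R) (k : ℤ) (l : ℂ → ℂ)
    (hl : ContinuousOn l (sphere c R))
    (h : ∀ z ∈ sphere c R, Complex.exp (l z) = (z - c) ^ k) : k = 0 := by
  have hm : ∀ t : ℝ, circleMap c R t ∈ sphere c R := fun t => circleMap_mem_sphere c hR.le t
  have hc : Continuous (fun t : ℝ => l (circleMap c R t)) :=
    hl.comp_continuous (continuous_circleMap c R) hm
  have hR' : (R : ℂ) ≠ 0 := by exact_mod_cast hR.ne'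
  have := aux_exp_const (fun t : ℝ => l (circleMap c R t) - k * (t * Complex.I))
    (hc.sub (by fun_prop))
    ((R : ℂ) ^ k) (by
      intro t
      rw [Complex.exp_sub, h _ (hm t), circleMap]
      rw [Complex.exp_int_mul, add_sub_cancel_left, mul_zpow]
      field_simp) (2 * Real.pi) 0
  have e : circleMap c R (2 * Real.pi) = circleMap c R 0 := by
    simpa using periodic_circleMap c R 0
  simp only [e] at this
  simp at this
  simpa using this

lemma aux_circle_factor (c : ℂ) (R : ℝ) (hR : 0 < R) (G : ℂ → ℂ)
    (hG : ContinuousOn G (sphere c R)) (h0 : ∀ z ∈ sphere c R, G z ≠ 0) :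
    ∃ (k : ℤ) (u : ℂ → ℂ), Continuous u ∧
      ∀ z ∈ sphere c R, G z = (z - c) ^ k * Complex.exp (u z) := by
  have hm : ∀ t : ℝ, circleMap c R t ∈ sphere c R := fun t => circleMap_mem_sphere c hR.le t
  have hR' : (R : ℂ) ≠ 0 := by exact_mod_cast hR.ne'
  have hc : Continuous (fun t : ℝ => G (circleMap c R t)) :=
    hG.comp_continuous (continuous_circleMap c R) hm
  obtain ⟨v, hv, hv'⟩ := aux_exists_log (fun t : ℝ => G (circleMap c R t)) hc
    (fun t => h0 _ (hm t))
  have hper : ∀ t, Complex.exp (v (t + 2 * Real.pi) - v t) = 1 := by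
    intro t
    rw [Complex.exp_sub, hv', hv', periodic_circleMap c R t, div_self (h0 _ (hm t))]
  have hconst := aux_exp_const (fun t : ℝ => v (t + 2 * Real.pi) - v t) (by fun_prop) 1 hper
  obtain ⟨k, hk⟩ := Complex.exp_eq_one_iff.1 (hper 0)
  have hw : Function.Periodic
      (fun t : ℝ => v t - k * (t * Complex.I + Complex.log R)) (2 * Real.pi) := by
    intro t
    have := hconst t 0
    simp only [hk] at this
    simp only [Complex.ofReal_add, Complex.ofReal_mul, Complex.ofReal_ofNat]
    linear_combination this
  have hwc : Continuous (hw.lift : AddCircle (2 * Real.pi) → ℂ) := by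
    refine continuous_coinduced_dom.2 ?_
    change Continuous (fun t : ℝ => v t - k * (t * Complex.I + Complex.log R))
    fun_prop
  let U : Circle → ℂ := fun z => hw.lift (AddCircle.homeomorphCircle'.symm z)
  have hU : Continuous U := hwc.comp (AddCircle.homeomorphCircle'.symm.continuous)
  have hUe : ∀ t : ℝ, U (Circle.exp t) = v t - k * (t * Complex.I + Complex.log R) := by
    intro t
    have : AddCircle.homeomorphCircle'.symm (Circle.exp t) = (t : AddCircle (2 * Real.pi)) := by
      rw [← AddCircle.homeomorphCircle'_apply_mk, Homeomorph.symm_apply_apply]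
    simp only [U, this]
    exact hw.lift_coe t
  have hmem : ∀ z : sphere c R, ((z : ℂ) - c) / R ∈ Submonoid.unitSphere ℂ := by
    intro z
    have := mem_sphere_iff_norm.1 z.2
    simp [Submonoid.unitSphere, this, abs_of_pos hR, hR.ne']
  have hcont : Continuous (fun z : sphere c R => U ⟨((z : ℂ) - c) / R, hmem z⟩) := by
    refine hU.comp (Continuous.subtype_mk ?_ _)
    fun_prop
  obtain ⟨g, hg⟩ := ContinuousMap.exists_restrict_eq isClosed_sphere
    (⟨_, hcont⟩ : C(sphere c R, ℂ))
  refine ⟨k, g, g.continuous, fun z hz => ?_⟩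
  have h1 : g z = U ⟨(z - c) / R, hmem ⟨z, hz⟩⟩ := DFunLike.congr_fun hg ⟨z, hz⟩
  obtain ⟨t, ht⟩ : ∃ t : ℝ, circleMap c R t = z := by
    have : z ∈ range (circleMap c R) := by rw [range_circleMap, abs_of_pos hR]; exact hz
    exact this
  have h2 : (⟨(z - c) / R, hmem ⟨z, hz⟩⟩ : Circle) = Circle.exp t := by
    apply Subtype.ext
    simp only [← ht, circleMap, Circle.coe_exp]
    field_simp
    ring
  rw [h1, h2, hUe, Complex.exp_sub, hv', ← ht, circleMap, add_sub_cancel_left,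
    Complex.exp_int_mul, Complex.exp_add, Complex.exp_log hR', mul_comm (R : ℂ)]
  have hne : (Complex.exp (t * Complex.I) * R) ^ k ≠ 0 :=
    zpow_ne_zero _ (mul_ne_zero (Complex.exp_ne_zero _) hR')
  rw [mul_div_assoc', mul_div_cancel_left₀ _ hne]


lemma aux_glue {s : Set ℂ} (hs : IsOpen s) {f g : ℂ → ℂ} (hf : ContinuousOn f (closure s))
    (hg : ContinuousOn g sᶜ) (h : ∀ z ∈ frontier s, f z = g z) :
    ∃ F : ℂ → ℂ, Continuous F ∧ EqOn F f (closure s) ∧ EqOn F g sᶜ := by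
  classical
  refine ⟨s.piecewise f g, continuous_piecewise h hf (by rwa [hs.isClosed_compl.closure_eq]),
    fun z hz => ?_, fun z hz => by simp [Set.piecewise, show z ∉ s from hz]⟩
  by_cases hzs : z ∈ s
  · simp [hzs]
  · have : z ∈ frontier s := by rw [hs.frontier_eq]; exact ⟨hz, hzs⟩
    simp [hzs, h z this]

lemma aux_generic (Φ : ℂ → ℂ) (hΦ : Continuous Φ) (C : Set ℂ) (hC : IsCompact C) (ε : ℝ)
    (hε : 0 < ε) (L : List (ℂ × ℝ)) (hL : ∀ d ∈ L, 0 < d.2) :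
    ∃ G : ℂ → ℂ, Continuous G ∧ (∀ z ∈ C, ‖G z - Φ z‖ < ε) ∧
      ∀ d ∈ L, ∀ z ∈ sphere d.1 d.2, G z ≠ 0 := by
  have hC' : IsCompact (cthickening 1 C) := hC.cthickening
  have hu := hC'.uniformContinuousOn_of_continuous hΦ.continuousOn
  obtain ⟨δ, hδ, hδ'⟩ := Metric.uniformContinuousOn_iff.1 hu (ε / 2) (by positivity)
  obtain ⟨g, hg, hg'⟩ := hΦ.exists_contDiff_dist_le_of_forall_mem_ball_dist_le
    (show 0 < min δ 1 by positivity)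
  have hgC : ∀ z ∈ C, dist (g z) (Φ z) ≤ ε / 2 := by
    intro z hz
    refine hg' z _ fun x hx => ?_
    have hx' := mem_ball.1 hx
    refine (hδ' x ?_ z (self_subset_cthickening C hz) (hx'.trans_le (min_le_left _ _))).le
    exact mem_cthickening_of_dist_le x z 1 C hz (hx'.le.trans (min_le_right _ _))
  have hdim : dimH (⋃ d ∈ {d | d ∈ L}, range (fun t : ℝ => g (circleMap d.1 d.2 t)))
      < Module.finrank ℝ ℂ := by
    rw [dimH_bUnion (List.finite_toSet L).countable]
    refine lt_of_le_of_lt (b := 1) (iSup₂_le fun d _ => ?_) (by simp)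
    have : ContDiff ℝ 1 (fun t : ℝ => g (circleMap d.1 d.2 t)) :=
      (hg.of_le (by exact_mod_cast le_top)).comp (contDiff_circleMap d.1 d.2)
    simpa using this.dimH_range_le
  obtain ⟨w, hw, hw'⟩ := (dense_compl_of_dimH_lt_finrank hdim).exists_dist_lt 0
    (show 0 < ε / 2 by positivity)
  refine ⟨fun z => g z - w, hg.continuous.sub continuous_const, fun z hz => ?_,
    fun d hd z hz h0 => hw ?_⟩
  · have h1 := hgC z hz
    rw [dist_eq_norm] at h1
    rw [dist_zero_left] at hw'
    calc ‖g z - w - Φ z‖ = ‖(g z - Φ z) - w‖ := by ring_nf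
      _ ≤ ‖g z - Φ z‖ + ‖w‖ := norm_sub_le _ _
      _ < ε := by linarith
  · have : z ∈ range (circleMap d.1 d.2) := by
      rw [range_circleMap, abs_of_pos (hL d hd)]; exact hz
    obtain ⟨t, rfl⟩ := this
    exact mem_iUnion₂.2 ⟨d, hd, t, sub_eq_zero.1 h0⟩

lemma aux_slit {z w : ℂ} (h : ‖z - w‖ < ‖w‖) : z / w ∈ Complex.slitPlane := by
  have hw : w ≠ 0 := by rintro rfl; simp at h; exact absurd h (not_lt.2 (norm_nonneg _))
  have : ‖(z - w) / w‖ < 1 := by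
    rw [norm_div, div_lt_one (by positivity)]; exact h
  have h2 := Complex.mem_slitPlane_of_norm_lt_one this
  convert h2 using 1
  field_simp
  ring

lemma aux_move (Ω : Set ℂ) (hΩ : IsOpen Ω) (hc : IsPreconnected Ω) (c a : ℂ) (hcΩ : c ∈ Ω)
    (ha : a ∈ Ω) : ∃ v : ℂ → ℂ, Continuous v ∧ ∀ z ∉ Ω, z - c = (z - a) * Complex.exp (v z) := by
  refine hc.induction₂ (fun c a => ∃ v : ℂ → ℂ, Continuous v ∧
    ∀ z ∉ Ω, z - c = (z - a) * Complex.exp (v z)) ?_ ?_ ?_ hcΩ ha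
  · intro x hx
    obtain ⟨r, hr, hrΩ⟩ := Metric.isOpen_iff.1 hΩ x hx
    refine Filter.Eventually.filter_mono nhdsWithin_le_nhds ?_
    filter_upwards [Metric.ball_mem_nhds x hr] with y hy
    have hn : ∀ z ∉ Ω, z - x ≠ 0 := fun z hz h => hz (by rwa [sub_eq_zero.1 h])
    have hs : ∀ z ∉ Ω, (z - y) / (z - x) ∈ Complex.slitPlane := by
      intro z hz
      apply aux_slit
      have h1 : r ≤ ‖z - x‖ := by
        by_contra h
        exact hz (hrΩ (by rw [mem_ball, dist_eq_norm]; linarith))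
      have h2 : ‖y - x‖ < r := by rwa [mem_ball, dist_eq_norm] at hy
      calc ‖z - y - (z - x)‖ = ‖y - x‖ := by rw [← norm_neg]; ring_nf
        _ < _ := by linarith
    obtain ⟨v, hv, hv'⟩ := aux_tietze (s := Ωᶜ) hΩ.isClosed_compl
      (f := fun z => Complex.log ((z - y) / (z - x)))
      (ContinuousOn.clog (ContinuousOn.div (by fun_prop) (by fun_prop) hn) hs)
    have key : ∀ z ∉ Ω, z - y = (z - x) * Complex.exp (v z) := by
      intro z hz
      have h1 := hn z hz
      rw [hv' hz, Complex.exp_log (Complex.slitPlane_ne_zero (hs z hz))]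
      field_simp
    refine ⟨fun z => - v z, hv.neg, fun z hz => ?_⟩
    rw [key z hz, mul_assoc, ← Complex.exp_add]; simp
  · rintro x y z hx hy hz ⟨v, hv, hv'⟩ ⟨w, hw, hw'⟩
    refine ⟨fun z => w z + v z, hw.add hv, fun z hz => ?_⟩
    rw [hv' z hz, hw' z hz, Complex.exp_add, mul_assoc]
  · rintro x y hx hy ⟨v, hv, hv'⟩
    refine ⟨fun z => - v z, hv.neg, fun z hz => ?_⟩
    rw [hv' z hz, mul_assoc, ← Complex.exp_add]; simp

lemma aux_discs (Ω X : Set ℂ) (hΩ : IsOpen Ω) (hc : IsPreconnected Ω) (a : ℂ)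
    (ha : a ∈ Ω) (L : List (ℂ × ℝ)) (hL : ∀ d ∈ L, 0 < d.2 ∧ closedBall d.1 d.2 ⊆ Ω)
    (G : ℂ → ℂ) (hG : Continuous G) (hs : ∀ d ∈ L, ∀ z ∈ sphere d.1 d.2, G z ≠ 0)
    (hX : ∀ z ∈ X, G z = 0 → ∃ d ∈ L, z ∈ ball d.1 d.2) :
    ∃ (k : ℤ) (v Ψ : ℂ → ℂ), Continuous v ∧ Continuous Ψ ∧ (∀ z ∈ X, Ψ z ≠ 0) ∧
      ∀ z ∉ Ω, Ψ z = G z * (z - a) ^ k * Complex.exp (v z) := by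
  induction L generalizing G with
  | nil =>
    refine ⟨0, 0, G, continuous_const, hG, fun z hz h0 => ?_, fun z hz => by simp⟩
    simpa using hX z hz h0
  | cons d L ih =>
    obtain ⟨c, r⟩ := d
    obtain ⟨hr, hrΩ⟩ := hL (c, r) (by simp)
    simp only at hr hrΩ
    obtain ⟨k, u, hu, hku⟩ := aux_circle_factor c r hr G hG.continuousOn (hs (c, r) (by simp))
    have hne : ∀ z ∉ ball c r, z - c ≠ 0 := fun z hz h => hz (by
      rw [sub_eq_zero.1 h]; exact mem_ball_self hr)
    obtain ⟨G1, hG1, hin, hout⟩ := aux_glue (s := ball c r) isOpen_ball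
      (f := fun z => Complex.exp (u z)) (g := fun z => G z * (z - c) ^ (-k))
      (by fun_prop)
      (hG.continuousOn.mul (ContinuousOn.zpow₀ (by fun_prop) _ fun z hz => Or.inl (hne z hz)))
      (by
        intro z hz
        have hz' : z ∈ sphere c r := frontier_ball_subset_sphere hz
        have h1 : z - c ≠ 0 := hne z (fun h => by
          rw [mem_sphere] at hz'; rw [mem_ball] at h; linarith)
        rw [hku z hz', mul_right_comm, ← zpow_add₀ h1]; simp)
    have hnz : ∀ z, G1 z = 0 → z ∉ ball c r ∧ G z = 0 := by
      intro z hz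
      by_cases hb : z ∈ ball c r
      · rw [hin (subset_closure hb)] at hz
        exact absurd hz (Complex.exp_ne_zero _)
      · refine ⟨hb, ?_⟩
        rw [hout hb] at hz
        exact (mul_eq_zero.1 hz).resolve_right (zpow_ne_zero _ (hne z hb))
    obtain ⟨m, v, Ψ, hv, hΨ, hΨ0, hΨe⟩ := ih (fun d hd => hL d (by simp [hd])) G1 hG1
      (fun d hd z hz h0 => hs d (by simp [hd]) z hz (hnz z h0).2)
      (fun z hz h0 => by
        obtain ⟨hb, hg⟩ := hnz z h0
        obtain ⟨d, hd, hzd⟩ := hX z hz hg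
        rcases List.mem_cons.1 hd with rfl | hd
        · exact absurd hzd hb
        · exact ⟨d, hd, hzd⟩)
    obtain ⟨w, hw, hw'⟩ := aux_move Ω hΩ hc c a (hrΩ (mem_closedBall_self hr.le)) ha
    refine ⟨m - k, fun z => v z + (-k : ℤ) * w z, Ψ, by fun_prop, hΨ, hΨ0, fun z hz => ?_⟩
    have hza : z - a ≠ 0 := fun h => hz (by rwa [sub_eq_zero.1 h])
    have hzb : z ∉ ball c r := fun h => hz (hrΩ (ball_subset_closedBall h))
    rw [hΨe z hz, hout hzb]
    simp only
    rw [hw' z hz, Complex.exp_add, mul_zpow, Complex.exp_int_mul, sub_eq_add_neg m k, zpow_add₀ hza]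
    ring

lemma aux_eilenberg (Ω : Set ℂ) (hΩ : IsOpen Ω) (hc : IsPreconnected Ω)
    (hb : Bornology.IsBounded Ω) (a : ℂ) (ha : a ∈ Ω) (φ : ℂ → ℂ)
    (hφ : ContinuousOn φ (frontier Ω)) (hφ0 : ∀ z ∈ frontier Ω, φ z ≠ 0) :
    ∃ (k : ℤ) (Ψ : ℂ → ℂ), Continuous Ψ ∧ (∀ z ∈ closure Ω, Ψ z ≠ 0) ∧
      ∀ z ∈ frontier Ω, φ z = (z - a) ^ k * Ψ z := by
  obtain ⟨Φ, hΦ, hΦφ⟩ := aux_tietze isClosed_frontier hφ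
  have hcl : IsCompact (closure Ω) := hb.isCompact_closure
  have hK : IsCompact (frontier Ω) := hcl.of_isClosed_subset isClosed_frontier
    frontier_subset_closure
  obtain ⟨δ, hδ, hδφ⟩ := hK.exists_forall_le' hφ.norm (a := 0)
    (fun z hz => norm_pos_iff.2 (hφ0 z hz))
  have hCc : IsCompact (closure Ω ∩ {z | ‖Φ z‖ ≤ δ / 2}) :=
    hcl.inter_right (isClosed_le hΦ.norm continuous_const)
  have hCΩ : closure Ω ∩ {z | ‖Φ z‖ ≤ δ / 2} ⊆ Ω := by
    rintro z ⟨hz, hz'⟩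
    by_contra hzΩ
    have hzK : z ∈ frontier Ω := by rw [hΩ.frontier_eq]; exact ⟨hz, hzΩ⟩
    have := hδφ z hzK
    rw [← hΦφ hzK] at this
    simp only [mem_ofPred_eq] at hz'
    linarith
  have hrad : ∀ x : ℂ, ∃ r : ℝ, 0 < r ∧ (x ∈ Ω → closedBall x r ⊆ Ω) := by
    intro x
    by_cases hx : x ∈ Ω
    · obtain ⟨r, hr, h⟩ := Metric.nhds_basis_closedBall.mem_iff.1 (hΩ.mem_nhds hx)
      exact ⟨r, hr, fun _ => h⟩
    · exact ⟨1, one_pos, fun h => absurd h hx⟩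
  choose r hr hrΩ using hrad
  obtain ⟨t, ht, htc⟩ := hCc.elim_nhds_subcover (fun x => ball x (r x))
    (fun x _ => ball_mem_nhds x (hr x))
  let L : List (ℂ × ℝ) := t.toList.map (fun x => (x, r x))
  have hL : ∀ d ∈ L, 0 < d.2 ∧ closedBall d.1 d.2 ⊆ Ω := by
    intro d hd
    obtain ⟨x, hx, rfl⟩ := List.mem_map.1 hd
    exact ⟨hr x, hrΩ x (hCΩ (ht x (Finset.mem_toList.1 hx)))⟩
  obtain ⟨G, hG, hGΦ, hGs⟩ := aux_generic Φ hΦ (closure Ω) hcl (δ / 2) (by positivity) L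
    (fun d hd => (hL d hd).1)
  obtain ⟨k, v, Ψ, hv, hΨ, hΨ0, hΨe⟩ := aux_discs Ω (closure Ω) hΩ hc a ha L hL G hG hGs (by
    intro z hz h0
    have h1 := hGΦ z hz
    rw [h0, zero_sub, norm_neg] at h1
    obtain ⟨x, hx, hzx⟩ := mem_iUnion₂.1 (htc ⟨hz, h1.le⟩)
    exact ⟨(x, r x), List.mem_map.2 ⟨x, Finset.mem_toList.2 hx, rfl⟩, hzx⟩)
  have hsl : ∀ z ∈ frontier Ω, G z / φ z ∈ Complex.slitPlane := by
    intro z hz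
    apply aux_slit
    have h1 := hGΦ z (frontier_subset_closure hz)
    rw [hΦφ hz] at h1
    have := hδφ z hz
    linarith
  obtain ⟨h, hh, hh'⟩ := aux_tietze (s := frontier Ω) isClosed_frontier
    (f := fun z => Complex.log (G z / φ z))
    (ContinuousOn.clog (hG.continuousOn.div hφ hφ0) hsl)
  refine ⟨-k, fun z => Ψ z * Complex.exp (-(v z + h z)), by fun_prop,
    fun z hz => mul_ne_zero (hΨ0 z hz) (Complex.exp_ne_zero _), fun z hz => ?_⟩
  have hzΩ : z ∉ Ω := by rw [hΩ.frontier_eq] at hz; exact hz.2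
  have hza : z - a ≠ 0 := fun h => hzΩ (by rwa [sub_eq_zero.1 h])
  have hGz : G z = φ z * Complex.exp (h z) := by
    have := hφ0 z hz
    rw [hh' hz, Complex.exp_log (Complex.slitPlane_ne_zero (hsl z hz))]
    field_simp
  simp only
  rw [hΨe z hzΩ, hGz, Complex.exp_neg, Complex.exp_add, zpow_neg]
  have := zpow_ne_zero k hza
  field_simp


lemma aux_exterior (Ω : Set ℂ) (hΩo : IsOpen Ω) (hΩc : IsConnected Ω)
    (hΩb : Bornology.IsBounded Ω)
    (hbdry : ∃ (n : ℕ) (γ : Fin n → ℂ → ℂ),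
      (∀ i, ContinuousOn (γ i) (sphere (0 : ℂ) 1) ∧
        Set.InjOn (γ i) (sphere (0 : ℂ) 1)) ∧
      (Pairwise fun i j =>
        Disjoint (γ i '' sphere (0 : ℂ) 1) (γ j '' sphere (0 : ℂ) 1)) ∧
      frontier Ω = ⋃ i, γ i '' sphere (0 : ℂ) 1)
    (z0 : ℂ) (hz0 : z0 ∈ frontier Ω) (r : ℝ) (hr : 0 < r) :
    ∃ ζ ∈ ball z0 r, ζ ∉ closure Ω := by
  classical
  by_contra hcon
  push Not at hcon
  obtain ⟨n, γ, hγ, hdisj, hfr⟩ := hbdry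
  obtain ⟨i, s0, hs0, hs0z⟩ : ∃ i, ∃ s ∈ sphere (0 : ℂ) 1, γ i s = z0 := by
    rw [hfr] at hz0
    simpa using hz0
  have hs0n : ‖s0‖ = 1 := by simpa using hs0
  have hs00 : s0 ≠ 0 := by rintro rfl; simp at hs0n
  -- continuous inverse of the curve
  have hemb : Topology.IsClosedEmbedding ((sphere (0 : ℂ) 1).domRestrict (γ i)) := by
    have : CompactSpace (sphere (0 : ℂ) 1) := isCompact_iff_compactSpace.1 (isCompact_sphere _ _)
    exact (continuousOn_iff_continuous_domRestrict.1 (hγ i).1).isClosedEmbedding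
      (injOn_iff_injective.1 (hγ i).2)
  obtain ⟨g, hg⟩ := ContinuousMap.exists_extension' hemb
    (⟨Subtype.val, continuous_subtype_val⟩ : C(sphere (0 : ℂ) 1, ℂ))
  have hgγ : ∀ s ∈ sphere (0 : ℂ) 1, g (γ i s) = s := fun s hs => congrFun hg ⟨s, hs⟩
  have hcomp : ∀ j, IsCompact (γ j '' sphere (0 : ℂ) 1) := fun j =>
    (isCompact_sphere _ _).image_of_continuousOn (hγ j).1
  let φ : ℂ → ℂ := fun z => if z ∈ γ i '' sphere (0 : ℂ) 1 then -g z / s0 else 1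
  have hφ1 : ∀ s ∈ sphere (0 : ℂ) 1, φ (γ i s) = -s / s0 := by
    intro s hs
    simp only [φ, if_pos (mem_image_of_mem _ hs), hgγ s hs]
  have hφ2 : ∀ z ∉ γ i '' sphere (0 : ℂ) 1, φ z = 1 := fun z hz => by simp only [φ, if_neg hz]
  have hφc : ContinuousOn φ (frontier Ω) := by
    have h1 : ContinuousOn φ (γ i '' sphere (0 : ℂ) 1) := by
      refine ContinuousOn.congr (f := fun z => -g z / s0) (by fun_prop) fun z hz => ?_
      simp only [φ, if_pos hz]
    have h2 : ContinuousOn φ (⋃ j ∈ {j | j ≠ i}, γ j '' sphere (0 : ℂ) 1) := by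
      refine ContinuousOn.congr (f := fun z => 1) (by fun_prop) fun z hz => hφ2 z fun hz' => ?_
      obtain ⟨j, hj, hzj⟩ := mem_iUnion₂.1 hz
      exact Set.disjoint_left.1 (hdisj hj) hzj hz'
    have h3 : IsClosed (⋃ j ∈ {j | j ≠ i}, γ j '' sphere (0 : ℂ) 1) :=
      Set.Finite.isClosed_biUnion (Set.toFinite _) fun j _ => (hcomp j).isClosed
    refine (h1.union_of_isClosed h2 (hcomp i).isClosed h3).mono ?_
    rw [hfr]
    refine iUnion_subset fun j z hz => ?_
    by_cases hj : j = i
    · subst hj; exact Or.inl hz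
    · exact Or.inr (mem_iUnion₂.2 ⟨j, hj, hz⟩)
  have hφ0 : ∀ z, φ z ≠ 0 := by
    intro z
    by_cases hz : z ∈ γ i '' sphere (0 : ℂ) 1
    · obtain ⟨s, hs, rfl⟩ := hz
      rw [hφ1 s hs]
      have : s ≠ 0 := by rintro rfl; simp at hs
      simp [this, hs00]
    · rw [hφ2 z hz]; exact one_ne_zero
  have hφs : ∀ z, z ≠ z0 → φ z ∈ Complex.slitPlane := by
    intro z hz
    by_cases hz' : z ∈ γ i '' sphere (0 : ℂ) 1
    · obtain ⟨s, hs, rfl⟩ := hz'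
      rw [hφ1 s hs]
      have hsn : ‖-s / s0‖ = 1 := by
        have : ‖s‖ = 1 := by simpa using hs
        simp [this, hs0n]
      rw [Complex.mem_slitPlane_iff]
      by_contra hn
      push Not at hn
      obtain ⟨hre, him⟩ := hn
      have hsq := Complex.sq_norm (-s / s0)
      rw [hsn, Complex.normSq_apply, him] at hsq
      have hre' : (-s / s0).re = -1 := by nlinarith
      have : -s / s0 = -1 := Complex.ext (by simpa using hre') (by simpa using him)
      have hss : s = s0 := by
        field_simp at this
        exact neg_injective this
      exact hz (by rw [hss, hs0z])
    · rw [hφ2 z hz']; simp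
  -- fill in the disc
  obtain ⟨a, ha⟩ := hΩc.nonempty
  obtain ⟨k, Ψ, hΨ, hΨ0, hΨe⟩ := aux_eilenberg Ω hΩo hΩc.isPreconnected hΩb a ha φ hφc
    (fun z _ => hφ0 z)
  have hΩ'o : IsOpen (Ω ∪ ball z0 r) := hΩo.union isOpen_ball
  have hcl : closure (Ω ∪ ball z0 r) = closure Ω := by
    refine subset_antisymm (closure_minimal (union_subset subset_closure hcon) isClosed_closure)
      (closure_mono subset_union_left)
  have hfr' : ∀ z ∈ frontier (Ω ∪ ball z0 r), z ∈ frontier Ω ∧ z ≠ z0 := by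
    intro z hz
    rw [hΩ'o.frontier_eq, hcl] at hz
    refine ⟨by rw [hΩo.frontier_eq]; exact ⟨hz.1, fun h => hz.2 (Or.inl h)⟩, ?_⟩
    rintro rfl
    exact hz.2 (Or.inr (mem_ball_self hr))
  obtain ⟨l, hl, hl'⟩ := aux_tietze (s := frontier (Ω ∪ ball z0 r)) isClosed_frontier
    (f := fun z => Complex.log (φ z))
    (ContinuousOn.clog (hφc.mono fun z hz => (hfr' z hz).1) fun z hz => hφs z (hfr' z hz).2)
  have hlφ : ∀ z ∈ frontier (Ω ∪ ball z0 r), Complex.exp (l z) = φ z := fun z hz => by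
    rw [hl' hz, Complex.exp_log (hφ0 z)]
  have hza : ∀ z ∉ Ω ∪ ball z0 r, z - a ≠ 0 := fun z hz h => hz (by
    rw [sub_eq_zero.1 h]; exact Or.inl ha)
  have hk : k = 0 := by
    obtain ⟨H, hH, hH1, hH2⟩ := aux_glue hΩ'o (f := fun z => Complex.exp (l z) / Ψ z)
      (g := fun z => (z - a) ^ k)
      (ContinuousOn.div (by fun_prop) (by fun_prop) fun z hz => hΨ0 z (by rwa [hcl] at hz))
      (ContinuousOn.zpow₀ (by fun_prop) _ fun z hz => Or.inl (hza z hz))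
      (by
        intro z hz
        have := hΨ0 z (frontier_subset_closure (hfr' z hz).1)
        rw [hlφ z hz, hΨe z (hfr' z hz).1]
        field_simp)
    obtain ⟨Λ, hΛ, hΛ'⟩ := aux_exists_log H hH (by
      intro z
      by_cases hz : z ∈ Ω ∪ ball z0 r
      · rw [hH1 (subset_closure hz)]
        refine div_ne_zero (Complex.exp_ne_zero _) (hΨ0 z ?_)
        rw [← hcl]; exact subset_closure hz
      · rw [hH2 hz]
        exact zpow_ne_zero _ (hza z hz))
    obtain ⟨R, hR⟩ := (hΩb.union (isBounded_ball (x := z0) (r := r))).subset_ball a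
    have hR0 : 0 < R := pos_of_mem_ball (hR (Or.inl ha))
    refine aux_circle_no_log a R hR0 k Λ hΛ.continuousOn fun z hz => ?_
    rw [hΛ', hH2]
    intro h
    have := hR h
    rw [mem_ball] at this
    rw [mem_sphere] at hz
    linarith
  subst hk
  obtain ⟨H, hH, hH1, hH2⟩ := aux_glue hΩ'o (f := Ψ) (g := fun z => Complex.exp (l z))
    hΨ.continuousOn (by fun_prop) (by
      intro z hz
      rw [hlφ z hz, hΨe z (hfr' z hz).1]; simp)
  obtain ⟨Λ, hΛ, hΛ'⟩ := aux_exists_log H hH (by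
    intro z
    by_cases hz : z ∈ Ω ∪ ball z0 r
    · rw [hH1 (subset_closure hz)]
      refine hΨ0 z ?_
      rw [← hcl]; exact subset_closure hz
    · rw [hH2 hz]
      exact Complex.exp_ne_zero _)
  have : (1 : ℤ) = 0 := by
    refine aux_circle_no_log 0 1 one_pos 1 (fun s => Λ (γ i s) + Complex.log (-s0))
      ((hΛ.comp_continuousOn (hγ i).1).add continuousOn_const) fun s hs => ?_
    have hsf : γ i s ∈ frontier Ω := by
      rw [hfr]; exact mem_iUnion.2 ⟨i, mem_image_of_mem _ hs⟩
    have hc : γ i s ∈ closure (Ω ∪ ball z0 r) := by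
      rw [hcl]; exact frontier_subset_closure hsf
    have h1 := hΨe _ hsf
    rw [hφ1 s hs] at h1
    simp only [zpow_zero, one_mul] at h1
    rw [Complex.exp_add, hΛ', hH1 hc, ← h1, Complex.exp_log (neg_ne_zero.2 hs00)]
    simp only [sub_zero, zpow_one]
    field_simp
  exact one_ne_zero this

lemma aux_accPt (Ω : Set ℂ)
    (hbdry : ∃ (n : ℕ) (γ : Fin n → ℂ → ℂ),
      (∀ i, ContinuousOn (γ i) (sphere (0 : ℂ) 1) ∧
        Set.InjOn (γ i) (sphere (0 : ℂ) 1)) ∧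
      (Pairwise fun i j =>
        Disjoint (γ i '' sphere (0 : ℂ) 1) (γ j '' sphere (0 : ℂ) 1)) ∧
      frontier Ω = ⋃ i, γ i '' sphere (0 : ℂ) 1)
    (z0 : ℂ) (hz0 : z0 ∈ frontier Ω) :
    ∃ᶠ z in nhdsWithin z0 {z0}ᶜ, z ∈ frontier Ω := by
  obtain ⟨n, γ, hγ, hdisj, hfr⟩ := hbdry
  obtain ⟨i, hi⟩ := mem_iUnion.1 (hfr ▸ hz0)
  have hpre : IsPreconnected (γ i '' sphere (0 : ℂ) 1) :=
    (isPreconnected_sphere (by rw [Complex.rank_real_complex]; norm_num) _ _).image _ (hγ i).1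
  have hnt : (γ i '' sphere (0 : ℂ) 1).Nontrivial := by
    refine ⟨γ i 1, ⟨1, by simp, rfl⟩, γ i (-1), ⟨-1, by simp, rfl⟩, fun h => ?_⟩
    have := (hγ i).2 (by simp) (by simp) h
    norm_num at this
  have hacc := hpre.preperfect_of_nontrivial hnt z0 hi
  rw [accPt_iff_frequently_nhdsNE] at hacc
  refine hacc.mono fun z hz => ?_
  rw [hfr]; exact mem_iUnion.2 ⟨i, hz⟩


noncomputable def apMap (p : ℕ∞) (U : Set ℂ) : ApSpace p U → (ℕ → UniformFun ↥U ℂ) :=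
  fun f => fun j : ℕ => UniformFun.ofFun
    (fun z : ↥U => if (j : ℕ∞) ≤ p then iteratedDeriv j f.1 (z : ℂ) else 0)

lemma aux_iter_diff {U : Set ℂ} (hU : IsOpen U) {f : ℂ → ℂ} (hf : DifferentiableOn ℂ f U)
    (j : ℕ) : DifferentiableOn ℂ (iteratedDeriv j f) U := by
  induction j with
  | zero => simpa using hf
  | succ j ih => rw [iteratedDeriv_succ]; exact ih.deriv hU

lemma aux_extend {U : Set ℂ} {h : ℂ → ℂ} (hc : ContinuousOn h U)
    (happ : ∀ ε > 0, ∃ e : ℂ → ℂ, ContinuousOn e (closure U) ∧ ∀ z ∈ U, dist (h z) (e z) < ε) :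
    ∃ g : ℂ → ℂ, ContinuousOn g (closure U) ∧ EqOn g h U := by
  refine ⟨extendFrom U h, continuousOn_extendFrom subset_rfl ?_, ?_⟩
  · intro x hx
    have : (nhdsWithin x U).NeBot := mem_closure_iff_nhdsWithin_neBot.1 hx
    rw [← cauchy_map_iff_exists_tendsto, Metric.cauchy_iff]
    refine ⟨inferInstance, fun ε hε => ?_⟩
    obtain ⟨e, he, hd⟩ := happ (ε / 4) (by positivity)
    have h1 : ContinuousWithinAt e U x := (he x hx).mono subset_closure
    have h2 := Metric.tendsto_nhds.1 h1 (ε / 4) (by positivity)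
    refine ⟨h '' {z | z ∈ U ∧ dist (e z) (e x) < ε / 4}, Filter.image_mem_map ?_, ?_⟩
    · filter_upwards [h2, self_mem_nhdsWithin] with z hz hzU using ⟨hzU, hz⟩
    · rintro _ ⟨a, ⟨ha, ha'⟩, rfl⟩ _ ⟨b, ⟨hb, hb'⟩, rfl⟩
      have := dist_triangle4 (h a) (e a) (e b) (h b)
      have h3 := dist_triangle_right (e a) (e b) (e x)
      have h4 := hd a ha
      have h5 := hd b hb
      rw [dist_comm] at h5
      linarith
  · intro x hx
    exact extendFrom_eq (subset_closure hx) (hc x hx)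

lemma aux_range_closed (p : ℕ∞) {U : Set ℂ} (hU : IsOpen U) : IsClosed (range (apMap p U)) := by
  classical
  refine isClosed_of_closure_subset fun G hG => ?_
  rw [mem_closure_iff_frequently, ← Filter.comap_neBot_iff_frequently] at hG
  set l := Filter.comap (apMap p U) (nhds G) with hl
  have ht : Filter.Tendsto (apMap p U) l (nhds G) := Filter.tendsto_comap
  rw [tendsto_pi_nhds] at ht
  have hj : ∀ j : ℕ, TendstoUniformly (fun (f : ApSpace p U) (z : ↥U) =>
      if (j : ℕ∞) ≤ p then iteratedDeriv j f.1 (z : ℂ) else 0) (UniformFun.toFun (G j)) l :=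
    fun j => UniformFun.tendsto_iff_tendstoUniformly.1 (ht j)
  let g : ℕ → ℂ → ℂ := fun j z => if h : z ∈ U then UniformFun.toFun (G j) ⟨z, h⟩ else 0
  have hgU : ∀ j (z : U), g j z = UniformFun.toFun (G j) z := fun j z => by simp [g]
  have hT : ∀ j : ℕ, (j : ℕ∞) ≤ p → TendstoUniformlyOn
      (fun (f : ApSpace p U) (z : ℂ) => iteratedDeriv j f.1 z) (g j) l U := by
    intro j hjp
    rw [Metric.tendstoUniformlyOn_iff]
    intro ε hε
    filter_upwards [Metric.tendstoUniformly_iff.1 (hj j) ε hε] with f hf z hz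
    have := hf ⟨z, hz⟩
    rw [← hgU] at this
    simpa [hjp] using this
  have hd : ∀ j : ℕ, (j : ℕ∞) ≤ p → DifferentiableOn ℂ (g j) U := fun j hjp =>
    (hT j hjp).tendstoLocallyUniformlyOn.differentiableOn
      (Filter.Eventually.of_forall fun f => aux_iter_diff hU f.2.1 j) hU
  have hE : ∀ j : ℕ, (j : ℕ∞) ≤ p → EqOn (g j) (iteratedDeriv j (g 0)) U := by
    intro j
    induction j with
    | zero => intro _; simp [EqOn]
    | succ j ih =>
      intro hjp z hz
      have hjp' : (j : ℕ∞) ≤ p := le_trans (by exact_mod_cast Nat.le_succ j) hjp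
      have h1 := ((hT j hjp').tendstoLocallyUniformlyOn.deriv
        (Filter.Eventually.of_forall fun f => aux_iter_diff hU f.2.1 j) hU).tendsto_at hz
      have h2 := (hT _ hjp).tendsto_at hz
      simp only [iteratedDeriv_succ] at h2
      rw [tendsto_nhds_unique h2 h1, iteratedDeriv_succ]
      exact Filter.EventuallyEq.deriv_eq
        (Filter.eventuallyEq_of_mem (hU.mem_nhds hz) (ih hjp'))
  have hmem : MemAp p U (g 0) := by
    refine ⟨hd 0 (by simp), fun j hjp => ?_⟩
    obtain ⟨e, he, he'⟩ := aux_extend (hd j hjp).continuousOn (fun ε hε => by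
      obtain ⟨f, hf⟩ := (Metric.tendstoUniformlyOn_iff.1 (hT j hjp) ε hε).exists
      obtain ⟨e, he, he'⟩ := f.2.2 j hjp
      exact ⟨e, he, fun z hz => by rw [he' hz]; exact hf z hz⟩)
    exact ⟨e, he, he'.trans (hE j hjp)⟩
  refine ⟨⟨g 0, hmem⟩, ?_⟩
  funext j
  apply UniformFun.toFun.injective
  funext z
  by_cases hjp : (j : ℕ∞) ≤ p
  · have : UniformFun.toFun (apMap p U ⟨g 0, hmem⟩ j) z = iteratedDeriv j (g 0) z := by
      simp [apMap, hjp]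
    rw [this, ← hE j hjp z.2, hgU]
  · have h1 := (hj j).tendsto_at z
    simp only [hjp, if_false] at h1
    have h2 := tendsto_nhds_unique h1 tendsto_const_nhds
    rw [h2]
    simp [apMap, hjp]

lemma aux_unifFun_cg (X : Type*) : (uniformity (UniformFun X ℂ)).IsCountablyGenerated := by
  obtain ⟨u, hu⟩ := (uniformity ℂ).exists_antitone_basis
  exact Filter.HasCountableBasis.isCountablyGenerated
    ⟨UniformFun.hasBasis_uniformity_of_basis X ℂ hu.toHasBasis, Set.to_countable _⟩

lemma aux_baire (p : ℕ∞) {U : Set ℂ} (hU : IsOpen U) : @BaireSpace (ApSpace p U) (apTop p U) := by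
  letI us : UniformSpace (ApSpace p U) := UniformSpace.comap (apMap p U) inferInstance
  have hi : IsUniformInducing (apMap p U) := ⟨rfl⟩
  have : CompleteSpace (ApSpace p U) :=
    (completeSpace_iff_isComplete_range hi).2 (aux_range_closed p hU).isComplete
  have := aux_unifFun_cg ↥U
  have : (uniformity (ApSpace p U)).IsCountablyGenerated := by
    rw [← hi.comap_uniformity]
    infer_instance
  have h : @BaireSpace (ApSpace p U) us.toTopologicalSpace := inferInstance
  exact h


noncomputable def apExt {p : ℕ∞} {U : Set ℂ} (f : ApSpace p U) : ℂ → ℂ :=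
  (f.2.2 0 (by simp)).choose

lemma apExt_cont {p : ℕ∞} {U : Set ℂ} (f : ApSpace p U) : ContinuousOn (apExt f) (closure U) :=
  (f.2.2 0 (by simp)).choose_spec.1

lemma apExt_eq {p : ℕ∞} {U : Set ℂ} (f : ApSpace p U) : EqOn (apExt f) f.1 U := by
  intro z hz
  have := (f.2.2 0 (by simp)).choose_spec.2 hz
  exact this.trans (congrFun iteratedDeriv_zero z)

lemma apExt_unique {p : ℕ∞} {U : Set ℂ} (f : ApSpace p U) {g : ℂ → ℂ}
    (hg : ContinuousOn g (closure U)) (h : EqOn g f.1 U) : EqOn g (apExt f) (closure U) :=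
  (h.trans (apExt_eq f).symm).of_subset_closure hg (apExt_cont f) subset_closure subset_rfl

lemma apTendsto {p : ℕ∞} {U : Set ℂ} {ι : Type*} {l : Filter ι} {u : ι → ApSpace p U}
    {f : ApSpace p U} : Filter.Tendsto u l (@nhds _ (apTop p U) f) ↔
    ∀ j : ℕ, (j : ℕ∞) ≤ p → TendstoUniformlyOn (fun i => iteratedDeriv j (u i).1)
      (iteratedDeriv j f.1) l U := by
  have h1 : Filter.Tendsto u l (@nhds _ (apTop p U) f) ↔
      Filter.Tendsto (apMap p U ∘ u) l (nhds (apMap p U f)) := by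
    let _ := apTop p U
    have hi : Topology.IsInducing (apMap p U) := ⟨rfl⟩
    exact hi.tendsto_nhds_iff
  rw [h1, tendsto_pi_nhds]
  refine forall_congr' fun j => ?_
  rw [UniformFun.tendsto_iff_tendstoUniformly]
  by_cases hj : (j : ℕ∞) ≤ p
  · simp only [hj, true_imp_iff]
    rw [Metric.tendstoUniformly_iff, Metric.tendstoUniformlyOn_iff]
    simp [apMap, hj]
  · simp only [hj, false_imp_iff, iff_true]
    rw [Metric.tendstoUniformly_iff]
    intro ε hε
    simp [apMap, hj, hε]

lemma apExt_continuous {p : ℕ∞} {U : Set ℂ} {z : ℂ} (hz : z ∈ closure U) :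
    @Continuous _ _ (apTop p U) _ (fun f : ApSpace p U => apExt f z) := by
  let _ := apTop p U
  rw [continuous_iff_continuousAt]
  intro f
  have h := (apTendsto (p := p) (U := U) (u := id) (l := nhds f) (f := f)).1 Filter.tendsto_id 0
    (by simp)
  rw [ContinuousAt, Metric.tendsto_nhds]
  intro ε hε
  filter_upwards [Metric.tendstoUniformlyOn_iff.1 h (ε / 2) (by positivity)] with f' hf'
  have : dist (apExt f' z) (apExt f z) ≤ ε / 2 := by
    refine le_on_closure (s := U) (f := fun z => dist (apExt f' z) (apExt f z))
      (g := fun _ => ε / 2) ?_ ?_ continuousOn_const hz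
    · intro x hx
      have := hf' x hx
      simp only [iteratedDeriv_zero, id] at this
      show dist (apExt f' x) (apExt f x) ≤ _
      rw [apExt_eq f' hx, apExt_eq f hx, dist_comm]
      exact this.le
    · exact continuous_dist.comp_continuousOn ((apExt_cont f').prodMk (apExt_cont f))
  linarith

def apE (p : ℕ∞) (Ω : Set ℂ) (z1 : ℂ) (ρ : ℝ) (n : ℕ) : Set (ApSpace p Ω) :=
  {f | ∃ a : ℕ → ℂ, (∀ k, ‖a k‖ ≤ n / ρ ^ k) ∧
    ∀ z ∈ ball z1 ρ ∩ frontier Ω, ∑' k, a k * (z - z1) ^ k = apExt f z}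

lemma apE_term {z1 z : ℂ} {ρ : ℝ} (hρ : 0 < ρ) {n : ℕ} {a : ℕ → ℂ}
    (ha : ∀ k, ‖a k‖ ≤ n / ρ ^ k) (k : ℕ) {q : ℝ} (hz : ‖z - z1‖ / ρ ≤ q) :
    ‖a k * (z - z1) ^ k‖ ≤ n * q ^ k := by
  rw [norm_mul, norm_pow]
  calc ‖a k‖ * ‖z - z1‖ ^ k ≤ n / ρ ^ k * ‖z - z1‖ ^ k := by gcongr; exact ha k
    _ = n * (‖z - z1‖ / ρ) ^ k := by rw [div_pow]; ring
    _ ≤ n * q ^ k := by gcongr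

lemma apE_closed (p : ℕ∞) (Ω : Set ℂ) (z1 : ℂ) {ρ : ℝ} (hρ : 0 < ρ) (n : ℕ) :
    @IsClosed _ (apTop p Ω) (apE p Ω z1 ρ n) := by
  let _ := apTop p Ω
  let K := (k : ℕ) → closedBall (0 : ℂ) (n / ρ ^ k)
  have : ∀ k : ℕ, CompactSpace (closedBall (0 : ℂ) (n / ρ ^ k)) := fun k =>
    isCompact_iff_compactSpace.1 (isCompact_closedBall _ _)
  let C : Set (K × ApSpace p Ω) := {q | ∀ z ∈ ball z1 ρ ∩ frontier Ω,
    ∑' k, (q.1 k : ℂ) * (z - z1) ^ k = apExt q.2 z}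
  have hC : IsClosed C := by
    have : C = ⋂ z ∈ ball z1 ρ ∩ frontier Ω,
        {q : K × ApSpace p Ω | ∑' k, (q.1 k : ℂ) * (z - z1) ^ k = apExt q.2 z} := by
      ext q; simp [C]
    rw [this]
    refine isClosed_biInter fun z hz => isClosed_eq ?_ ?_
    · have hz1 : ‖z - z1‖ / ρ < 1 := by
        rw [div_lt_one hρ, ← dist_eq_norm]; exact hz.1
      refine continuous_tsum (u := fun k => n * (‖z - z1‖ / ρ) ^ k) (fun k => ?_) ?_ ?_
      · have h : Continuous fun q : K × ApSpace p Ω => q.1 k :=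
          (continuous_apply k).comp continuous_fst
        exact (continuous_subtype_val.comp h).mul continuous_const
      · exact (summable_geometric_of_lt_one (by positivity) hz1).mul_left _
      · intro k q
        exact apE_term hρ (a := fun k => (q.1 k : ℂ))
          (fun k => mem_closedBall_zero_iff.1 (q.1 k).2) k le_rfl
    · exact (apExt_continuous (frontier_subset_closure hz.2)).comp continuous_snd
  have h := isClosedMap_snd_of_compactSpace _ hC
  convert h
  ext f
  constructor
  · rintro ⟨a, ha, hf⟩
    exact ⟨(fun k => ⟨a k, by simpa using ha k⟩, f), hf, rfl⟩
  · rintro ⟨⟨a, f'⟩, hf, rfl⟩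
    exact ⟨fun k => a k, fun k => mem_closedBall_zero_iff.1 (a k).2, hf⟩

lemma apE_hol {p : ℕ∞} {Ω : Set ℂ} {z1 : ℂ} {ρ : ℝ} (hρ : 0 < ρ) {n : ℕ} {f : ApSpace p Ω}
    (hf : f ∈ apE p Ω z1 ρ n) : ∃ F : ℂ → ℂ, DifferentiableOn ℂ F (ball z1 (ρ / 2)) ∧
      ∀ z ∈ ball z1 (ρ / 2) ∩ frontier Ω, F z = apExt f z := by
  obtain ⟨a, ha, hE⟩ := hf
  refine ⟨fun z => ∑' k, a k * (z - z1) ^ k, ?_, fun z hz =>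
    hE z ⟨ball_subset_ball (by linarith) hz.1, hz.2⟩⟩
  refine Complex.differentiableOn_tsum_of_summable_norm (u := fun k => n * (1 / 2 : ℝ) ^ k)
    ((summable_geometric_of_lt_one (by norm_num) (by norm_num)).mul_left _) (fun k => ?_)
    isOpen_ball ?_
  · fun_prop
  · intro k z hz
    refine apE_term hρ ha k ?_
    rw [mem_ball, dist_eq_norm] at hz
    rw [div_le_iff₀ hρ]; linarith

lemma apE_cover {p : ℕ∞} {Ω : Set ℂ} {D : Set ℂ} (hD : frontier Ω ⊆ closure D)
    (hDf : D ⊆ frontier Ω) (f : ApSpace p Ω) :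
    ¬ NowhereExtAp Ω f.1 ↔ ∃ z1 ∈ D, ∃ m n : ℕ, f ∈ apE p Ω z1 (1 / ((m : ℝ) + 1)) n := by
  rw [NowhereExtAp, not_not]
  constructor
  · rintro ⟨z0, hz0, r, hr, F, hF, g, hg, hgf, hFg⟩
    obtain ⟨z1, hz1, hz01⟩ := Metric.mem_closure_iff.1 (hD hz0) (r / 2) (by positivity)
    obtain ⟨m, hm⟩ := exists_nat_one_div_lt (show 0 < r / 2 by positivity)
    have hρ : (0 : ℝ) < 1 / ((m : ℝ) + 1) := by positivity
    set ρ : ℝ := 1 / ((m : ℝ) + 1)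
    have hsub : closedBall z1 ρ ⊆ ball z0 r := by
      intro z hz
      rw [mem_closedBall] at hz
      rw [mem_ball]
      have := dist_triangle z z1 z0
      rw [dist_comm z1] at this
      linarith
    obtain ⟨M, hM⟩ := (isCompact_closedBall z1 ρ).exists_bound_of_continuousOn
      (hF.continuousOn.mono hsub)
    obtain ⟨n, hn⟩ := exists_nat_ge M
    refine ⟨z1, hz1, m, n, fun k => (k.factorial : ℂ)⁻¹ * iteratedDeriv k F z1, fun k => ?_, ?_⟩
    · have hdc : DiffContOnCl ℂ F (ball z1 ρ) :=
        ⟨hF.mono (ball_subset_closedBall.trans hsub), by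
          rw [closure_ball z1 hρ.ne']; exact hF.continuousOn.mono hsub⟩
      have := Complex.norm_iteratedDeriv_le_of_forall_mem_sphere_norm_le k hρ hdc
        (fun z hz => (hM z (sphere_subset_closedBall hz)).trans hn)
      rw [norm_mul, norm_inv, Complex.norm_natCast]
      rw [inv_mul_le_iff₀ (by positivity)]
      refine this.trans (le_of_eq ?_)
      ring
    · intro z hz
      have h := Complex.hasSum_taylorSeries_on_ball
        (hF.mono (ball_subset_closedBall.trans hsub)) hz.1
      have h2 : F z = apExt f z := by
        rw [hFg z ⟨hsub (ball_subset_closedBall hz.1), hz.2⟩]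
        exact apExt_unique f hg hgf (frontier_subset_closure hz.2)
      rw [← h2, ← h.tsum_eq]
      refine tsum_congr fun k => ?_
      simp only [smul_eq_mul]
      ring
  · rintro ⟨z1, hz1, m, n, hf⟩
    have hρ : (0 : ℝ) < 1 / ((m : ℝ) + 1) := by positivity
    obtain ⟨F, hF, hFe⟩ := apE_hol hρ hf
    exact ⟨z1, hDf hz1, _, half_pos hρ, F, hF, apExt f, apExt_cont f, apExt_eq f, hFe⟩


lemma aux_iter_add {U : Set ℂ} (hU : IsOpen U) {f h : ℂ → ℂ} (hf : DifferentiableOn ℂ f U)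
    (hh : DifferentiableOn ℂ h U) (t : ℂ) (j : ℕ) :
    EqOn (iteratedDeriv j (fun z => f z + t * h z))
      (fun z => iteratedDeriv j f z + t * iteratedDeriv j h z) U := by
  induction j with
  | zero => intro z _; simp
  | succ j ih =>
    intro z hz
    simp only [iteratedDeriv_succ]
    rw [Filter.EventuallyEq.deriv_eq (Filter.eventuallyEq_of_mem (hU.mem_nhds hz) ih)]
    have h1 := (aux_iter_diff hU hf j).differentiableAt (hU.mem_nhds hz)
    have h2 := (aux_iter_diff hU hh j).differentiableAt (hU.mem_nhds hz)
    exact (h1.hasDerivAt.add (h2.hasDerivAt.const_mul t)).deriv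

lemma memAp_add {p : ℕ∞} {U : Set ℂ} (hU : IsOpen U) {f h : ℂ → ℂ} (hf : MemAp p U f)
    (hh : MemAp p U h) (t : ℂ) : MemAp p U (fun z => f z + t * h z) := by
  refine ⟨hf.1.add (hh.1.const_mul t), fun j hj => ?_⟩
  obtain ⟨g1, hg1, he1⟩ := hf.2 j hj
  obtain ⟨g2, hg2, he2⟩ := hh.2 j hj
  refine ⟨fun z => g1 z + t * g2 z, hg1.add (continuousOn_const.mul hg2), fun z hz => ?_⟩
  rw [aux_iter_add hU hf.1 hh.1 t j hz]
  simp only [he1 hz, he2 hz]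

lemma memAp_inv {p : ℕ∞} {U : Set ℂ} {ζ : ℂ} (hζ : ζ ∉ closure U) :
    MemAp p U (fun z => (z - ζ)⁻¹) := by
  have hd : DifferentiableOn ℂ (fun z : ℂ => (z - ζ)⁻¹) {ζ}ᶜ := fun z hz =>
    (((differentiableAt_id (𝕜 := ℂ)).sub_const ζ).inv (sub_ne_zero.2 hz)).differentiableWithinAt
  have hsub : closure U ⊆ {ζ}ᶜ := fun z hz h => hζ (h ▸ hz)
  refine ⟨hd.mono (subset_closure.trans hsub), fun j _ => ⟨_, ?_, eqOn_refl _ _⟩⟩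
  exact ((aux_iter_diff isOpen_compl_singleton hd j).continuousOn).mono hsub

def apMk {p : ℕ∞} {U : Set ℂ} (f : ℂ → ℂ) (hf : MemAp p U f) : ApSpace p U := ⟨f, hf⟩

lemma apMk_val {p : ℕ∞} {U : Set ℂ} (f : ℂ → ℂ) (hf : MemAp p U f) : (apMk f hf).1 = f := rfl

lemma apAdd_tendsto {p : ℕ∞} {U : Set ℂ} (hU : IsOpen U) (hb : Bornology.IsBounded U)
    (f : ApSpace p U) {h : ℂ → ℂ} (hh : MemAp p U h) :
    Filter.Tendsto (fun t : ℂ => apMk (fun z => f.1 z + t * h z) (memAp_add hU f.2 hh t))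
      (nhds 0) (@nhds _ (apTop p U) f) := by
  rw [apTendsto]
  intro j hj
  obtain ⟨g, hg, he⟩ := hh.2 j hj
  obtain ⟨M, hM⟩ := hb.isCompact_closure.exists_bound_of_continuousOn hg
  rw [Metric.tendstoUniformlyOn_iff]
  intro ε hε
  have hpos : 0 < ε / (|M| + 1) := by positivity
  filter_upwards [Metric.ball_mem_nhds (0 : ℂ) hpos] with t ht z hz
  rw [apMk_val, aux_iter_add hU f.2.1 hh.1 t j hz, dist_eq_norm]
  beta_reduce
  rw [← he hz]
  have h1 := hM z (subset_closure hz)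
  rw [mem_ball_zero_iff, lt_div_iff₀ (by positivity)] at ht
  have : iteratedDeriv j f.1 z - (iteratedDeriv j f.1 z + t * g z) = -(t * g z) := by ring
  rw [this, norm_neg, norm_mul]
  refine lt_of_le_of_lt ?_ ht
  gcongr
  exact h1.trans ((le_abs_self M).trans (by linarith))

lemma apE_interior {p : ℕ∞} {Ω : Set ℂ} (hΩo : IsOpen Ω) (hΩb : Bornology.IsBounded Ω)
    {z1 : ℂ} (hz1 : z1 ∈ frontier Ω) {ρ : ℝ} (hρ : 0 < ρ) (n : ℕ)
    (hext : ∃ ζ ∈ ball z1 (ρ / 2), ζ ∉ closure Ω)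
    (hacc : ∃ᶠ z in nhdsWithin z1 {z1}ᶜ, z ∈ frontier Ω) :
    @interior _ (apTop p Ω) (apE p Ω z1 ρ n) = ∅ := by
  let _ := apTop p Ω
  obtain ⟨ζ, hζ, hζc⟩ := hext
  rw [eq_empty_iff_forall_notMem]
  intro f hf
  have hh : MemAp p Ω (fun z => (z - ζ)⁻¹) := memAp_inv hζc
  have ht := apAdd_tendsto hΩo hΩb f hh
  have hev := (ht.mono_left (nhdsWithin_le_nhds (s := {0}ᶜ))).eventually
    (mem_interior_iff_mem_nhds.1 hf)
  obtain ⟨t, ht2, ht0⟩ := (hev.and self_mem_nhdsWithin).exists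
  obtain ⟨F1, hF1, he1⟩ := apE_hol hρ (interior_subset hf)
  obtain ⟨F2, hF2, he2⟩ := apE_hol hρ ht2
  have hsub : closure Ω ⊆ {ζ}ᶜ := fun z hz h => hζc (h ▸ hz)
  have hext : ∀ z ∈ closure Ω, apExt (apMk (fun z => f.1 z + t * (z - ζ)⁻¹) (memAp_add hΩo f.2 hh t)) z = apExt f z + t * (z - ζ)⁻¹ := by
    intro z hz
    refine (apExt_unique _ (g := fun z => apExt f z + t * (z - ζ)⁻¹) ?_ ?_ hz).symm
    · refine (apExt_cont f).add (continuousOn_const.mul (ContinuousOn.inv₀ (by fun_prop) ?_))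
      exact fun z hz => sub_ne_zero.2 (hsub hz)
    · intro z hz
      simp only [apExt_eq f hz, apMk_val]
  have hG : DifferentiableOn ℂ (fun z => (F2 z - F1 z) * (z - ζ)) (ball z1 (ρ / 2)) :=
    (hF2.sub hF1).mul (by fun_prop)
  have hz1b : z1 ∈ ball z1 (ρ / 2) := mem_ball_self (half_pos hρ)
  have hfr : ∃ᶠ z in nhdsWithin z1 {z1}ᶜ, (F2 z - F1 z) * (z - ζ) = t := by
    have hb : ∀ᶠ z in nhdsWithin z1 {z1}ᶜ, z ∈ ball z1 (ρ / 2) :=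
      nhdsWithin_le_nhds (isOpen_ball.mem_nhds hz1b)
    refine (hacc.and_eventually hb).mono fun z hz => ?_
    rw [he1 z ⟨hz.2, hz.1⟩, he2 z ⟨hz.2, hz.1⟩, hext z (frontier_subset_closure hz.1)]
    have : z - ζ ≠ 0 := sub_ne_zero.2 (hsub (frontier_subset_closure hz.1))
    field_simp
    ring
  have hEq := (hG.analyticOnNhd isOpen_ball).eqOn_of_preconnected_of_frequently_eq
    (g := fun _ => t) analyticOnNhd_const (convex_ball z1 (ρ / 2)).isPreconnected hz1b hfr
  have := hEq hζ
  simp only [sub_self, mul_zero] at this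
  exact ht0 this.symm

theorem nowhereHolExtAp_dense_Gdelta
    (p : ℕ∞) (Ω : Set ℂ) (hΩo : IsOpen Ω) (hΩc : IsConnected Ω)
    (hΩb : Bornology.IsBounded Ω)
    (hbdry : ∃ (n : ℕ) (γ : Fin n → ℂ → ℂ),
      (∀ i, ContinuousOn (γ i) (sphere (0 : ℂ) 1) ∧
        Set.InjOn (γ i) (sphere (0 : ℂ) 1)) ∧
      (Pairwise fun i j =>
        Disjoint (γ i '' sphere (0 : ℂ) 1) (γ j '' sphere (0 : ℂ) 1)) ∧
      frontier Ω = ⋃ i, γ i '' sphere (0 : ℂ) 1) :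
    @Dense (ApSpace p Ω) (apTop p Ω) {f | NowhereExtAp Ω f.1} ∧
    @IsGδ (ApSpace p Ω) (apTop p Ω) {f | NowhereExtAp Ω f.1} := by
  have hB := aux_baire p hΩo
  let _ := apTop p Ω
  obtain ⟨D, hDf, hDc, hD⟩ :=
    (TopologicalSpace.IsSeparable.of_separableSpace (frontier Ω)).exists_countable_dense_subset
  have : Countable D := hDc.to_subtype
  have hset : {f : ApSpace p Ω | NowhereExtAp Ω f.1} =
      ⋂ q : D × ℕ × ℕ, (apE p Ω q.1 (1 / ((q.2.1 : ℝ) + 1)) q.2.2)ᶜ := by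
    ext f
    have := apE_cover hD hDf f
    rw [not_iff_comm] at this
    show NowhereExtAp Ω f.1 ↔ _
    rw [← this]
    simp
  have ho : ∀ q : D × ℕ × ℕ, IsOpen (apE p Ω q.1 (1 / ((q.2.1 : ℝ) + 1)) q.2.2)ᶜ := fun q =>
    (apE_closed p Ω q.1 (by positivity) q.2.2).isOpen_compl
  rw [hset]
  refine ⟨dense_iInter_of_isOpen ho fun q => ?_, .iInter_of_isOpen ho⟩
  rw [← interior_eq_empty_iff_dense_compl]
  have hρ : (0 : ℝ) < 1 / ((q.2.1 : ℝ) + 1) := by positivity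
  exact apE_interior hΩo hΩb (hDf q.1.2) hρ _
    (aux_exterior Ω hΩo hΩc hΩb hbdry _ (hDf q.1.2) _ (half_pos hρ))
    (aux_accPt Ω hbdry _ (hDf q.1.2))
end

section
/- Let I ⊆ ℝ be an interval and let γ : I → ℂ be a continuous and locally injective curve. Then the interior of γ(I) in ℂ is empty. -/
open Set

/-- `γ` is locally injective on `I`: every point of `I` has a relative neighborhood
in `I` on which `γ` is injective. -/
def LocallyInjOn (γ : ℝ → ℂ) (I : Set ℝ) : Prop :=
  ∀ t ∈ I, ∃ ε > 0, Set.InjOn γ (I ∩ Ioo (t - ε) (t + ε))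

open Topology

theorem interior_image_compact_empty (K : Set ℝ) (hK : IsCompact K) (γ : ℝ → ℂ)
    (hc : ContinuousOn γ K) (hi : InjOn γ K) : interior (γ '' K) = ∅ := by
  rw [Set.eq_empty_iff_forall_notMem]
  intro z hz
  obtain ⟨r, hr, hball⟩ := Metric.nhds_basis_closedBall.mem_iff.1 (mem_interior_iff_mem_nhds.1 hz)
  have : CompactSpace K := isCompact_iff_compactSpace.1 hK
  have hemb : IsEmbedding (K.domRestrict γ) :=
    (Continuous.isClosedEmbedding hc.domRestrict hi.injective).isEmbedding
  have hex : ∀ w : Metric.sphere (0 : ℂ) r, ∃ x : K, γ x = z + w := by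
    intro w
    obtain ⟨x, hx, h⟩ := hball (show z + (w : ℂ) ∈ Metric.closedBall z r by
      have := w.2
      simp only [mem_sphere_iff_norm, sub_zero] at this
      simp [this])
    exact ⟨⟨x, hx⟩, h⟩
  choose g hg using hex
  have hgc : Continuous g := by
    rw [hemb.continuous_iff]
    have : K.domRestrict γ ∘ g = fun w : Metric.sphere (0 : ℂ) r => z + (w : ℂ) := funext hg
    rw [this]
    fun_prop
  have hpre : IsPreconnected (Metric.sphere (0 : ℂ) r) :=
    isPreconnected_sphere (by rw [Complex.rank_real_complex]; norm_num) 0 r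
  have : PreconnectedSpace (Metric.sphere (0 : ℂ) r) := isPreconnected_iff_preconnectedSpace.1 hpre
  let u : Metric.sphere (0 : ℂ) r → ℝ := fun w => (g w : ℝ) - (g (-w) : ℝ)
  have hu : Continuous u := by
    have : Continuous fun w : Metric.sphere (0 : ℂ) r => g (-w) := hgc.comp continuous_neg
    fun_prop
  let w0 : Metric.sphere (0 : ℂ) r := ⟨(r : ℂ), by simp [abs_of_pos hr]⟩
  have hodd : u (-w0) = - u w0 := by simp [u]
  obtain ⟨w, hw⟩ : ∃ w, u w = 0 := by
    rcases le_total (u w0) 0 with h | h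
    · exact mem_range_of_exists_le_of_exists_ge hu ⟨w0, h⟩ ⟨-w0, by linarith⟩
    · exact mem_range_of_exists_le_of_exists_ge hu ⟨-w0, by linarith⟩ ⟨w0, h⟩
  have h1 : (g w : ℝ) = g (-w) := sub_eq_zero.1 hw
  have h2 := hg w
  rw [h1, hg (-w)] at h2
  have h3 : -(w : ℂ) = w := by simpa using h2
  have h4 : (w : ℂ) = 0 := self_eq_neg.1 h3.symm
  have h5 := w.2
  rw [h4] at h5
  simp at h5
  exact hr.ne h5

/-- Let `I ⊆ ℝ` be an interval and `γ : I → ℂ` a continuous and locally injective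
curve. Then the interior of `γ(I)` in `ℂ` is empty. -/
theorem interior_image_locallyInjective_curve_empty
    (I : Set ℝ) (hI : I.OrdConnected) (γ : ℝ → ℂ)
    (hcont : ContinuousOn γ I) (hinj : LocallyInjOn γ I) :
    interior (γ '' I) = ∅ := by
  have key : ∀ t, ∃ J : Set ℝ, t ∈ I → (IsCompact J ∧ J ⊆ I ∧ InjOn γ J ∧ J ∈ 𝓝[I] t) := by
    intro t
    by_cases ht : t ∈ I
    swap
    · exact ⟨∅, fun h => absurd h ht⟩
    obtain ⟨ε, hε, hin⟩ := hinj t ht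
    have ha : ∃ a ∈ I, t - ε < a ∧ a ≤ t ∧ ∃ a' < t, ∀ x ∈ I, a' < x → a ≤ x := by
      by_cases h : ∃ a ∈ I, a < t
      · obtain ⟨a, haI, hat⟩ := h
        have hm : max a (t - ε / 2) < t := max_lt hat (by linarith)
        exact ⟨max a (t - ε / 2), hI.out haI ht ⟨le_max_left _ _, hm.le⟩,
          lt_of_lt_of_le (by linarith) (le_max_right _ _), hm.le, _, hm, fun x _ hx => hx.le⟩
      · push Not at h
        exact ⟨t, ht, by linarith, le_rfl, t - 1, by linarith, fun x hx _ => h x hx⟩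
    have hb : ∃ b ∈ I, b < t + ε ∧ t ≤ b ∧ ∃ b' > t, ∀ x ∈ I, x < b' → x ≤ b := by
      by_cases h : ∃ b ∈ I, t < b
      · obtain ⟨b, hbI, hbt⟩ := h
        have hm : t < min b (t + ε / 2) := lt_min hbt (by linarith)
        exact ⟨min b (t + ε / 2), hI.out ht hbI ⟨hm.le, min_le_left _ _⟩,
          lt_of_le_of_lt (min_le_right _ _) (by linarith), hm.le, _, hm, fun x _ hx => hx.le⟩
      · push Not at h
        exact ⟨t, ht, by linarith, le_rfl, t + 1, by linarith, fun x hx _ => h x hx⟩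
    obtain ⟨a, haI, ha1, ha2, a', ha', ha3⟩ := ha
    obtain ⟨b, hbI, hb1, hb2, b', hb', hb3⟩ := hb
    refine ⟨Icc a b, fun _ => ⟨isCompact_Icc, hI.out haI hbI, hin.mono ?_, ?_⟩⟩
    · intro x hx
      exact ⟨hI.out haI hbI hx, lt_of_lt_of_le ha1 hx.1, lt_of_le_of_lt hx.2 hb1⟩
    · rw [mem_nhdsWithin]
      exact ⟨Ioo a' b', isOpen_Ioo, ⟨ha', hb'⟩, fun x hx => ⟨ha3 x hx.2 hx.1.1, hb3 x hx.2 hx.1.2⟩⟩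
  choose J hJ using key
  obtain ⟨s, hsI, hs, hcov⟩ :=
    TopologicalSpace.countable_cover_nhdsWithin (fun t ht => (hJ t ht).2.2.2)
  have hmeagre : IsMeagre (γ '' I) := by
    refine IsMeagre.mono (s := ⋃ t ∈ s, γ '' J t) ?_ ?_
    · rw [← image_iUnion₂]
      exact image_mono hcov
    · refine isMeagre_biUnion hs fun t ht => ?_
      obtain ⟨h1, h2, h3, -⟩ := hJ t (hsI ht)
      apply IsNowhereDense.isMeagre
      rw [IsClosed.isNowhereDense_iff (h1.image_of_continuousOn (hcont.mono h2)).isClosed]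
      exact interior_image_compact_empty _ h1 γ (hcont.mono h2) h3
  rw [interior_eq_empty_iff_dense_compl]
  exact dense_of_mem_residual hmeagre
end

section
/- Let l, k ∈ {0,1,2,...} ∪ {∞} with k ≤ l, let I ⊆ ℝ be an interval, let γ : I → ℂ be a locally injective function of class C^l on I, and let t0 be an interior point of I. Then the class of functions f ∈ C^k(γ) which are non one-sided holomorphically extendable at (t0, γ(t0)) — that is, for which there exists no pair of a Jordan domain Ω whose boundary contains the arc γ([t1, t2]) for some t1 < t0 < t2 in I, and of a continuous function F : Ω ∪ γ((t1, t2)) → ℂ which is holomorphic on Ω and satisfies F = f on γ((t1, t2)) — is a dense and Gδ subset of C^k(γ). -/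
open Set Metric

/-- The space `C^k(γ)` of functions `f : γ(I) → ℂ` (represented by functions
`f : ℂ → ℂ`) such that `f ∘ γ` is `k` times continuously differentiable on `I`. -/
def CkGamma (k : ℕ∞) (I : Set ℝ) (γ : ℝ → ℂ) : Type :=
  {f : ℂ → ℂ // ContDiffOn ℝ k (fun t => f (γ t)) I}

/-- The topology of `C^k(γ)`: the topology of uniform convergence on compact subsets
of `I` of all derivatives `(f ∘ γ)⁽ʲ⁾`, `j ≤ k`. -/
noncomputable def ckTop (k : ℕ∞) (I : Set ℝ) (γ : ℝ → ℂ) :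
    TopologicalSpace (CkGamma k I γ) :=
  TopologicalSpace.induced
    (fun f => fun j : ℕ =>
      UniformOnFun.ofFun {K : Set ↥I | IsCompact K}
        (fun t : ↥I => if (j : ℕ∞) ≤ k then
            iteratedDerivWithin j (fun s => f.1 (γ s)) I (t : ℝ) else 0))
    inferInstance

/-- A Jordan domain: a bounded connected open subset of `ℂ` whose boundary is the
image of a continuous injective map of the unit circle into `ℂ`. -/
def IsJordanDomain (Ω : Set ℂ) : Prop :=
  IsOpen Ω ∧ IsConnected Ω ∧ Bornology.IsBounded Ω ∧
  ∃ φ : ℂ → ℂ, ContinuousOn φ (sphere (0 : ℂ) 1) ∧ Set.InjOn φ (sphere (0 : ℂ) 1) ∧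
    frontier Ω = φ '' sphere (0 : ℂ) 1

/-- `f : γ(I) → ℂ` is one-sided holomorphically extendable at `(t0, γ(t0))`: there
are a Jordan domain `Ω` whose boundary contains the arc `γ([t1, t2])` for some
`t1 < t0 < t2` in `I`, and a continuous function `F` on `Ω ∪ γ((t1, t2))`,
holomorphic on `Ω`, with `F = f` on `γ((t1, t2))`. -/
def OneSidedHolExtAt (I : Set ℝ) (γ : ℝ → ℂ) (f : ℂ → ℂ) (t0 : ℝ) : Prop :=
  ∃ Ω : Set ℂ, IsJordanDomain Ω ∧
    ∃ t1 ∈ I, ∃ t2 ∈ I, t1 < t0 ∧ t0 < t2 ∧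
      γ '' Icc t1 t2 ⊆ frontier Ω ∧
      ∃ F : ℂ → ℂ, ContinuousOn F (Ω ∪ γ '' Ioo t1 t2) ∧
        DifferentiableOn ℂ F Ω ∧
        ∀ t ∈ Ioo t1 t2, F (γ t) = f (γ t)

section Helpers

section PartA

open Set Metric

lemma exp_const_of_preconnected {X : Type*} [TopologicalSpace X] {S : Set X} (hS : IsPreconnected S)
    {f : X → ℂ} (hf : ContinuousOn f S)
    (he : ∀ x ∈ S, ∀ y ∈ S, Complex.exp (f x) = Complex.exp (f y))
    {x y : X} (hx : x ∈ S) (hy : y ∈ S) : f x = f y := by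
  refine Complex.isCoveringMap_exp.constOn_of_comp hS hf ?_ hx hy
  intro a ha b hb
  exact Subtype.ext (he a ha b hb)

lemma continuousOn_invFunOn_of_compact {K : Set ℂ} (hK : IsCompact K) {f : ℂ → ℂ}
    (hf : ContinuousOn f K) (hi : InjOn f K) : ContinuousOn (Function.invFunOn f K) (f '' K) := by
  rw [continuousOn_iff_isClosed]
  intro t ht
  refine ⟨f '' (K ∩ t), ((hK.inter_right ht).image_of_continuousOn
    (hf.mono inter_subset_left)).isClosed, ?_⟩
  ext y
  constructor
  · rintro ⟨h1, x, hx, rfl⟩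
    have := hi.leftInvOn_invFunOn hx
    simp only [mem_preimage, this] at h1
    exact ⟨⟨x, ⟨hx, h1⟩, rfl⟩, ⟨x, hx, rfl⟩⟩
  · rintro ⟨⟨x, ⟨hx, h1⟩, rfl⟩, _⟩
    have := hi.leftInvOn_invFunOn hx
    refine ⟨?_, ⟨x, hx, rfl⟩⟩
    simp only [mem_preimage, this]
    exact h1

lemma exists_log_univ {X : Type*} [TopologicalSpace X] [LocallyPathConnectedSpace X]
    [ContractibleSpace X] {g : X → ℂ} (hg : Continuous g) (h0 : ∀ x, g x ≠ 0) :
    ∃ f : X → ℂ, Continuous f ∧ ∀ x, Complex.exp (f x) = g x := by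
  obtain ⟨f, hf, -⟩ := Complex.isCoveringMapOn_exp.existsUnique_continuousMap_lifts
    (⟨g, hg⟩ : C(X, ℂ)) (a₀ := Classical.arbitrary X) (Complex.exp_log (h0 _)) (fun x => h0 x)
  exact ⟨f, f.continuous, fun x => congrFun hf.2 x⟩

lemma no_circle_log (q : ℂ) {R : ℝ} (hR : 0 < R) {G : ℂ → ℂ} (hG : Continuous G)
    (h : ∀ z, dist z q = R → Complex.exp (G z) = z - q) : False := by
  let H : ℝ → ℂ := fun θ => G (q + R * Complex.exp (θ * Complex.I)) - θ * Complex.I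
  have hH : Continuous H := by fun_prop
  have hd : ∀ θ : ℝ, Complex.exp (H θ) = R := by
    intro θ
    have := h (q + R * Complex.exp (θ * Complex.I)) (by
      simp [dist_eq_norm, Complex.norm_exp_ofReal_mul_I, abs_of_pos hR])
    simp only [H, Complex.exp_sub, this]
    field_simp [Complex.exp_ne_zero]
    ring
  have := exp_const_of_preconnected (isPreconnected_univ) hH.continuousOn
    (fun x _ y _ => by rw [hd, hd]) (mem_univ (0:ℝ)) (mem_univ (2 * Real.pi))
  simp [H, Complex.exp_two_pi_mul_I] at this
  have h2 : (2 * Real.pi * Complex.I : ℂ) = 0 := by linear_combination this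
  simp [Real.pi_ne_zero] at h2

/-- A bounded open set cannot have boundary a proper subset of a Jordan curve. -/
lemma no_proper_frontier {φ : ℂ → ℂ} (hφ : ContinuousOn φ (sphere (0 : ℂ) 1))
    (hi : InjOn φ (sphere (0 : ℂ) 1)) {U : Set ℂ} (hU : IsOpen U) (hb : Bornology.IsBounded U)
    (hfr : frontier U ⊆ φ '' sphere (0 : ℂ) 1) {q : ℂ} (hq : q ∈ U)
    (hqJ : q ∉ φ '' sphere (0 : ℂ) 1) {p : ℂ} (hp : p ∈ φ '' sphere (0 : ℂ) 1)
    (hpU : p ∉ frontier U) : False := by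
  obtain ⟨z0, hz0, rfl⟩ := hp
  have hn0 : ‖z0‖ = 1 := by simpa using hz0
  have hz00 : z0 ≠ 0 := by rintro rfl; simp at hn0
  have hsph : ∀ θ : ℝ, z0 * Complex.exp (θ * Complex.I) ∈ sphere (0 : ℂ) 1 := by
    intro θ
    simp [hn0, Complex.norm_exp_ofReal_mul_I]
  obtain ⟨ℓ, hℓ, hℓe⟩ := exists_log_univ (X := ℝ)
    (g := fun θ : ℝ => φ (z0 * Complex.exp (θ * Complex.I)) - q)
    ((hφ.comp_continuous (by fun_prop) hsph).sub continuous_const)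
    (fun θ h => hqJ ⟨_, hsph θ, sub_eq_zero.1 h⟩)
  let ψ := Function.invFunOn φ (sphere (0 : ℂ) 1)
  have hψ : ContinuousOn ψ (φ '' sphere (0 : ℂ) 1) :=
    continuousOn_invFunOn_of_compact (isCompact_sphere _ _) hφ hi
  have hψm : ∀ w ∈ φ '' sphere (0 : ℂ) 1, ψ w ∈ sphere (0 : ℂ) 1 ∧ φ (ψ w) = w := fun w hw =>
    ⟨Function.invFunOn_mem hw, Function.invFunOn_eq hw⟩
  let L : ℂ → ℂ := fun w => ℓ (Complex.arg (-(ψ w) / z0) + Real.pi)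
  have hslit : ∀ w ∈ frontier U, -(ψ w) / z0 ∈ Complex.slitPlane := by
    intro w hw
    obtain ⟨h1, h2⟩ := hψm w (hfr hw)
    have h3 : ψ w ≠ z0 := by rintro h; rw [h] at h2; exact hpU (h2 ▸ hw)
    have hn : ‖-(ψ w) / z0‖ = 1 := by
      have : ‖ψ w‖ = 1 := by simpa using h1
      simp [hn0, this]
    rw [Complex.mem_slitPlane_iff_arg]
    refine ⟨fun ha => ?_, by intro h; rw [h] at hn; simp at hn⟩
    have := Complex.norm_mul_exp_arg_mul_I (-(ψ w) / z0)
    rw [hn, ha, Complex.exp_pi_mul_I] at this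
    field_simp at this
    apply h3
    simp only [Complex.ofReal_one, one_mul, neg_inj] at this
    exact this.symm
  have hLc : ContinuousOn L (frontier U) := by
    apply hℓ.comp_continuousOn
    apply ContinuousOn.add _ continuousOn_const
    intro w hw
    exact ContinuousAt.comp_continuousWithinAt (f := fun w => -(ψ w) / z0)
      (Complex.continuousAt_arg (hslit w hw))
      (((hψ.mono hfr).fun_neg.div_const z0) w hw)
  have hLe : ∀ w ∈ frontier U, Complex.exp (L w) = w - q := by
    intro w hw
    obtain ⟨h1, h2⟩ := hψm w (hfr hw)
    have hn : ‖-(ψ w) / z0‖ = 1 := by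
      have : ‖ψ w‖ = 1 := by simpa using h1
      simp [hn0, this]
    have := Complex.norm_mul_exp_arg_mul_I (-(ψ w) / z0)
    rw [hn] at this
    simp only [L]
    rw [hℓe]
    push_cast
    rw [add_mul, Complex.exp_add, Complex.exp_pi_mul_I]
    have h5 : z0 * (Complex.exp (Complex.arg (-(ψ w) / z0) * Complex.I) * -1) = ψ w := by
      have h6 : Complex.exp (Complex.arg (-(ψ w) / z0) * Complex.I) = -(ψ w)/z0 := by
        simpa using this
      rw [h6]; field_simp
    rw [h5, h2]
  obtain ⟨T, hT⟩ := ContinuousMap.exists_restrict_eq (isClosed_frontier (s := U))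
    ⟨_, continuousOn_iff_continuous_domRestrict.1 hLc⟩
  have hTL : ∀ w ∈ frontier U, T w = L w := fun w hw =>
    congrArg (fun g : C(frontier U, ℂ) => g ⟨w, hw⟩) hT
  classical
  let g : ℂ → ℂ := fun z => if z ∈ U then Complex.exp (T z) else z - q
  have hg : Continuous g := by
    apply continuous_if
    · intro a ha
      have ha' : a ∈ frontier U := ha
      rw [hTL a ha', hLe a ha']
    · exact (Complex.continuous_exp.comp T.continuous).continuousOn
    · exact (continuous_id.sub continuous_const).continuousOn
  obtain ⟨G, hG, hGe⟩ := exists_log_univ hg (by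
    intro z
    simp only [g]
    split_ifs with h
    · exact Complex.exp_ne_zero _
    · intro h'
      rw [sub_eq_zero] at h'
      exact h (h' ▸ hq))
  obtain ⟨R, hR⟩ := hb.subset_closedBall q
  refine no_circle_log q (R := |R| + 1) (by positivity) hG (fun z hz => ?_)
  rw [hGe]
  simp only [g]
  rw [if_neg]
  intro h
  have := hR h
  rw [mem_closedBall, hz] at this
  linarith [le_abs_self R]

end PartA

section PartB

open Set Metric

/-- `w - z` has a continuous logarithm on `J`. -/
def HasLogOn (J : Set ℂ) (z : ℂ) : Prop :=
  ∃ L : ℂ → ℂ, ContinuousOn L J ∧ ∀ w ∈ J, Complex.exp (L w) = w - z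

lemma hasLogOn_of_near {J : Set ℂ} {z z' : ℂ} (hz : HasLogOn J z)
    (h : ∀ w ∈ J, dist z z' < dist w z) : HasLogOn J z' := by
  obtain ⟨L, hL, hLe⟩ := hz
  have hne : ∀ w ∈ J, w - z ≠ 0 := by
    intro w hw h0
    have := h w hw
    rw [sub_eq_zero.1 h0, dist_self] at this
    exact absurd this (not_lt.2 dist_nonneg)
  have hsl : ∀ w ∈ J, (w - z') / (w - z) ∈ Complex.slitPlane := by
    intro w hw
    have h1 : (w - z') / (w - z) = 1 + (z - z') / (w - z) := by
      have := hne w hw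
      field_simp
      ring
    rw [h1]
    apply Complex.mem_slitPlane_of_norm_lt_one
    rw [norm_div, div_lt_one (norm_pos_iff.2 (hne w hw))]
    simpa [dist_eq_norm] using h w hw
  refine ⟨fun w => L w + Complex.log ((w - z') / (w - z)), ?_, ?_⟩
  · apply hL.add
    apply ContinuousOn.clog _ hsl
    exact ContinuousOn.div (by fun_prop) (by fun_prop) hne
  · intro w hw
    rw [Complex.exp_add, hLe w hw, Complex.exp_log (Complex.slitPlane_ne_zero (hsl w hw))]
    have := hne w hw
    field_simp

lemma hasLogOn_far {J : Set ℂ} {z : ℂ} {R : ℝ} (hJ : ∀ w ∈ J, ‖w‖ < R) (hz : R ≤ ‖z‖) :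
    HasLogOn J z := by
  by_cases h0 : z = 0
  · refine ⟨0, continuousOn_const, fun w hw => ?_⟩
    have := hJ w hw
    rw [h0, norm_zero] at hz
    linarith [norm_nonneg w]
  have hsl : ∀ w ∈ J, 1 + (-w / z) ∈ Complex.slitPlane := by
    intro w hw
    apply Complex.mem_slitPlane_of_norm_lt_one
    rw [norm_div, norm_neg, div_lt_one (norm_pos_iff.2 h0)]
    linarith [hJ w hw]
  refine ⟨fun w => Complex.log (-z) + Complex.log (1 + (-w / z)), ?_, ?_⟩
  · apply continuousOn_const.add
    apply ContinuousOn.clog _ hsl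
    fun_prop
  · intro w hw
    rw [Complex.exp_add, Complex.exp_log (neg_ne_zero.2 h0),
      Complex.exp_log (Complex.slitPlane_ne_zero (hsl w hw))]
    field_simp
    ring

lemma frontier_component_subset {O : Set ℂ} (hO : IsOpen O) (z : ℂ) :
    frontier (connectedComponentIn O z) ⊆ Oᶜ := by
  intro x hx hxO
  have ho : IsOpen (connectedComponentIn O z) := hO.connectedComponentIn
  have hx' : IsOpen (connectedComponentIn O x) := hO.connectedComponentIn
  rw [ho.frontier_eq] at hx
  obtain ⟨y, hy1, hy2⟩ := mem_closure_iff.1 hx.1 _ hx' (mem_connectedComponentIn hxO)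
  apply hx.2
  rw [connectedComponentIn_eq hy2, ← connectedComponentIn_eq hy1]
  exact mem_connectedComponentIn hxO

lemma exists_bounded_component {J : Set ℂ} (hJ : IsCompact J) {z : ℂ} (hz : z ∉ J)
    (hlog : ¬ HasLogOn J z) : ∃ W : Set ℂ, IsOpen W ∧ IsConnected W ∧ Bornology.IsBounded W ∧
      Disjoint W J ∧ frontier W ⊆ J := by
  have hO : IsOpen Jᶜ := hJ.isClosed.isOpen_compl
  refine ⟨connectedComponentIn Jᶜ z, hO.connectedComponentIn,
    isConnected_connectedComponentIn_iff.2 hz, ?_, ?_, ?_⟩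
  rotate_left
  · exact disjoint_left.2 fun x hx => connectedComponentIn_subset _ _ hx
  · simpa using frontier_component_subset hO z
  by_cases hJne : J.Nonempty
  swap
  · exact absurd ⟨0, continuousOn_const, fun w hw => absurd ⟨w, hw⟩ hJne⟩ hlog
  have hnear : ∀ x ∉ J, ∃ ε > 0, ∀ y ∈ ball x ε, y ∉ J ∧ (HasLogOn J x ↔ HasLogOn J y) := by
    intro x hx
    have hpos : 0 < infDist x J := (hJ.isClosed.notMem_iff_infDist_pos hJne).1 hx
    refine ⟨infDist x J / 2, by positivity, fun y hy => ?_⟩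
    rw [mem_ball] at hy
    have h1 : ∀ w ∈ J, infDist x J ≤ dist w x := fun w hw => by
      rw [dist_comm]; exact infDist_le_dist_of_mem hw
    have h2 : ∀ w ∈ J, infDist x J / 2 < dist w y := fun w hw => by
      have := dist_triangle w y x
      linarith [h1 w hw]
    refine ⟨fun hyJ => ?_, fun h => hasLogOn_of_near h fun w hw => ?_,
      fun h => hasLogOn_of_near h fun w hw => ?_⟩
    · have := h2 y hyJ
      rw [dist_self] at this
      linarith
    · rw [dist_comm]; linarith [h1 w hw]
    · linarith [h2 w hw]
  have hu : IsOpen {x | x ∉ J ∧ HasLogOn J x} := by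
    rw [isOpen_iff]
    rintro x ⟨hx, hl⟩
    obtain ⟨ε, hε, h⟩ := hnear x hx
    exact ⟨ε, hε, fun y hy => ⟨(h y hy).1, (h y hy).2.1 hl⟩⟩
  have hv : IsOpen {x | x ∉ J ∧ ¬ HasLogOn J x} := by
    rw [isOpen_iff]
    rintro x ⟨hx, hl⟩
    obtain ⟨ε, hε, h⟩ := hnear x hx
    exact ⟨ε, hε, fun y hy => ⟨(h y hy).1, fun h' => hl ((h y hy).2.2 h')⟩⟩
  obtain ⟨R, hR⟩ := hJ.isBounded.subset_ball 0
  refine (isBounded_ball (x := (0:ℂ)) (r := R)).subset fun x hx => ?_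
  by_contra hxR
  have hpre : IsPreconnected (connectedComponentIn Jᶜ z) := isPreconnected_connectedComponentIn
  obtain ⟨y, -, hy1, hy2⟩ := hpre _ _ hu hv (fun y hy => by
      have : y ∉ J := connectedComponentIn_subset _ _ hy
      by_cases h : HasLogOn J y
      · exact Or.inl ⟨this, h⟩
      · exact Or.inr ⟨this, h⟩)
    ⟨x, hx, connectedComponentIn_subset _ _ hx, hasLogOn_far (R := R) (fun w hw => by
      simpa using hR hw) (by simpa using hxR)⟩
    ⟨z, mem_connectedComponentIn hz, hz, hlog⟩
  exact hy2.2 hy1.2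

/-- A compact set made of a segment together with a connected closed set joining the ends of the
segment and avoiding its midpoint has a point off it with no logarithm. -/
lemma exists_no_log {J Rst : Set ℂ} {s d : ℂ} (hd : d ≠ 0)
    (hR : IsPreconnected Rst) (hRc : IsClosed Rst) (hs : s ∉ Rst) (h1 : s + d ∈ Rst)
    (h2 : s - d ∈ Rst) (hJ : J = (fun x : ℝ => s + x * d) '' Icc (-1) 1 ∪ Rst) :
    ∃ z, z ∉ J ∧ ¬ HasLogOn J z := by
  have hpos : 0 < infDist s Rst := (hRc.notMem_iff_infDist_pos ⟨_, h1⟩).1 hs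
  have hdn : 0 < ‖d‖ := norm_pos_iff.2 hd
  obtain ⟨η, hη, hηd⟩ : ∃ η : ℝ, 0 < η ∧ η * ‖d‖ < infDist s Rst / 4 :=
    ⟨infDist s Rst / 8 / ‖d‖, by positivity, by field_simp; linarith⟩
  have hnotJ : ∀ e : ℝ, e ≠ 0 → |e| ≤ η → s + (e * Complex.I) * d ∉ J := by
    intro e he heη hm
    rw [hJ] at hm
    rcases hm with ⟨x, -, hx⟩ | hm
    · have : ((x : ℂ) - e * Complex.I) * d = 0 := by linear_combination hx
      rcases mul_eq_zero.1 this with h | h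
      · have := congrArg Complex.im h
        simp at this
        exact he this
      · exact hd h
    · have := infDist_le_dist_of_mem (x := s) hm
      simp [dist_eq_norm] at this
      nlinarith
  by_contra hcon
  push Not at hcon
  obtain ⟨Lp, hLp, hLpe⟩ := hcon _ (hnotJ η hη.ne' (abs_of_pos hη).le)
  obtain ⟨Lm, hLm, hLme⟩ := hcon _ (hnotJ (-η) (neg_ne_zero.2 hη.ne') (by simp [abs_of_pos hη]))
  have hRJ : Rst ⊆ J := by rw [hJ]; exact subset_union_right
  have hSJ : ∀ x ∈ Icc (-1:ℝ) 1, s + x * d ∈ J := fun x hx => by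
    rw [hJ]; exact Or.inl ⟨x, hx, rfl⟩
  -- the ratio on the rest
  let rt : ℂ → ℂ := fun w => (w - (s + (η * Complex.I) * d)) / (w - (s + ((-η : ℝ) * Complex.I) * d))
  have hne : ∀ w ∈ J, w - (s + ((-η : ℝ) * Complex.I) * d) ≠ 0 := fun w hw h => by
    rw [← hLme w hw] at h
    exact Complex.exp_ne_zero _ h
  have hM : ∀ w ∈ J, Complex.exp (Lp w - Lm w) = rt w := by
    intro w hw
    rw [Complex.exp_sub, hLpe w hw, hLme w hw]
  have hsl : ∀ w ∈ Rst, rt w ∈ Complex.slitPlane := by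
    intro w hw
    have hw0 := hne w (hRJ hw)
    have h1 : rt w = 1 + (-(2 * (η * Complex.I) * d)) / (w - (s + ((-η : ℝ) * Complex.I) * d)) := by
      simp only [rt]
      rw [div_eq_iff hw0, add_mul, div_mul_cancel₀ _ hw0]
      push_cast
      ring
    rw [h1]
    apply Complex.mem_slitPlane_of_norm_lt_one
    rw [norm_div, div_lt_one (norm_pos_iff.2 hw0)]
    have h3 : infDist s Rst ≤ ‖w - s‖ := by
      have := infDist_le_dist_of_mem (x := s) hw
      rwa [dist_comm, dist_eq_norm] at this
    have h4 : ‖w - s‖ ≤ ‖w - (s + ((-η : ℝ) * Complex.I) * d)‖ + ‖((-η : ℝ) * Complex.I) * d‖ := by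
      have := norm_add_le (w - (s + ((-η : ℝ) * Complex.I) * d)) (((-η : ℝ) * Complex.I) * d)
      rwa [show w - (s + ((-η : ℝ) * Complex.I) * d) + ((-η : ℝ) * Complex.I) * d = w - s by
        ring] at this
    have h5 : ‖((-η : ℝ) * Complex.I) * d‖ = η * ‖d‖ := by
      simp [abs_of_pos hη]
    have h6 : ‖-(2 * (η * Complex.I) * d)‖ = 2 * (η * ‖d‖) := by
      simp [abs_of_pos hη]; ring
    rw [h6]
    linarith
  have hA : (Lp (s + d) - Lm (s + d)) - Complex.log (rt (s + d)) =
      (Lp (s - d) - Lm (s - d)) - Complex.log (rt (s - d)) := by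
    refine exp_const_of_preconnected hR
      (f := fun w => (Lp w - Lm w) - Complex.log (rt w)) ?_ ?_ h1 h2
    · apply ((hLp.mono hRJ).sub (hLm.mono hRJ)).sub
      apply ContinuousOn.clog _ hsl
      exact ContinuousOn.div (by fun_prop) (by fun_prop) fun w hw => hne w (hRJ hw)
    · have : ∀ w ∈ Rst, Complex.exp ((Lp w - Lm w) - Complex.log (rt w)) = 1 := by
        intro w hw
        have h0 := Complex.slitPlane_ne_zero (hsl w hw)
        rw [Complex.exp_sub, hM w (hRJ hw), Complex.exp_log h0, div_self h0]
      intro x hx y hy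
      rw [this x hx, this y hy]
  have hpl : ∀ x : ℝ, (η + x * Complex.I : ℂ) ∈ Complex.slitPlane := fun x =>
    Or.inl (by simp [hη])
  have hmi : ∀ x : ℝ, (η - x * Complex.I : ℂ) ∈ Complex.slitPlane := fun x =>
    Or.inl (by simp [hη])
  have hrt : ∀ x : ℝ, rt (s + x * d) = (x - η * Complex.I) / (x + η * Complex.I) := by
    intro x
    simp only [rt]
    rw [← mul_div_mul_right (x - η * Complex.I : ℂ) (x + η * Complex.I) hd]
    congr 1
    · ring
    · push_cast; ring
  have hrx : ∀ x : ℝ, rt (s + x * d) * (η - x * Complex.I) = -(η + x * Complex.I) := by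
    intro x
    have h0 : (x + η * Complex.I : ℂ) ≠ 0 := by
      intro h
      have := congrArg Complex.im h
      simp at this
      exact hη.ne' this
    rw [hrt]
    field_simp
    linear_combination (2 * (x:ℂ) * η) * Complex.I_sq
  have hB : (Lp (s + d) - Lm (s + d)) - (Complex.log (η + Complex.I) - Complex.log (η - Complex.I)) =
      (Lp (s - d) - Lm (s - d)) - (Complex.log (η - Complex.I) - Complex.log (η + Complex.I)) := by
    have := exp_const_of_preconnected (isPreconnected_Icc (a := (-1:ℝ)) (b := 1))
      (f := fun x : ℝ => (Lp (s + x * d) - Lm (s + x * d)) -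
        (Complex.log (η + x * Complex.I) - Complex.log (η - x * Complex.I))) ?_ ?_
      (x := 1) (y := -1) (by simp) (by simp)
    · simpa [sub_eq_add_neg] using this
    · apply ContinuousOn.sub
      · apply ContinuousOn.sub
        · exact hLp.comp (by fun_prop) hSJ
        · exact hLm.comp (by fun_prop) hSJ
      · apply ContinuousOn.sub
        · exact ContinuousOn.clog (by fun_prop) fun x _ => hpl x
        · exact ContinuousOn.clog (by fun_prop) fun x _ => hmi x
    · have : ∀ x ∈ Icc (-1:ℝ) 1, Complex.exp ((Lp (s + x * d) - Lm (s + x * d)) -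
        (Complex.log (η + x * Complex.I) - Complex.log (η - x * Complex.I))) = -1 := by
        intro x hx
        have hp0 := Complex.slitPlane_ne_zero (hpl x)
        have hm0 := Complex.slitPlane_ne_zero (hmi x)
        rw [Complex.exp_sub, hM _ (hSJ x hx), Complex.exp_sub, Complex.exp_log hp0,
          Complex.exp_log hm0]
        field_simp
        linear_combination hrx x
      intro x hx y hy
      rw [this x hx, this y hy]
  have himB := congrArg Complex.im hB
  have himA := congrArg Complex.im hA
  simp only [Complex.sub_im, Complex.log_im] at himA himB
  have a1 : 0 < (η + Complex.I : ℂ).arg := by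
    rcases (Complex.arg_nonneg_iff.2 (show 0 ≤ (η + Complex.I : ℂ).im by simp)).lt_or_eq with h | h
    · exact h
    · have := (Complex.arg_eq_zero_iff.1 h.symm).2
      simp at this
  have a2 : (η - Complex.I : ℂ).arg < 0 := Complex.arg_neg_iff.2 (by simp)
  have him : ∀ x : ℝ, (rt (s + x * d)).im = -(2 * x * η) / (x * x + η * η) := by
    intro x
    rw [hrt, Complex.div_im]
    simp [Complex.normSq_apply]
    ring
  have a3 : (rt (s + d)).arg < 0 := by
    apply Complex.arg_neg_iff.2
    have := him 1
    simp only [Complex.ofReal_one, one_mul] at this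
    rw [this]
    apply div_neg_of_neg_of_pos <;> nlinarith
  have a4 : 0 ≤ (rt (s - d)).arg := by
    apply Complex.arg_nonneg_iff.2
    have := him (-1)
    simp only [Complex.ofReal_one, Complex.ofReal_neg, neg_mul, one_mul, ← sub_eq_add_neg] at this
    rw [this]
    apply div_nonneg <;> nlinarith
  linarith

end PartB

section PartC

open Set Metric

lemma local_arc {φ : ℂ → ℂ} (hφ : ContinuousOn φ (sphere (0 : ℂ) 1))
    (hi : InjOn φ (sphere (0 : ℂ) 1)) {γ : ℝ → ℂ} {u v m : ℝ} (hm : m ∈ Ioo u v)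
    (hγ : ContinuousOn γ (Icc u v)) (hγi : InjOn γ (Icc u v))
    (hsub : γ '' Icc u v ⊆ φ '' sphere (0 : ℂ) 1) :
    ∃ ε > 0, ∀ w ∈ φ '' sphere (0 : ℂ) 1, dist w (γ m) < ε → w ∈ γ '' Ioo u v := by
  let ψ := Function.invFunOn φ (sphere (0 : ℂ) 1)
  have hψ : ContinuousOn ψ (φ '' sphere (0 : ℂ) 1) :=
    continuousOn_invFunOn_of_compact (isCompact_sphere _ _) hφ hi
  have hψm : ∀ w ∈ φ '' sphere (0 : ℂ) 1, ψ w ∈ sphere (0 : ℂ) 1 ∧ φ (ψ w) = w := fun w hw =>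
    ⟨Function.invFunOn_mem hw, Function.invFunOn_eq hw⟩
  have hJ : ∀ t ∈ Icc u v, γ t ∈ φ '' sphere (0 : ℂ) 1 := fun t ht => hsub ⟨t, ht, rfl⟩
  have hmI : m ∈ Icc u v := Ioo_subset_Icc_self hm
  set c := ψ (γ m) with hc
  have hcn : ‖c‖ = 1 := by simpa using (hψm _ (hJ m hmI)).1
  have hc0 : c ≠ 0 := by rintro h; rw [h] at hcn; simp at hcn
  -- rotated coordinate on the curve
  let θ : ℂ → ℂ := fun w => ψ w / c
  have hθ : ContinuousOn θ (φ '' sphere (0 : ℂ) 1) := hψ.div_const c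
  have hθn : ∀ w ∈ φ '' sphere (0 : ℂ) 1, ‖θ w‖ = 1 := fun w hw => by
    have : ‖ψ w‖ = 1 := by simpa using (hψm w hw).1
    simp [θ, hcn, this]
  have hθm : θ (γ m) = 1 := div_self hc0
  have hθi : ∀ w ∈ φ '' sphere (0 : ℂ) 1, ∀ w' ∈ φ '' sphere (0 : ℂ) 1,
      0 < (θ w).re → 0 < (θ w').re → (θ w).im = (θ w').im → w = w' := by
    intro w hw w' hw' h1 h2 h3
    have e1 : (θ w).re * (θ w).re + (θ w).im * (θ w).im = 1 := by
      rw [← Complex.normSq_apply, Complex.normSq_eq_norm_sq, hθn w hw]; norm_num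
    have e2 : (θ w').re * (θ w').re + (θ w').im * (θ w').im = 1 := by
      rw [← Complex.normSq_apply, Complex.normSq_eq_norm_sq, hθn w' hw']; norm_num
    have e3 : (θ w).re = (θ w').re := by
      rw [h3] at e1
      nlinarith
    have e4 : θ w = θ w' := Complex.ext e3 h3
    have e5 : ψ w = ψ w' := by
      simpa [θ, hc0, div_left_inj' hc0] using e4
    rw [← (hψm w hw).2, e5, (hψm w' hw').2]
  have hθγ : ContinuousOn (fun t => θ (γ t)) (Icc u v) := hθ.comp hγ hJ
  -- shrink the interval
  obtain ⟨u', v', hu', hv', hmu, hmv, hre⟩ : ∃ u' v', u < u' ∧ v' < v ∧ u' < m ∧ m < v' ∧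
      ∀ t ∈ Icc u' v', 0 < (θ (γ t)).re := by
    have h1 : ContinuousAt (fun t => (θ (γ t)).re) m :=
      Complex.continuous_re.continuousAt.comp (hθγ.continuousAt (Icc_mem_nhds hm.1 hm.2))
    have h2 : ∀ᶠ t in nhds m, 0 < (θ (γ t)).re :=
      h1.eventually (lt_mem_nhds (by simp [hθm]))
    obtain ⟨δ, hδ, hball⟩ := Metric.eventually_nhds_iff.1 h2
    have hmin : 0 < min δ (min (m - u) (v - m)) := by
      have := hm.1; have := hm.2
      simp; constructor <;> [exact hδ; constructor <;> linarith]
    have m1 := min_le_left δ (min (m - u) (v - m))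
    have m2 := (min_le_right δ (min (m - u) (v - m))).trans (min_le_left _ _)
    have m3 := (min_le_right δ (min (m - u) (v - m))).trans (min_le_right _ _)
    refine ⟨m - min δ (min (m - u) (v - m)) / 2, m + min δ (min (m - u) (v - m)) / 2,
      by linarith, by linarith, by linarith, by linarith, fun t ht => hball ?_⟩
    rw [Real.dist_eq, abs_lt]
    constructor <;> linarith [ht.1, ht.2]
  have hsub' : Icc u' v' ⊆ Icc u v := Icc_subset_Icc hu'.le hv'.le
  let h : ℝ → ℝ := fun t => (θ (γ t)).im
  have hhc : ContinuousOn h (Icc u' v') :=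
    Complex.continuous_im.comp_continuousOn (hθγ.mono hsub')
  have hhi : InjOn h (Icc u' v') := fun x hx y hy hxy =>
    hγi (hsub' hx) (hsub' hy) (hθi _ (hJ x (hsub' hx)) _ (hJ y (hsub' hy)) (hre x hx) (hre y hy) hxy)
  have hhm : h m = 0 := by simp [h, hθm]
  have hmI' : m ∈ Icc u' v' := ⟨hmu.le, hmv.le⟩
  have huI' : u' ∈ Icc u' v' := ⟨le_rfl, by linarith⟩
  have hvI' : v' ∈ Icc u' v' := ⟨by linarith, le_rfl⟩
  obtain ⟨ε1, hε1, hcov⟩ : ∃ ε1 > 0, ∀ y : ℝ, |y| < ε1 → ∃ t ∈ Icc u' v', h t = y := by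
    rcases hhc.strictMonoOn_of_injOn_Icc' (by linarith) hhi with hmono | hanti
    · have l1 := hmono huI' hmI' hmu
      have l2 := hmono hmI' hvI' hmv
      rw [hhm] at l1 l2
      refine ⟨min (-h u') (h v'), lt_min (by linarith) l2, fun y hy => ?_⟩
      have := abs_lt.1 hy
      have m1 := min_le_left (-h u') (h v')
      have m2 := min_le_right (-h u') (h v')
      exact intermediate_value_Icc (by linarith) hhc ⟨by linarith, by linarith⟩
    · have l1 := hanti huI' hmI' hmu
      have l2 := hanti hmI' hvI' hmv
      rw [hhm] at l1 l2
      refine ⟨min (h u') (-h v'), lt_min l1 (by linarith), fun y hy => ?_⟩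
      have := abs_lt.1 hy
      have m1 := min_le_left (h u') (-h v')
      have m2 := min_le_right (h u') (-h v')
      exact intermediate_value_Icc' (by linarith) hhc ⟨by linarith, by linarith⟩
  obtain ⟨ε, hε, hd⟩ := Metric.continuousOn_iff.1 hθ (γ m) (hJ m hmI) (min 1 ε1) (lt_min one_pos hε1)
  refine ⟨ε, hε, fun w hw hwd => ?_⟩
  have h1 := hd w hw hwd
  rw [hθm, dist_eq_norm] at h1
  have h2 : |(θ w).im| < ε1 := by
    have := Complex.abs_im_le_norm (θ w - 1)
    simp at this
    exact this.trans_lt (h1.trans_le (min_le_right _ _))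
  have h3 : 0 < (θ w).re := by
    have := Complex.abs_re_le_norm (θ w - 1)
    have := this.trans_lt (h1.trans_le (min_le_left _ _))
    simp at this
    linarith [(abs_lt.1 this).1]
  obtain ⟨t, ht, hty⟩ := hcov _ h2
  refine ⟨t, ⟨by linarith [ht.1], by linarith [ht.2]⟩, ?_⟩
  exact hθi _ (hJ t (hsub' ht)) _ hw (hre t ht) h3 hty

/-- Points of the exterior accumulate at every boundary point. -/
lemma exists_exterior {Ω : Set ℂ} {φ : ℂ → ℂ} (hφ : ContinuousOn φ (sphere (0 : ℂ) 1))
    (hi : InjOn φ (sphere (0 : ℂ) 1)) (hΩ : IsOpen Ω) (hne : Ω.Nonempty)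
    (hb : Bornology.IsBounded Ω) (hfr : frontier Ω = φ '' sphere (0 : ℂ) 1)
    {c : ℂ} (hc : c ∈ frontier Ω) {ε : ℝ} (hε : 0 < ε) : ∃ c' ∈ ball c ε, c' ∉ closure Ω := by
  by_contra hcon
  push Not at hcon
  have hIntr : c ∈ interior (closure Ω) :=
    mem_interior.2 ⟨ball c ε, hcon, isOpen_ball, mem_ball_self hε⟩
  obtain ⟨q, hq⟩ := hne
  have hq' : q ∉ frontier Ω := fun h => by
    rw [hΩ.frontier_eq] at h; exact h.2 hq
  have hsubset : Ω ⊆ interior (closure Ω) := hΩ.subset_interior_closure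
  refine no_proper_frontier hφ hi (U := interior (closure Ω)) isOpen_interior
    (hb.closure.subset interior_subset) ?_ (hsubset hq) (hfr ▸ hq') (hfr ▸ hc) ?_
  · rw [← hfr]
    exact (frontier_interior_subset).trans frontier_closure_subset
  · intro h
    rw [isOpen_interior.frontier_eq] at h
    exact h.2 hIntr

/-- Two arcs with common endpoints make a Jordan curve. -/
lemma exists_jordan_of_arcs {γ ψ : ℝ → ℂ} {a b : ℝ} (hab : a < b) (hγ : ContinuousOn γ (Icc a b))
    (hγi : InjOn γ (Icc a b)) (hψ : ContinuousOn ψ (Icc 0 1)) (hψi : InjOn ψ (Icc 0 1))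
    (h0 : ψ 0 = γ a) (h1 : ψ 1 = γ b) (hd : ∀ t ∈ Ioo (0:ℝ) 1, ψ t ∉ γ '' Icc a b) :
    ∃ φ : ℂ → ℂ, ContinuousOn φ (sphere (0 : ℂ) 1) ∧ InjOn φ (sphere (0 : ℂ) 1) ∧
      φ '' sphere (0 : ℂ) 1 = γ '' Icc a b ∪ ψ '' Icc 0 1 := by
  classical
  let A : ℂ → ℝ := fun z => a + (b - a) * ((1 + z.re) / 2)
  let B : ℂ → ℝ := fun z => (1 + z.re) / 2
  have hre : ∀ z ∈ sphere (0 : ℂ) 1, z.re * z.re + z.im * z.im = 1 := by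
    intro z hz
    have : ‖z‖ = 1 := by simpa using hz
    rw [← Complex.normSq_apply, Complex.normSq_eq_norm_sq, this]; norm_num
  have hB : ∀ z ∈ sphere (0 : ℂ) 1, B z ∈ Icc (0:ℝ) 1 := by
    intro z hz
    have := hre z hz
    constructor <;> simp only [B] <;> nlinarith
  have hBo : ∀ z ∈ sphere (0 : ℂ) 1, z.im ≠ 0 → B z ∈ Ioo (0:ℝ) 1 := by
    intro z hz hz'
    have := hre z hz
    have h2 : 0 < z.im * z.im := mul_self_pos.2 hz'
    constructor <;> simp only [B] <;> nlinarith
  have hA : ∀ z ∈ sphere (0 : ℂ) 1, A z ∈ Icc a b := by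
    intro z hz
    have := hB z hz
    have e : A z = a + (b - a) * B z := rfl
    rw [e]
    constructor <;> nlinarith [this.1, this.2]
  have hAB : ∀ z ∈ sphere (0 : ℂ) 1, z.im = 0 → γ (A z) = ψ (B z) := by
    intro z hz h
    have := hre z hz
    rw [h] at this
    have h3 : (z.re - 1) * (z.re + 1) = 0 := by linarith
    rcases mul_eq_zero.1 h3 with h4 | h4
    · have : z.re = 1 := by linarith
      simp [A, B, this, h1]
    · have : z.re = -1 := by linarith
      simp [A, B, this, h0]
  let φ : ℂ → ℂ := fun z => if 0 ≤ z.im then γ (A z) else ψ (B z)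
  refine ⟨φ, ?_, ?_, ?_⟩
  · have e1 : ContinuousOn (fun z => γ (A z)) (sphere (0:ℂ) 1) :=
      hγ.comp (by fun_prop) hA
    have e2 : ContinuousOn (fun z => ψ (B z)) (sphere (0:ℂ) 1) :=
      hψ.comp (by fun_prop) hB
    have hcl1 : IsClosed {z : ℂ | 0 ≤ z.im} := isClosed_le continuous_const Complex.continuous_im
    have hcl2 : IsClosed {z : ℂ | z.im ≤ 0} := isClosed_le Complex.continuous_im continuous_const
    have : sphere (0:ℂ) 1 = (sphere (0:ℂ) 1 ∩ {z | 0 ≤ z.im}) ∪ (sphere (0:ℂ) 1 ∩ {z | z.im ≤ 0}) := by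
      ext z
      constructor
      · intro hz
        rcases le_total 0 z.im with h | h
        · exact Or.inl ⟨hz, h⟩
        · exact Or.inr ⟨hz, h⟩
      · rintro (h | h) <;> exact h.1
    rw [this]
    apply ContinuousOn.union_of_isClosed
    · refine (e1.mono inter_subset_left).congr fun z hz => ?_
      simp only [φ]; rw [if_pos (show 0 ≤ z.im from hz.2)]
    · refine (e2.mono inter_subset_left).congr fun z hz => ?_
      simp only [φ]
      split_ifs with h
      · exact hAB z hz.1 (le_antisymm hz.2 h)
      · rfl
    · exact isClosed_sphere.inter hcl1
    · exact isClosed_sphere.inter hcl2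
  · have inj : ∀ z ∈ sphere (0:ℂ) 1, ∀ w ∈ sphere (0:ℂ) 1, z.re = w.re → 0 ≤ z.im * w.im → z = w := by
      intro z hz w hw h1 h2
      have a1 := hre z hz
      have a2 := hre w hw
      rw [h1] at a1
      apply Complex.ext h1
      have : z.im * z.im = w.im * w.im := by linarith
      rcases mul_self_eq_mul_self_iff.1 this with h | h
      · exact h
      · rw [h] at h2
        have : w.im = 0 := by nlinarith
        rw [h, this, neg_zero]
    intro z hz w hw hzw
    simp only [φ] at hzw
    split_ifs at hzw with i1 i2 i2
    · have := hγi (hA z hz) (hA w hw) hzw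
      apply inj z hz w hw _ (mul_nonneg i1 i2)
      simp only [A] at this
      have hba : b - a ≠ 0 := by linarith
      have := mul_left_cancel₀ hba (add_left_cancel this)
      linarith
    · exact absurd ⟨A z, hA z hz, hzw⟩ (hd (B w) (hBo w hw (by linarith)))
    · exact absurd ⟨A w, hA w hw, hzw.symm⟩ (hd (B z) (hBo z hz (by linarith)))
    · have := hψi (hB z hz) (hB w hw) hzw
      apply inj z hz w hw _ (by nlinarith)
      simp only [B] at this
      linarith
  · apply Subset.antisymm
    · rintro _ ⟨z, hz, rfl⟩
      simp only [φ]
      split_ifs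
      · exact Or.inl ⟨_, hA z hz, rfl⟩
      · exact Or.inr ⟨_, hB z hz, rfl⟩
    · have key : ∀ x ∈ Icc (0:ℝ) 1, ∃ y : ℝ, 0 ≤ y ∧ (2 * x - 1) ^ 2 + y ^ 2 = 1 := by
        intro x hx
        refine ⟨Real.sqrt (1 - (2 * x - 1) ^ 2), Real.sqrt_nonneg _, ?_⟩
        rw [Real.sq_sqrt]
        · ring
        · nlinarith [hx.1, hx.2]
      have hmem : ∀ x y : ℝ, x ^ 2 + y ^ 2 = 1 → (⟨x, y⟩ : ℂ) ∈ sphere (0:ℂ) 1 := by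
        intro x y h
        rw [mem_sphere_zero_iff_norm]
        have : ‖(⟨x, y⟩ : ℂ)‖ ^ 2 = 1 := by
          rw [← Complex.normSq_eq_norm_sq, Complex.normSq_apply]; simp; linarith
        nlinarith [norm_nonneg (⟨x, y⟩ : ℂ)]
      rintro w (⟨t, ht, rfl⟩ | ⟨t, ht, rfl⟩)
      · have hba : 0 < b - a := by linarith
        obtain ⟨y, hy, hxy⟩ := key ((t - a) / (b - a))
          ⟨div_nonneg (by linarith [ht.1]) hba.le, by rw [div_le_one hba]; linarith [ht.2]⟩
        refine ⟨⟨_, y⟩, hmem _ _ hxy, ?_⟩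
        simp only [φ]
        rw [if_pos hy]
        congr 1
        simp only [A]
        field_simp
        ring
      · obtain ⟨y, hy, hxy⟩ := key t ht
        have hs : (⟨2 * t - 1, -y⟩ : ℂ) ∈ sphere (0:ℂ) 1 := hmem _ _ (by linarith [neg_sq y])
        refine ⟨⟨2 * t - 1, -y⟩, hs, ?_⟩
        have hBt : B ⟨2 * t - 1, -y⟩ = t := by simp only [B]; ring
        simp only [φ]
        split_ifs with h
        · rw [hAB _ hs (le_antisymm (by simpa using hy) h), hBt]
        · rw [hBt]

/-- A domain bounded by a crosscut and part of the boundary of `Ω` lies in `Ω`. -/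
lemma subset_of_crosscut {Ω W A P : Set ℂ} {φ : ℂ → ℂ} (hφ : ContinuousOn φ (sphere (0 : ℂ) 1))
    (hi : InjOn φ (sphere (0 : ℂ) 1)) (hΩ : IsOpen Ω) (hne : Ω.Nonempty)
    (hb : Bornology.IsBounded Ω) (hfr : frontier Ω = φ '' sphere (0 : ℂ) 1)
    (hA : A ⊆ frontier Ω) {p : ℂ} (hp : p ∈ frontier Ω) (hpA : p ∉ A) (hP : P ⊆ Ω ∪ A)
    (hW : IsOpen W) (hWc : IsConnected W) (hWb : Bornology.IsBounded W)
    (hWfr : frontier W = A ∪ P) : W ⊆ Ω := by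
  have hdisj : ∀ x ∈ W, x ∉ frontier W := fun x hx h => by
    rw [hW.frontier_eq] at h; exact h.2 hx
  have hdisjΩ : ∀ x ∈ Ω, x ∉ frontier Ω := fun x hx h => by
    rw [hΩ.frontier_eq] at h; exact h.2 hx
  have hB : ∀ x ∈ W, x ∉ frontier Ω := by
    intro x hx hxΩ
    obtain ⟨q, hq⟩ := hne
    refine no_proper_frontier hφ hi (U := W ∪ Ω) (hW.union hΩ) (hWb.union hb) ?_ (Or.inr hq)
      (hfr ▸ hdisjΩ q hq) (hfr ▸ hxΩ) ?_
    · intro y hy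
      have hy2 : y ∉ W ∪ Ω := fun h => by
        rw [(hW.union hΩ).frontier_eq] at hy; exact hy.2 h
      rw [← hfr]
      rcases frontier_union_subset _ _ hy with h | h
      · have h3 : y ∈ A ∪ P := hWfr ▸ h.1
        rcases h3 with h4 | h4
        · exact hA h4
        · rcases hP h4 with h5 | h5
          · exact absurd (Or.inr h5) hy2
          · exact hA h5
      · exact h.2
    · intro h
      rw [(hW.union hΩ).frontier_eq] at h
      exact h.2 (Or.inl hx)
  by_cases hIntr : (W ∩ Ω).Nonempty
  · refine hWc.isPreconnected.subset_left_of_subset_union hΩ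
      (isClosed_closure (s := Ω)).isOpen_compl ?_ ?_ hIntr
    · exact disjoint_compl_right.mono_left subset_closure
    · intro x hx
      by_cases h : x ∈ Ω
      · exact Or.inl h
      · refine Or.inr fun h' => hB x hx ?_
        rw [hΩ.frontier_eq]
        exact ⟨h', h⟩
  · exfalso
    have hfrA : frontier W ⊆ A := by
      intro y hy
      have h3 : y ∈ A ∪ P := hWfr ▸ hy
      rcases h3 with h4 | h4
      · exact h4
      · rcases hP h4 with h5 | h5
        · obtain ⟨z, hz1, hz2⟩ := mem_closure_iff.1 (frontier_subset_closure hy) Ω hΩ h5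
          exact absurd ⟨z, hz2, hz1⟩ hIntr
        · exact h5
    obtain ⟨q, hq⟩ := hWc.nonempty
    exact no_proper_frontier hφ hi hW hWb (hfr ▸ hfrA.trans hA) hq (hfr ▸ hB q hq)
      (hfr ▸ hp) (fun h => hpA (hfrA h))

end PartC

section PartD

open Set Metric

lemma first_hit {φ : ℝ → ℂ} {T : ℝ} {K : Set ℂ} (hT : 0 < T) (hφ : ContinuousOn φ (Icc 0 T))
    (hK : IsClosed K) (h0 : φ 0 ∉ K) (h1 : φ T ∈ K) :
    ∃ s ∈ Ioc 0 T, φ s ∈ K ∧ ∀ t ∈ Ico 0 s, φ t ∉ K := by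
  have hc : IsCompact (Icc 0 T ∩ φ ⁻¹' K) :=
    isCompact_Icc.of_isClosed_subset (hφ.preimage_isClosed_of_isClosed isClosed_Icc hK)
      inter_subset_left
  obtain ⟨s, hs⟩ := hc.exists_isLeast ⟨T, ⟨hT.le, le_rfl⟩, h1⟩
  have hs0 : s ≠ 0 := fun h => h0 (by have := hs.1.2; rwa [h] at this)
  refine ⟨s, ⟨lt_of_le_of_ne hs.1.1.1 (Ne.symm hs0), hs.1.1.2⟩, hs.1.2, fun t ht htK => ?_⟩
  exact absurd (hs.2 ⟨⟨ht.1, ht.2.le.trans hs.1.1.2⟩, htK⟩) (not_le.2 ht.2)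

lemma ext_line {φ : ℝ → ℂ} {s : ℝ} {K : Set ℂ} {y : ℂ} (hs : 0 < s)
    (hφ : ContinuousOn φ (Icc 0 s)) (hφi : InjOn φ (Icc 0 s)) (hK : Convex ℝ K)
    (hsK : φ s ∈ K) (hy : y ∈ K) (hne : y ≠ φ s) (h : ∀ t ∈ Ico 0 s, φ t ∉ K) :
    ∃ φ' : ℝ → ℂ, ContinuousOn φ' (Icc 0 (s + 1)) ∧ InjOn φ' (Icc 0 (s + 1)) ∧
      (∀ t ≤ s, φ' t = φ t) ∧
      (∀ t ∈ Icc s (s + 1), φ' t = φ s + (t - s : ℝ) * (y - φ s)) ∧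
      (∀ t ∈ Icc s (s + 1), φ' t ∈ K) := by
  classical
  let L : ℝ → ℂ := fun t => φ s + (t - s : ℝ) * (y - φ s)
  let φ' : ℝ → ℂ := fun t => if t ≤ s then φ t else L t
  have hL : ∀ t ∈ Icc s (s + 1), φ' t = L t := by
    intro t ht
    simp only [φ']
    split_ifs with h'
    · have : t = s := le_antisymm h' ht.1
      simp [L, this]
    · rfl
  have hl : ∀ t ≤ s, φ' t = φ t := fun t ht => if_pos ht
  have hLK : ∀ t ∈ Icc s (s + 1), L t ∈ K := by
    intro t ht
    have := hK.add_smul_sub_mem hsK hy (t := t - s) ⟨by linarith [ht.1], by linarith [ht.2]⟩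
    simpa [L] using this
  have hne' : y - φ s ≠ 0 := sub_ne_zero.2 hne
  refine ⟨φ', ?_, ?_, hl, hL, fun t ht => by rw [hL t ht]; exact hLK t ht⟩
  · rw [← Icc_union_Icc_eq_Icc hs.le (by linarith : s ≤ s + 1)]
    apply ContinuousOn.union_of_isClosed _ _ isClosed_Icc isClosed_Icc
    · exact hφ.congr fun t ht => hl t ht.2
    · refine ContinuousOn.congr ?_ hL
      have : Continuous L := by fun_prop
      exact this.continuousOn
  · have key : ∀ t ∈ Icc 0 (s+1), ∀ u ∈ Icc 0 (s+1), t ≤ u → φ' t = φ' u → t = u := by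
      intro t ht u hu htu e
      rcases le_or_gt u s with hus | hus
      · rw [hl u hus, hl t (htu.trans hus)] at e
        exact hφi ⟨ht.1, htu.trans hus⟩ ⟨hu.1, hus⟩ e
      · have hu' := hL u ⟨hus.le, hu.2⟩
        rcases lt_or_ge t s with hts | hts
        · exfalso
          rw [hl t hts.le, hu'] at e
          apply h t ⟨ht.1, hts⟩
          rw [e]; exact hLK u ⟨hus.le, hu.2⟩
        · rw [hL t ⟨hts, ht.2⟩, hu'] at e
          have := mul_right_cancel₀ hne' (add_left_cancel e)
          have : t - s = u - s := by exact_mod_cast this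
          linarith
    intro t ht u hu e
    rcases le_total t u with h' | h'
    · exact key t ht u hu h' e
    · exact (key u hu t ht h' e.symm).symm

def Reach (Ω : Set ℂ) (p q y : ℂ) : Prop :=
  ∃ T > 0, ∃ φ : ℝ → ℂ, ContinuousOn φ (Icc 0 T) ∧ InjOn φ (Icc 0 T) ∧ φ 0 = p ∧ φ T = y ∧
    (∀ t ∈ Ioc 0 T, φ t ∈ Ω) ∧ ∃ τ ∈ Ioc 0 T, ∀ t ∈ Icc 0 τ, φ t ∈ segment ℝ p q

lemma Reach.step {Ω K : Set ℂ} {p q x y : ℂ} (h : Reach Ω p q x) (hK : Convex ℝ K)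
    (hKc : IsClosed K) (hKΩ : K ⊆ Ω) (hp : p ∉ Ω) (hx : x ∈ K) (hy : y ∈ K) :
    Reach Ω p q y := by
  obtain ⟨T, hT, φ, hφ, hφi, h0, h1, hΩ, τ, hτ, hseg⟩ := h
  obtain ⟨s, hs, hsK, hlt⟩ := first_hit hT hφ hKc (by rw [h0]; exact fun h => hp (hKΩ h))
    (by rwa [h1])
  have hsub : Icc 0 s ⊆ Icc 0 T := Icc_subset_Icc_right hs.2
  by_cases hy' : y = φ s
  · exact ⟨s, hs.1, φ, hφ.mono hsub, hφi.mono hsub, h0, hy'.symm,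
      fun t ht => hΩ t ⟨ht.1, ht.2.trans hs.2⟩, min τ s, ⟨lt_min hτ.1 hs.1, min_le_right _ _⟩,
      fun t ht => hseg t ⟨ht.1, ht.2.trans (min_le_left _ _)⟩⟩
  · obtain ⟨φ', c1, c2, c3, c4, c5⟩ := ext_line hs.1 (hφ.mono hsub) (hφi.mono hsub) hK hsK hy hy' hlt
    refine ⟨s + 1, by linarith [hs.1], φ', c1, c2, by rw [c3 0 hs.1.le, h0], ?_, ?_,
      min τ s, ⟨lt_min hτ.1 hs.1, (min_le_right _ _).trans (by linarith)⟩, ?_⟩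
    · rw [c4 _ ⟨by linarith, le_rfl⟩]; simp
    · intro t ht
      rcases le_total t s with h | h
      · rw [c3 t h]; exact hΩ t ⟨ht.1, h.trans hs.2⟩
      · exact hKΩ (c5 t ⟨h, ht.2⟩)
    · intro t ht
      rw [c3 t (ht.2.trans (min_le_right _ _))]
      exact hseg t ⟨ht.1, ht.2.trans (min_le_left _ _)⟩

lemma Reach.base {Ω : Set ℂ} {p q : ℂ} (hpq : p ≠ q)
    (hseg : ∀ z ∈ segment ℝ p q, z ≠ p → z ∈ Ω) : Reach Ω p q q := by
  have hne : q - p ≠ 0 := sub_ne_zero.2 hpq.symm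
  have hm : ∀ t ∈ Icc (0:ℝ) 1, p + (t : ℂ) * (q - p) ∈ segment ℝ p q := by
    intro t ht
    have := (convex_segment (𝕜 := ℝ) p q).add_smul_sub_mem (left_mem_segment ℝ p q)
      (right_mem_segment ℝ p q) ht
    simpa using this
  refine ⟨1, one_pos, fun t => p + (t : ℂ) * (q - p), by fun_prop, ?_, by simp, by simp, ?_,
    1, ⟨one_pos, le_rfl⟩, hm⟩
  · intro t _ u _ e
    have := mul_right_cancel₀ hne (add_left_cancel e)
    exact_mod_cast this
  · intro t ht
    refine hseg _ (hm t ⟨ht.1.le, ht.2⟩) ?_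
    have : (t : ℂ) ≠ 0 := by exact_mod_cast ht.1.ne'
    simp [this, hne]

lemma reach_all {Ω : Set ℂ} {p q y : ℂ} (hΩ : IsOpen Ω) (hc : IsConnected Ω) (hp : p ∉ Ω)
    (hpq : p ≠ q) (hseg : ∀ z ∈ segment ℝ p q, z ≠ p → z ∈ Ω) (hy : y ∈ Ω) : Reach Ω p q y := by
  have hq : q ∈ Ω := hseg q (right_mem_segment ℝ p q) hpq.symm
  have hop : ∀ x ∈ Ω, ∃ ρ > 0, closedBall x ρ ⊆ Ω := fun x hx =>
    nhds_basis_closedBall.mem_iff.1 (hΩ.mem_nhds hx)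
  by_contra hcon
  have hU : IsOpen {x | x ∈ Ω ∧ Reach Ω p q x} := by
    rw [Metric.isOpen_iff]
    rintro x ⟨hx, hr⟩
    obtain ⟨ρ, hρ, hb⟩ := hop x hx
    exact ⟨ρ, hρ, fun z hz => ⟨hb (ball_subset_closedBall hz),
      hr.step (convex_closedBall x ρ) isClosed_closedBall hb hp (mem_closedBall_self hρ.le)
        (ball_subset_closedBall hz)⟩⟩
  have hV : IsOpen {x | x ∈ Ω ∧ ¬ Reach Ω p q x} := by
    rw [Metric.isOpen_iff]
    rintro x ⟨hx, hr⟩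
    obtain ⟨ρ, hρ, hb⟩ := hop x hx
    exact ⟨ρ, hρ, fun z hz => ⟨hb (ball_subset_closedBall hz), fun hz' =>
      hr (hz'.step (convex_closedBall x ρ) isClosed_closedBall hb hp
        (ball_subset_closedBall hz) (mem_closedBall_self hρ.le))⟩⟩
  obtain ⟨z, -, hz1, hz2⟩ := hc.isPreconnected _ _ hU hV
    (fun x hx => by by_cases h : Reach Ω p q x; exacts [Or.inl ⟨hx, h⟩, Or.inr ⟨hx, h⟩])
    ⟨q, hq, hq, Reach.base hpq hseg⟩ ⟨y, hy, hy, hcon⟩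
  exact hz2.2 hz1.2

lemma exists_crosscut {Ω : Set ℂ} {p q p' q' : ℂ} (hΩ : IsOpen Ω) (hc : IsConnected Ω)
    (hp : p ∉ Ω) (hpq : p ≠ q) (hseg : ∀ z ∈ segment ℝ p q, z ≠ p → z ∈ Ω)
    (hp' : p' ∉ Ω) (hpq' : p' ≠ q') (hseg' : ∀ z ∈ segment ℝ p' q', z ≠ p' → z ∈ Ω)
    (hpp : p ≠ p') :
    ∃ ψ : C(ℝ, ℂ), InjOn ψ (Icc 0 1) ∧ ψ 0 = p ∧ ψ 1 = p' ∧ (∀ t ∈ Ioo (0:ℝ) 1, ψ t ∈ Ω) ∧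
      (∃ τ ∈ Ioo (0:ℝ) 1, ∀ t ∈ Icc 0 τ, ψ t ∈ segment ℝ p q) ∧
      ∃ σ ∈ Ioo (0:ℝ) 1, (∀ t ∈ Icc σ 1, ψ t ∈ segment ℝ p' q') ∧
        ∃ d : ℂ, d ≠ 0 ∧ ∀ t ∈ Icc σ 1, ψ t = p' - (1 - t : ℝ) * d := by
  have hq' : q' ∈ Ω := hseg' q' (right_mem_segment ℝ p' q') hpq'.symm
  obtain ⟨T, hT, φ, hφ, hφi, h0, h1, hφΩ, τ, hτ, hτs⟩ := reach_all hΩ hc hp hpq hseg hq'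
  have hKc : IsClosed (segment ℝ p' q') := by
    rw [segment_eq_image]
    exact (isCompact_Icc.image (by fun_prop)).isClosed
  obtain ⟨s, hs, hsK, hlt⟩ := first_hit hT hφ hKc
    (by rw [h0]; exact fun h => hp (hseg' p h hpp)) (by rw [h1]; exact right_mem_segment ℝ p' q')
  have hsub : Icc 0 s ⊆ Icc 0 T := Icc_subset_Icc_right hs.2
  have hne : p' ≠ φ s := fun h => hp' (by rw [h]; exact hφΩ s hs)
  obtain ⟨φ', c1, c2, c3, c4, c5⟩ := ext_line hs.1 (hφ.mono hsub) (hφi.mono hsub)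
    (convex_segment _ _) hsK (left_mem_segment ℝ p' q') hne hlt
  have hs0 := hs.1
  have hs1 : 0 < s + 1 := by linarith
  have hφ'1 : φ' (s + 1) = p' := by
    rw [c4 _ ⟨by linarith, le_rfl⟩]; simp
  have hcont : Continuous fun t : ℝ => φ' ((s + 1) * max 0 (min 1 t)) := by
    apply c1.comp_continuous (by fun_prop)
    intro t
    have a1 : 0 ≤ max 0 (min 1 t) := le_max_left _ _
    have a2 : max 0 (min 1 t) ≤ 1 := max_le zero_le_one (min_le_left _ _)
    exact ⟨by positivity, by nlinarith⟩
  have hv : ∀ t ∈ Icc (0:ℝ) 1, (⟨_, hcont⟩ : C(ℝ, ℂ)) t = φ' ((s + 1) * t) := by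
    intro t ht
    simp only [ContinuousMap.coe_mk]
    rw [min_eq_right ht.2, max_eq_right ht.1]
  have hmem : ∀ t ∈ Icc (0:ℝ) 1, (s + 1) * t ∈ Icc 0 (s + 1) := fun t ht =>
    ⟨mul_nonneg hs1.le ht.1, by nlinarith [ht.2]⟩
  have hσ0 : 0 < s / (s + 1) := by positivity
  have hσ1 : s / (s + 1) < 1 := by rw [div_lt_one hs1]; linarith
  have hσm : ∀ t ∈ Icc (s / (s + 1)) 1, (s + 1) * t ∈ Icc s (s + 1) := by
    intro t ht
    have := ht.1
    rw [div_le_iff₀ hs1] at this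
    exact ⟨by linarith, by nlinarith [ht.2]⟩
  refine ⟨⟨_, hcont⟩, ?_, ?_, ?_, ?_, ?_, s / (s + 1), ⟨hσ0, hσ1⟩, ?_, ?_⟩
  · intro t ht u hu e
    rw [hv t ht, hv u hu] at e
    exact mul_left_cancel₀ hs1.ne' (c2 (hmem t ht) (hmem u hu) e)
  · rw [hv 0 (by simp), mul_zero, c3 0 hs.1.le, h0]
  · rw [hv 1 (by simp), mul_one, hφ'1]
  · intro t ht
    have ht' := Ioo_subset_Icc_self ht
    rw [hv t ht']
    rcases le_total ((s + 1) * t) s with h | h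
    · rw [c3 _ h]; exact hφΩ _ ⟨mul_pos hs1 ht.1, h.trans hs.2⟩
    · have hm := hmem t ht'
      refine hseg' _ (c5 _ ⟨h, hm.2⟩) fun e => ?_
      rw [← hφ'1] at e
      have := c2 hm ⟨hs1.le, le_rfl⟩ e
      nlinarith [ht.2]
  · refine ⟨min τ s / (s + 1), ⟨div_pos (lt_min hτ.1 hs.1) hs1, ?_⟩, ?_⟩
    · rw [div_lt_one hs1]; linarith [min_le_right τ s]
    · intro t ht
      have h2 := ht.2
      rw [le_div_iff₀ hs1] at h2
      have m1 := min_le_left τ s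
      have m2 := min_le_right τ s
      have : t ≤ 1 := by nlinarith [ht.1]
      rw [hv t ⟨ht.1, this⟩, c3 _ (by linarith)]
      exact hτs _ ⟨mul_nonneg hs1.le ht.1, by linarith⟩
  · intro t ht
    rw [hv t ⟨hσ0.le.trans ht.1, ht.2⟩]
    exact c5 _ (hσm t ht)
  · refine ⟨(s + 1) * (p' - φ s), mul_ne_zero (by exact_mod_cast hs1.ne') (sub_ne_zero.2 hne), ?_⟩
    intro t ht
    rw [hv t ⟨hσ0.le.trans ht.1, ht.2⟩, c4 _ (hσm t ht)]
    push_cast; ring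

end PartD

section PartE

open Set Metric

lemma jordan_of_crosscut {γ ψ : ℝ → ℂ} {a b σ : ℝ} {d : ℂ} (hab : a < b)
    (hγ : ContinuousOn γ (Icc a b))
    (hγi : InjOn γ (Icc a b)) (hψ : ContinuousOn ψ (Icc 0 1)) (hψi : InjOn ψ (Icc 0 1))
    (h0 : ψ 0 = γ a) (h1 : ψ 1 = γ b) (hd : ∀ t ∈ Ioo (0:ℝ) 1, ψ t ∉ γ '' Icc a b)
    (hσ : σ ∈ Ioo (0:ℝ) 1) (hd0 : d ≠ 0)
    (hl : ∀ t ∈ Icc σ 1, ψ t = γ b - (1 - t : ℝ) * d) :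
    ∃ W, IsJordanDomain W ∧ frontier W = γ '' Icc a b ∪ ψ '' Icc 0 1 := by
  obtain ⟨φ, hφ, hi, himg⟩ := exists_jordan_of_arcs hab hγ hγi hψ hψi h0 h1 hd
  have hσ0 := hσ.1
  have hσ1 := hσ.2
  obtain ⟨h, hh⟩ : ∃ h, h = (1 - σ) / 4 := ⟨_, rfl⟩
  have hpos : 0 < h := by rw [hh]; linarith
  have hlt : 4 * h < 1 := by rw [hh]; linarith
  have hσh : σ = 1 - 4 * h := by rw [hh]; ring
  have ia : a ∈ Icc a b := ⟨le_rfl, hab.le⟩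
  have ib : b ∈ Icc a b := ⟨hab.le, le_rfl⟩
  let R1 := ψ '' Icc 0 (1 - 3 * h)
  let R2 := ψ '' Icc (1 - h) 1
  let Rst := (R1 ∪ γ '' Icc a b) ∪ R2
  have s1 : Icc 0 (1 - 3 * h) ⊆ Icc (0:ℝ) 1 := Icc_subset_Icc_right (by linarith)
  have s2 : Icc (1 - h) 1 ⊆ Icc (0:ℝ) 1 := Icc_subset_Icc_left (by linarith)
  have hR : IsPreconnected Rst := by
    have p1 : IsPreconnected R1 := isPreconnected_Icc.image _ (hψ.mono s1)
    have p2 : IsPreconnected R2 := isPreconnected_Icc.image _ (hψ.mono s2)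
    have p3 : IsPreconnected (γ '' Icc a b) := isPreconnected_Icc.image _ hγ
    refine IsPreconnected.union (γ b) (Or.inr ⟨b, ib, rfl⟩) ⟨1, ⟨by linarith, le_rfl⟩, h1⟩ ?_ p2
    exact IsPreconnected.union (γ a) ⟨0, ⟨le_rfl, by linarith⟩, h0⟩ ⟨a, ia, rfl⟩ p1 p3
  have hRc : IsClosed Rst := by
    refine IsClosed.union (IsClosed.union ?_ ?_) ?_
    · exact (isCompact_Icc.image_of_continuousOn (hψ.mono s1)).isClosed
    · exact (isCompact_Icc.image_of_continuousOn hγ).isClosed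
    · exact (isCompact_Icc.image_of_continuousOn (hψ.mono s2)).isClosed
  have hmid : ψ (1 - 2 * h) ∉ Rst := by
    have hm : 1 - 2 * h ∈ Icc (0:ℝ) 1 := ⟨by linarith, by linarith⟩
    rintro ((⟨t, ht, e⟩ | h') | ⟨t, ht, e⟩)
    · have := hψi (s1 ht) hm e
      linarith [ht.2]
    · exact hd _ ⟨by linarith, by linarith⟩ h'
    · have := hψi (s2 ht) hm e
      linarith [ht.1]
  have hseg : ∀ x ∈ Icc (-1:ℝ) 1, ψ (1 - 2 * h) + (x : ℂ) * (h * d) = ψ (1 - 2 * h + x * h) := by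
    intro x hx
    have b1 : -h ≤ x * h := by nlinarith [hx.1]
    have b2 : x * h ≤ h := by nlinarith [hx.2]
    rw [hl _ ⟨by linarith, by linarith⟩, hl _ ⟨by linarith, by linarith⟩]
    push_cast; ring
  have hhd : (h : ℂ) * d ≠ 0 := mul_ne_zero (by exact_mod_cast hpos.ne') hd0
  have hJ : γ '' Icc a b ∪ ψ '' Icc 0 1 =
      (fun x : ℝ => ψ (1 - 2 * h) + x * ((h : ℂ) * d)) '' Icc (-1) 1 ∪ Rst := by
    apply Subset.antisymm
    · rintro z (hz | ⟨t, ht, rfl⟩)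
      · exact Or.inr (Or.inl (Or.inr hz))
      · rcases le_total t (1 - 3 * h) with c1 | c1
        · exact Or.inr (Or.inl (Or.inl ⟨t, ⟨ht.1, c1⟩, rfl⟩))
        rcases le_total (1 - h) t with c2 | c2
        · exact Or.inr (Or.inr ⟨t, ⟨c2, ht.2⟩, rfl⟩)
        left
        have hm : (t - (1 - 2 * h)) / h ∈ Icc (-1:ℝ) 1 := by
          constructor
          · rw [le_div_iff₀ hpos]; linarith
          · rw [div_le_iff₀ hpos]; linarith
        refine ⟨_, hm, ?_⟩
        simp only
        rw [hseg _ hm, div_mul_cancel₀ _ hpos.ne']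
        congr 1; ring
    · rintro z (⟨x, hx, rfl⟩ | ((⟨t, ht, rfl⟩ | hz) | ⟨t, ht, rfl⟩))
      · right
        simp only
        rw [hseg x hx]
        have b1 : -h ≤ x * h := by nlinarith [hx.1]
        have b2 : x * h ≤ h := by nlinarith [hx.2]
        exact ⟨_, ⟨by linarith, by linarith⟩, rfl⟩
      · exact Or.inr ⟨t, s1 ht, rfl⟩
      · exact Or.inl hz
      · exact Or.inr ⟨t, s2 ht, rfl⟩
  have e1 : ψ (1 - 2 * h) + (h : ℂ) * d ∈ Rst := by
    have := hseg 1 (by norm_num)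
    rw [Complex.ofReal_one, one_mul] at this
    rw [this]
    exact Or.inr ⟨_, ⟨by linarith, by linarith⟩, rfl⟩
  have e2 : ψ (1 - 2 * h) - (h : ℂ) * d ∈ Rst := by
    have := hseg (-1) (by norm_num)
    rw [Complex.ofReal_neg, Complex.ofReal_one, neg_one_mul, ← sub_eq_add_neg] at this
    rw [this]
    exact Or.inl (Or.inl ⟨_, ⟨by linarith, by linarith⟩, rfl⟩)
  obtain ⟨z, hz, hzl⟩ := exists_no_log hhd hR hRc hmid e1 e2 hJ
  have hJc : IsCompact (γ '' Icc a b ∪ ψ '' Icc 0 1) :=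
    (isCompact_Icc.image_of_continuousOn hγ).union (isCompact_Icc.image_of_continuousOn hψ)
  obtain ⟨W, hW, hWc, hWb, hWd, hWf⟩ := exists_bounded_component hJc hz hzl
  have hWeq : frontier W = γ '' Icc a b ∪ ψ '' Icc 0 1 := by
    apply Subset.antisymm hWf
    intro p hp
    by_contra hpW
    obtain ⟨q, hq⟩ := hWc.nonempty
    exact no_proper_frontier hφ hi hW hWb (by rw [himg]; exact hWf) hq
      (by rw [himg]; exact disjoint_left.1 hWd hq) (by rw [himg]; exact hp) hpW
  exact ⟨W, ⟨hW, hWc, hWb, φ, hφ, hi, by rw [himg, hWeq]⟩, hWeq⟩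

lemma notMem_frontier_of_open {Ω : Set ℂ} (hΩ : IsOpen Ω) {x : ℂ} (hx : x ∈ Ω) :
    x ∉ frontier Ω := fun h => by
  rw [hΩ.frontier_eq] at h; exact h.2 hx

lemma subset_of_preconn {S Ω : Set ℂ} (hS : IsPreconnected S) (hΩ : IsOpen Ω) {x : ℂ}
    (hx : x ∈ S) (hxΩ : x ∈ Ω) (h : ∀ z ∈ S, z ∉ frontier Ω) : S ⊆ Ω := by
  by_contra hns
  obtain ⟨y, hy, hyΩ⟩ := not_subset.1 hns
  have hcov : ∀ z ∈ S, z ∉ Ω → z ∈ (closure Ω)ᶜ := fun z hz hzΩ hzc =>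
    h z hz (by rw [hΩ.frontier_eq]; exact ⟨hzc, hzΩ⟩)
  obtain ⟨z, -, hz1, hz2⟩ := hS Ω (closure Ω)ᶜ hΩ isClosed_closure.isOpen_compl
    (fun z hz => by by_cases h' : z ∈ Ω; exacts [Or.inl h', Or.inr (hcov z hz h')])
    ⟨x, hx, hxΩ⟩ ⟨y, hy, hcov y hy hyΩ⟩
  exact hz2 (subset_closure hz1)

/-- access data: a nearest point choice -/
def IsNearest (γ : ℝ → ℂ) (u v : ℝ) (q : ℂ) (a : ℝ) : Prop :=
  a ∈ Icc u v ∧ ∀ t ∈ Icc u v, dist q (γ a) ≤ dist q (γ t)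

lemma exists_nearest {γ : ℝ → ℂ} {u v : ℝ} (huv : u ≤ v) (hγ : ContinuousOn γ (Icc u v)) (q : ℂ) :
    ∃ a, IsNearest γ u v q a := by
  obtain ⟨a, ha, h⟩ := isCompact_Icc.exists_isMinOn (nonempty_Icc.2 huv)
    (by fun_prop : ContinuousOn (fun t => dist q (γ t)) (Icc u v))
  exact ⟨a, ha, fun t ht => h ht⟩

lemma access {Ω : Set ℂ} (hJ : IsJordanDomain Ω) {γ : ℝ → ℂ} {u v : ℝ} (huv : u < v)
    (hγ : ContinuousOn γ (Icc u v)) (hγi : InjOn γ (Icc u v))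
    (hsub : γ '' Icc u v ⊆ frontier Ω) {D : Set ℂ} (hD : Dense D) :
    ∃ q ∈ D, ∀ a, IsNearest γ u v q a →
      γ a ≠ q ∧ ∀ z ∈ segment ℝ (γ a) q, z ≠ γ a → z ∈ Ω := by
  obtain ⟨hΩ, hc, hb, φ, hφ, hi, hfr⟩ := hJ
  have hm : (u + v) / 2 ∈ Ioo u v := ⟨by linarith, by linarith⟩
  set m := (u + v) / 2
  obtain ⟨ε, hε, hloc⟩ := local_arc hφ hi hm hγ hγi (by rw [← hfr]; exact hsub)
  have hmI := Ioo_subset_Icc_self hm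
  have hmf : γ m ∈ frontier Ω := hsub ⟨m, hmI, rfl⟩
  have hmc : γ m ∈ closure Ω := frontier_subset_closure hmf
  obtain ⟨x, hx, hxΩ⟩ := mem_closure_iff.1 hmc (ball (γ m) (ε / 2)) isOpen_ball
    (mem_ball_self (by linarith))
  obtain ⟨q, ⟨hq1, hq2⟩, hqD⟩ := hD.inter_open_nonempty _ (isOpen_ball.inter hΩ) ⟨x, hx, hxΩ⟩
  refine ⟨q, hqD, fun a ha => ?_⟩
  have haf : γ a ∈ frontier Ω := hsub ⟨a, ha.1, rfl⟩
  have hne : γ a ≠ q := fun h => notMem_frontier_of_open hΩ hq2 (h ▸ haf)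
  refine ⟨hne, ?_⟩
  have hdm : dist q (γ a) ≤ dist q (γ m) := ha.2 m hmI
  have hqm : dist q (γ m) < ε / 2 := hq1
  have hballf : ∀ z ∈ ball q (dist q (γ a)), z ∉ frontier Ω := by
    intro z hz hzf
    rw [mem_ball] at hz
    have : dist z (γ m) < ε := by
      have := dist_triangle z q (γ m)
      linarith
    obtain ⟨t, ht, rfl⟩ := hloc z (by rwa [← hfr]) this
    have := ha.2 t (Ioo_subset_Icc_self ht)
    rw [dist_comm] at hz
    linarith
  have hpos : 0 < dist q (γ a) := dist_pos.2 hne.symm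
  have hballΩ : ball q (dist q (γ a)) ⊆ Ω := by
    have hpc : IsPreconnected (ball q (dist q (γ a))) := (convex_ball _ _).isPreconnected
    exact subset_of_preconn hpc hΩ (mem_ball_self hpos) hq2 hballf
  intro z hz hza
  apply hballΩ
  rw [mem_ball]
  obtain ⟨x, y, hx, hy, hxy, rfl⟩ := hz
  have hy0 : y ≠ 0 := by
    rintro rfl
    apply hza
    have : x = 1 := by linarith
    simp [this]
  have hx1 : x < 1 := by
    have := lt_of_le_of_ne hy hy0.symm
    linarith
  have : x • γ a + y • q - q = x • (γ a - q) := by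
    have : y = 1 - x := by linarith
    rw [this, smul_sub, sub_smul, one_smul]; ring
  rw [dist_eq_norm, this, norm_smul, Real.norm_of_nonneg hx, ← dist_eq_norm, dist_comm (γ a) q]
  nlinarith

end PartE

section PartF

open Set Metric

lemma countable_dense_sub {X : Type*} [TopologicalSpace X] [SecondCountableTopology X]
    (S : Set X) : ∃ D ⊆ S, D.Countable ∧ ∀ O : Set X, IsOpen O → (O ∩ S).Nonempty →
      (O ∩ D).Nonempty := by
  obtain ⟨D, hDc, hD⟩ := TopologicalSpace.exists_countable_dense S
  refine ⟨Subtype.val '' D, by rintro _ ⟨x, _, rfl⟩; exact x.2, hDc.image _, ?_⟩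
  rintro O hO ⟨x, hxO, hxS⟩
  obtain ⟨y, hy, hyO⟩ := hD.exists_mem_open (hO.preimage continuous_subtype_val)
    ⟨⟨x, hxS⟩, hxO⟩
  exact ⟨y, hyO, y, hy, rfl⟩

def crossFam (γ : ℝ → ℂ) (a b : ℝ) (q q' : ℂ) (τ : ℝ) : Set C(ℝ, ℂ) :=
  {ψ | ψ 0 = γ a ∧ ψ 1 = γ b ∧ (∀ t ∈ Icc 0 τ, ψ t ∈ segment ℝ (γ a) q) ∧
    (∀ t ∈ Icc (1 - τ) 1, ψ t ∈ segment ℝ (γ b) q') ∧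
    ∃ W, IsJordanDomain W ∧ frontier W = γ '' Icc a b ∪ ψ '' Icc 0 1}

theorem countable_family {γ : ℝ → ℂ} {t0 δ : ℝ} (hδ : 0 < δ)
    (hγ : ContinuousOn γ (Icc (t0 - δ) (t0 + δ))) (hγi : InjOn γ (Icc (t0 - δ) (t0 + δ))) :
    ∃ 𝒯 : Set (Set ℂ × ℝ × ℝ), 𝒯.Countable ∧
      (∀ T ∈ 𝒯, IsJordanDomain T.1 ∧ t0 - δ ≤ T.2.1 ∧ T.2.1 < t0 ∧ t0 < T.2.2 ∧
        T.2.2 ≤ t0 + δ ∧ γ '' Icc T.2.1 T.2.2 ⊆ frontier T.1) ∧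
      ∀ Ω t1 t2, IsJordanDomain Ω → t1 < t0 → t0 < t2 → γ '' Icc t1 t2 ⊆ frontier Ω →
        ∃ T ∈ 𝒯, T.1 ⊆ Ω ∧ t1 < T.2.1 ∧ T.2.2 < t2 ∧ closure T.1 ⊆ Ω ∪ γ '' Ioo t1 t2 := by
  classical
  let dn := TopologicalSpace.denseSeq ℂ
  let Nr : ℝ → ℝ → ℂ → ℝ := fun u v q =>
    if h : ∃ a, IsNearest γ u v q a then h.choose else 0
  have hNr : ∀ u v q, (∃ a, IsNearest γ u v q a) → IsNearest γ u v q (Nr u v q) := by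
    intro u v q h
    simp only [Nr, dif_pos h]
    exact h.choose_spec
  let ι := (ℚ × ℚ × ℕ) × (ℚ × ℚ × ℕ) × ℚ
  let A : ι → ℝ := fun i => Nr i.1.1 i.1.2.1 (dn i.1.2.2)
  let B : ι → ℝ := fun i => Nr i.2.1.1 i.2.1.2.1 (dn i.2.1.2.2)
  let Fam : ι → Set C(ℝ, ℂ) := fun i =>
    crossFam γ (A i) (B i) (dn i.1.2.2) (dn i.2.1.2.2) i.2.2
  choose D hDsub hDc hDd using fun i => countable_dense_sub (Fam i)
  have hW : ∀ i ψ, ∃ W, ψ ∈ Fam i → IsJordanDomain W ∧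
      frontier W = γ '' Icc (A i) (B i) ∪ ψ '' Icc 0 1 := by
    intro i ψ
    by_cases h : ψ ∈ Fam i
    · obtain ⟨W, hW⟩ := h.2.2.2.2
      exact ⟨W, fun _ => hW⟩
    · exact ⟨∅, fun h' => absurd h' h⟩
  choose Wf hWf using hW
  refine ⟨{T | ∃ i, ∃ ψ ∈ D i, T = (Wf i ψ, A i, B i) ∧ t0 - δ ≤ A i ∧ A i < t0 ∧ t0 < B i ∧
    B i ≤ t0 + δ}, ?_, ?_, ?_⟩
  · refine Countable.mono ?_ (countable_iUnion fun i =>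
      (hDc i).image (fun ψ => (Wf i ψ, A i, B i)))
    rintro T ⟨i, ψ, hψ, rfl, -⟩
    exact mem_iUnion.2 ⟨i, ψ, hψ, rfl⟩
  · rintro T ⟨i, ψ, hψ, rfl, h1, h2, h3, h4⟩
    obtain ⟨hj, hf⟩ := hWf i ψ (hDsub i hψ)
    exact ⟨hj, h1, h2, h3, h4, by simp only; rw [hf]; exact subset_union_left⟩
  · intro Ω t1 t2 hJ ht1 ht2 hsub
    have hα : max t1 (t0 - δ) < t0 := max_lt ht1 (by linarith)
    have hβ : t0 < min t2 (t0 + δ) := lt_min ht2 (by linarith)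
    obtain ⟨α, hαe⟩ : ∃ α, α = max t1 (t0 - δ) := ⟨_, rfl⟩
    obtain ⟨β, hβe⟩ : ∃ β, β = min t2 (t0 + δ) := ⟨_, rfl⟩
    have α1 : t1 ≤ α := hαe ▸ le_max_left _ _
    have α2 : t0 - δ ≤ α := hαe ▸ le_max_right _ _
    have β1 : β ≤ t2 := hβe ▸ min_le_left _ _
    have β2 : β ≤ t0 + δ := hβe ▸ min_le_right _ _
    rw [← hαe] at hα
    rw [← hβe] at hβ
    obtain ⟨u, hu1, hu2⟩ := exists_rat_btwn hα
    obtain ⟨v, hv1, hv2⟩ := exists_rat_btwn hu2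
    obtain ⟨u', hu1', hu2'⟩ := exists_rat_btwn hβ
    obtain ⟨v', hv1', hv2'⟩ := exists_rat_btwn hu2'
    have mono1 : ∀ {x y : ℝ}, α ≤ x → y ≤ β → Icc x y ⊆ Icc (t0 - δ) (t0 + δ) := fun hx hy =>
      Icc_subset_Icc (by linarith) (by linarith)
    have mono2 : ∀ {x y : ℝ}, α ≤ x → y ≤ β → γ '' Icc x y ⊆ frontier Ω := fun hx hy =>
      (image_mono (Icc_subset_Icc (by linarith) (by linarith))).trans hsub
    have m1 := mono1 (x := u) (y := v) (by linarith) (by linarith)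
    have m2 := mono1 (x := u') (y := v') (by linarith) (by linarith)
    obtain ⟨_, ⟨n, rfl⟩, hn⟩ := access hJ hv1 (hγ.mono m1) (hγi.mono m1)
      (mono2 (by linarith) (by linarith)) (TopologicalSpace.denseRange_denseSeq ℂ)
    obtain ⟨_, ⟨n', rfl⟩, hn'⟩ := access hJ hv1' (hγ.mono m2) (hγi.mono m2)
      (mono2 (by linarith) (by linarith)) (TopologicalSpace.denseRange_denseSeq ℂ)
    have hNa := hNr u v (dn n) (exists_nearest hv1.le (hγ.mono m1) _)
    have hNb := hNr u' v' (dn n') (exists_nearest hv1'.le (hγ.mono m2) _)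
    obtain ⟨hna, hsa⟩ := hn _ hNa
    obtain ⟨hnb, hsb⟩ := hn' _ hNb
    obtain ⟨a, ha⟩ : ∃ a, a = Nr u v (dn n) := ⟨_, rfl⟩
    obtain ⟨b, hb⟩ : ∃ b, b = Nr u' v' (dn n') := ⟨_, rfl⟩
    rw [← ha] at hNa hna hsa
    rw [← hb] at hNb hnb hsb
    have ha1 := hNa.1.1
    have ha2 := hNa.1.2
    have hb1 := hNb.1.1
    have hb2 := hNb.1.2
    have hab : a < b := by linarith
    have mab := mono1 (x := a) (y := b) (by linarith) (by linarith)
    have fab := mono2 (x := a) (y := b) (by linarith) (by linarith)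
    obtain ⟨hΩ, hc, hbd, φ, hφ, hi, hfr⟩ := id hJ
    have iA : a ∈ Icc a b := ⟨le_rfl, hab.le⟩
    have iB : b ∈ Icc a b := ⟨hab.le, le_rfl⟩
    have hdis : ∀ x ∈ Ω, x ∉ frontier Ω := fun x hx => notMem_frontier_of_open hΩ hx
    have hneab : γ a ≠ γ b := fun h => hab.ne (hγi (mab iA) (mab iB) h)
    obtain ⟨ψ, p1, p2, p3, p4, ⟨τ0, hτ0, p5⟩, σ, hσ, p6, d, hd, p7⟩ :=
      exists_crosscut hΩ hc (fun h => hdis _ h (fab ⟨a, iA, rfl⟩)) hna hsa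
        (fun h => hdis _ h (fab ⟨b, iB, rfl⟩)) hnb hsb hneab
    obtain ⟨τ, hτ1, hτ2⟩ := exists_rat_btwn (lt_min hτ0.1 (sub_pos.2 hσ.2) : 0 < min τ0 (1 - σ))
    have q1 := min_le_left τ0 (1 - σ)
    have q2 := min_le_right τ0 (1 - σ)
    obtain ⟨i, hi'⟩ : ∃ i : ι, i = ((u, v, n), (u', v', n'), τ) := ⟨_, rfl⟩
    have hAi : A i = a := by rw [ha, hi']
    have hBi : B i = b := by rw [hb, hi']
    have hFam : Fam i = crossFam γ a b (dn n) (dn n') τ := by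
      simp only [Fam]; rw [hAi, hBi, hi']
    have hψ : ψ ∈ Fam i := by
      rw [hFam]
      refine ⟨p2, p3, fun t ht => p5 t ⟨ht.1, by linarith [ht.2]⟩,
        fun t ht => p6 t ⟨by linarith [ht.1], ht.2⟩, ?_⟩
      exact jordan_of_crosscut hab (hγ.mono mab) (hγi.mono mab) ψ.continuous.continuousOn p1 p2 p3
        (fun t ht h => hdis _ (p4 t ht) (fab h)) hσ hd p7
    obtain ⟨ψ', hψ'O, hψ'D⟩ := hDd i {f : C(ℝ, ℂ) | MapsTo f (Icc (τ:ℝ) (1 - τ)) Ω}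
      (ContinuousMap.isOpen_setOfPred_mapsTo isCompact_Icc hΩ)
      ⟨ψ, fun t ht => p4 t ⟨by linarith [ht.1], by linarith [ht.2]⟩, hψ⟩
    have hψ' := hDsub i hψ'D
    obtain ⟨hWJ, hWfr⟩ := hWf i ψ' hψ'
    rw [hAi, hBi] at hWfr
    rw [hFam] at hψ'
    obtain ⟨r1, r2, r3, r4, -⟩ := hψ'
    have hP : ψ' '' Icc 0 1 ⊆ Ω ∪ γ '' Icc a b := by
      rintro _ ⟨t, ht, rfl⟩
      rcases le_total t τ with h | h
      · by_cases e : ψ' t = γ a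
        · exact Or.inr ⟨a, iA, e.symm⟩
        · exact Or.inl (hsa _ (r3 t ⟨ht.1, h⟩) e)
      rcases le_total (1 - (τ:ℝ)) t with h' | h'
      · by_cases e : ψ' t = γ b
        · exact Or.inr ⟨b, iB, e.symm⟩
        · exact Or.inl (hsb _ (r4 t ⟨h', ht.2⟩) e)
      exact Or.inl (hψ'O ⟨h, h'⟩)
    have hmid : (α + u) / 2 ∈ Icc (t0 - δ) (t0 + δ) := ⟨by linarith, by linarith⟩
    have hWΩ : Wf i ψ' ⊆ Ω := by
      refine subset_of_crosscut hφ hi hΩ hc.nonempty hbd hfr fab (p := γ ((α + u) / 2))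
        (mono2 le_rfl le_rfl ⟨_, ⟨by linarith, by linarith⟩, rfl⟩) ?_ hP hWJ.1 hWJ.2.1 hWJ.2.2.1 hWfr
      rintro ⟨t, ht, e⟩
      have := hγi (mab ht) hmid e
      linarith [ht.1]
    refine ⟨(Wf i ψ', a, b), ⟨i, ψ', hψ'D, by rw [hAi, hBi], by linarith, by linarith,
      by linarith, by linarith⟩, hWΩ, by simp only; linarith, by simp only; linarith, ?_⟩
    simp only
    rw [closure_eq_self_union_frontier, hWfr]
    have hs : γ '' Icc a b ⊆ γ '' Ioo t1 t2 := image_mono fun t ht =>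
      ⟨by linarith [ht.1], by linarith [ht.2]⟩
    rintro x (h | h | h)
    · exact Or.inl (hWΩ h)
    · exact Or.inr (hs h)
    · rcases hP h with h | h
      · exact Or.inl h
      · exact Or.inr (hs h)

end PartF

section PartG

open Set Metric Filter Topology

lemma two_const {V : Set ℂ} (hVb : Bornology.IsBounded V) {G : ℂ → ℂ}
    (hG : DiffContOnCl ℂ G V) {c : ℂ} (hc : c ∉ closure V) {d S s δ M : ℝ} (hd : 0 < d)
    (hS : 0 < S) (hδ : 0 ≤ δ) (hM : 0 ≤ M)
    (hfr : ∀ z ∈ frontier V, (‖G z‖ ≤ δ ∧ d ≤ ‖z - c‖) ∨ (‖G z‖ ≤ M ∧ S ≤ ‖z - c‖))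
    {z : ℂ} (hz : z ∈ closure V) (hzs : ‖z - c‖ ≤ s) (n : ℕ) :
    ‖G z‖ ≤ max (δ * (s / d) ^ n) (M * (s / S) ^ n) := by
  have hne : ∀ w ∈ closure V, (w - c) ^ n ≠ 0 := fun w hw =>
    pow_ne_zero _ (sub_ne_zero.2 fun h => hc (h ▸ hw))
  have hH : DiffContOnCl ℂ (fun w => G w / (w - c) ^ n) V := by
    constructor
    · refine hG.differentiableOn.div (by fun_prop) fun w hw => hne w (subset_closure hw)
    · exact hG.continuousOn.div (by fun_prop) hne
  have key := Complex.norm_le_of_forall_mem_frontier_norm_le hVb hH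
    (C := max (δ / d ^ n) (M / S ^ n)) (by
      intro w hw
      rw [norm_div, norm_pow]
      rcases hfr w hw with ⟨h1, h2⟩ | ⟨h1, h2⟩
      · exact le_max_of_le_left (by gcongr)
      · exact le_max_of_le_right (by gcongr)) hz
  have hs : 0 ≤ s := (norm_nonneg _).trans hzs
  have hpos : 0 < ‖z - c‖ ^ n := by
    rw [← norm_pow]; exact norm_pos_iff.2 (hne z hz)
  rw [norm_div, norm_pow, div_le_iff₀ hpos] at key
  refine key.trans ?_
  have e : max (δ * (s / d) ^ n) (M * (s / S) ^ n) = max (δ / d ^ n) (M / S ^ n) * s ^ n := by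
    rw [max_mul_of_nonneg _ _ (pow_nonneg hs n), div_pow, div_pow]
    congr 1 <;> ring
  rw [e]
  have : 0 ≤ max (δ / d ^ n) (M / S ^ n) := le_max_of_le_left (by positivity)
  gcongr

lemma choose_delta {d S s M ε : ℝ} (hd : 0 < d) (hs : 0 < s) (hsS : s < S) (hε : 0 < ε) :
    ∃ δ > 0, ∃ n : ℕ, δ * (s / d) ^ n ≤ ε ∧ M * (s / S) ^ n ≤ ε := by
  have hS : 0 < S := hs.trans hsS
  have h1 : s / S < 1 := (div_lt_one hS).2 hsS
  have ht : Tendsto (fun n : ℕ => M * (s / S) ^ n) atTop (𝓝 (M * 0)) :=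
    (tendsto_pow_atTop_nhds_zero_of_lt_one (by positivity) h1).const_mul M
  rw [mul_zero] at ht
  obtain ⟨n, hn⟩ := (ht.eventually (gt_mem_nhds hε)).exists
  have hp : 0 < (s / d) ^ n := by positivity
  exact ⟨ε / (s / d) ^ n, by positivity, n, by rw [div_mul_cancel₀ _ hp.ne'], hn.le⟩

def HolBd (W S : Set ℂ) (M : ℝ) (G : ℂ → ℂ) : Prop :=
  ContinuousOn G (W ∪ S) ∧ DifferentiableOn ℂ G W ∧ ∀ z ∈ W, ‖G z‖ ≤ M

def SmallAt (W S : Set ℂ) (z : ℂ) : Prop :=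
  ∃ r > 0, ∀ M ε : ℝ, 0 ≤ M → 0 < ε → ∃ δ > 0, ∀ G, HolBd W S M G → (∀ w ∈ S, ‖G w‖ ≤ δ) →
    ∀ w ∈ W ∩ ball z r, ‖G w‖ ≤ ε

lemma smallAt_arc {W : Set ℂ} (hJ : IsJordanDomain W) {γ : ℝ → ℂ} {a b m : ℝ}
    (hm : m ∈ Ioo a b) (hγ : ContinuousOn γ (Icc a b)) (hγi : InjOn γ (Icc a b))
    (hsub : γ '' Icc a b ⊆ frontier W) : SmallAt W (γ '' Ioo a b) (γ m) := by
  obtain ⟨hW, hc, hb, φ, hφ, hi, hfr⟩ := hJ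
  obtain ⟨ρ, hρ, hloc⟩ := local_arc hφ hi hm hγ hγi (by rw [← hfr]; exact hsub)
  rw [← hfr] at hloc
  have hmf : γ m ∈ frontier W := hsub ⟨m, Ioo_subset_Icc_self hm, rfl⟩
  obtain ⟨R, hRe⟩ : ∃ R, R = ρ / 2 := ⟨_, rfl⟩
  have hR : 0 < R := by rw [hRe]; linarith
  obtain ⟨c', hc'b, hc'W⟩ := exists_exterior hφ hi hW hc.nonempty hb hfr hmf
    (show 0 < R / 4 by linarith)
  rw [mem_ball, dist_eq_norm] at hc'b
  have hd : 0 < infDist c' (closure W) :=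
    (isClosed_closure.notMem_iff_infDist_pos hc.nonempty.closure).1 hc'W
  refine ⟨R / 4, by linarith, fun M ε hM hε => ?_⟩
  obtain ⟨δ, hδ, n, hn1, hn2⟩ := choose_delta (M := M) hd (show 0 < R / 2 by linarith)
    (show R / 2 < 3 * R / 4 by linarith) hε
  refine ⟨δ, hδ, fun G hG hGδ w hw => ?_⟩
  have hclV : closure (W ∩ ball (γ m) R) ⊆ closure W ∩ closedBall (γ m) R :=
    (closure_inter_subset_inter_closure _ _).trans
      (inter_subset_inter_right _ closure_ball_subset_closedBall)
  have harc : ∀ z ∈ closure W, z ∈ closedBall (γ m) R → z ∉ W → z ∈ γ '' Ioo a b := by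
    intro z hz hz' hzW
    refine hloc z (by rw [hW.frontier_eq]; exact ⟨hz, hzW⟩) ?_
    rw [mem_closedBall] at hz'
    linarith
  have hdc : DiffContOnCl ℂ G (W ∩ ball (γ m) R) := by
    refine ⟨hG.2.1.mono inter_subset_left, hG.1.mono fun z hz => ?_⟩
    by_cases h : z ∈ W
    · exact Or.inl h
    · exact Or.inr (harc z (hclV hz).1 (hclV hz).2 h)
  have hmain := two_const (hb.subset inter_subset_left) hdc (fun h => hc'W (hclV h).1) hd
    (show 0 < 3 * R / 4 by linarith) hδ.le hM (by
      intro z hz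
      have hz' := hclV (frontier_subset_closure hz)
      have hdz : infDist c' (closure W) ≤ ‖z - c'‖ := by
        rw [← dist_eq_norm, dist_comm]; exact infDist_le_dist_of_mem hz'.1
      by_cases h : z ∈ W
      · right
        refine ⟨hG.2.2 z h, ?_⟩
        have hnb : z ∉ ball (γ m) R := by
          intro h'
          exact notMem_frontier_of_open (hW.inter isOpen_ball) ⟨h, h'⟩ hz
        rw [mem_ball, dist_eq_norm, not_lt] at hnb
        have : ‖z - γ m‖ ≤ ‖z - c'‖ + ‖c' - γ m‖ := norm_sub_le_norm_sub_add_norm_sub _ _ _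
        linarith
      · exact Or.inl ⟨hGδ z (harc z hz'.1 hz'.2 h), hdz⟩)
    (z := w) (subset_closure ⟨hw.1, ball_subset_ball (by linarith) hw.2⟩) (s := R / 2) (by
      have h2 := hw.2
      rw [mem_ball, dist_eq_norm] at h2
      have : ‖w - c'‖ ≤ ‖w - γ m‖ + ‖γ m - c'‖ := norm_sub_le_norm_sub_add_norm_sub _ _ _
      rw [norm_sub_rev (γ m) c'] at this
      linarith) n
  exact hmain.trans (max_le hn1 hn2)

lemma smallAt_step {W S : Set ℂ} {y z : ℂ} {R : ℝ} (hR : 0 < R)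
    (hsub : closedBall y R ⊆ W) (hy : SmallAt W S y) (hz : dist z y < R / 4) : SmallAt W S z := by
  obtain ⟨r0, hr0, h⟩ := hy
  obtain ⟨r, hr, hrR, hrr⟩ : ∃ r > 0, r < R / 4 ∧ r < r0 :=
    ⟨min (R / 4) r0 / 2, by positivity, by linarith [min_le_left (R / 4) r0, lt_min (show 0 < R/4 by positivity) hr0],
      by linarith [min_le_right (R / 4) r0, lt_min (show 0 < R/4 by positivity) hr0]⟩
  refine ⟨R / 4, by linarith, fun M ε hM hε => ?_⟩
  obtain ⟨δ', hδ', n, hn1, hn2⟩ := choose_delta (M := M) hr (show 0 < R / 2 by linarith)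
    (show R / 2 < R by linarith) hε
  obtain ⟨δ, hδ, hs⟩ := h M (min δ' ε) hM (lt_min hδ' hε)
  refine ⟨δ, hδ, fun G hG hGδ w hw => ?_⟩
  have hsm := hs G hG hGδ
  by_cases hwr : dist w y < r0
  · exact (hsm w ⟨hw.1, hwr⟩).trans (min_le_right _ _)
  rw [not_lt] at hwr
  have hwy : dist w y < R / 2 := by
    have h2 := hw.2
    rw [mem_ball] at h2
    have := dist_triangle w z y
    linarith
  have hVc : closure (ball y R \ closedBall y r) ⊆ closedBall y R ∩ {x | r ≤ dist x y} := by
    apply closure_minimal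
    · intro x hx
      have h2 := hx.2
      rw [mem_closedBall, not_le] at h2
      exact ⟨ball_subset_closedBall hx.1, h2.le⟩
    · exact isClosed_closedBall.inter (isClosed_le continuous_const (by fun_prop))
  have hVo : IsOpen (ball y R \ closedBall y r) := isOpen_ball.sdiff isClosed_closedBall
  have hmain := two_const (V := ball y R \ closedBall y r) (G := G) (c := y)
    (isBounded_ball.subset sdiff_subset)
    ⟨hG.2.1.mono (sdiff_subset.trans (ball_subset_closedBall.trans hsub)),
      hG.1.mono (hVc.trans (inter_subset_left.trans (hsub.trans subset_union_left)))⟩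
    (fun h' => by have := (hVc h').2; simp only [mem_ofPred_eq, dist_self] at this; linarith)
    hr hR hδ'.le hM (by
      intro x hx
      have hx' := hVc (frontier_subset_closure hx)
      have hxr : r ≤ dist x y := hx'.2
      have hxn := fun h' => notMem_frontier_of_open hVo (x := x) h' hx
      by_cases h1 : dist x y ≤ r
      · left
        refine ⟨(hsm x ⟨hsub hx'.1, by rw [mem_ball]; linarith⟩).trans (min_le_left _ _), ?_⟩
        rw [← dist_eq_norm]; exact hxr
      · right
        refine ⟨hG.2.2 x (hsub hx'.1), ?_⟩
        rw [← dist_eq_norm]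
        by_contra h2
        exact hxn ⟨not_le.1 h2, h1⟩)
    (z := w) (subset_closure ⟨by rw [mem_ball]; linarith, by rw [mem_closedBall]; linarith⟩)
    (s := R / 2) (by rw [← dist_eq_norm]; exact hwy.le) n
  exact hmain.trans (max_le hn1 hn2)

lemma smallAt_all {W : Set ℂ} (hJ : IsJordanDomain W) {γ : ℝ → ℂ} {a b : ℝ} (hab : a < b)
    (hγ : ContinuousOn γ (Icc a b)) (hγi : InjOn γ (Icc a b))
    (hsub : γ '' Icc a b ⊆ frontier W) :
    ∀ z ∈ W ∪ γ '' Ioo a b, SmallAt W (γ '' Ioo a b) z := by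
  have harc : ∀ m ∈ Ioo a b, SmallAt W (γ '' Ioo a b) (γ m) := fun m hm =>
    smallAt_arc hJ hm hγ hγi hsub
  have hop : ∀ z, SmallAt W (γ '' Ioo a b) z → ∃ r > 0, ∀ y, dist y z < r →
      SmallAt W (γ '' Ioo a b) y := by
    rintro z ⟨r, hr, h⟩
    refine ⟨r / 2, by linarith, fun y hy => ⟨r / 2, by linarith, fun M ε hM hε => ?_⟩⟩
    obtain ⟨δ, hδ, hs⟩ := h M ε hM hε
    refine ⟨δ, hδ, fun G h1 h2 w hw => hs G h1 h2 w ⟨hw.1, ?_⟩⟩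
    have h3 := hw.2
    rw [mem_ball] at h3 ⊢
    have := dist_triangle w y z
    linarith
  rintro z (hz | ⟨m, hm, rfl⟩)
  swap
  · exact harc m hm
  obtain ⟨hW, hc, hb, -⟩ := hJ
  have hU : IsOpen {x | x ∈ W ∧ SmallAt W (γ '' Ioo a b) x} := by
    rw [Metric.isOpen_iff]
    rintro x ⟨hx, hs⟩
    obtain ⟨r, hr, h⟩ := hop x hs
    obtain ⟨r', hr', h'⟩ := Metric.isOpen_iff.1 hW x hx
    exact ⟨min r r', lt_min hr hr', fun y hy => ⟨h' (ball_subset_ball (min_le_right _ _) hy),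
      h y (ball_subset_ball (min_le_left _ _) hy)⟩⟩
  have hV : IsOpen {x | x ∈ W ∧ ¬ SmallAt W (γ '' Ioo a b) x} := by
    rw [Metric.isOpen_iff]
    rintro x ⟨hx, hs⟩
    obtain ⟨R, hR, h'⟩ := Metric.isOpen_iff.1 hW x hx
    refine ⟨R / 8, by linarith, fun y hy => ⟨h' (ball_subset_ball (by linarith) hy), fun hy' => ?_⟩⟩
    rw [mem_ball] at hy
    refine hs (smallAt_step (R := R / 2) (by linarith) ?_ hy' (by rw [dist_comm]; linarith))
    intro w hw
    apply h'
    rw [mem_closedBall] at hw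
    rw [mem_ball]
    have := dist_triangle w y x
    linarith
  by_contra hcon
  have hm : (a + b) / 2 ∈ Ioo a b := ⟨by linarith, by linarith⟩
  obtain ⟨r, hr, h⟩ := hop _ (harc _ hm)
  have hcl : γ ((a + b) / 2) ∈ closure W :=
    frontier_subset_closure (hsub ⟨_, Ioo_subset_Icc_self hm, rfl⟩)
  obtain ⟨q, hq1, hq2⟩ := Metric.mem_closure_iff.1 hcl r hr
  obtain ⟨x, -, hx1, hx2⟩ := hc.isPreconnected _ _ hU hV
    (fun x hx => by
      by_cases h : SmallAt W (γ '' Ioo a b) x; exacts [Or.inl ⟨hx, h⟩, Or.inr ⟨hx, h⟩])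
    ⟨q, hq1, hq1, h q (by rw [dist_comm]; exact hq2)⟩ ⟨z, hz, hz, hcon⟩
  exact hx2.2 hx1.2

end PartG

section PartH

open Set Metric Filter Topology

lemma hol_unique {W : Set ℂ} (hJ : IsJordanDomain W) {γ : ℝ → ℂ} {a b a' b' M : ℝ}
    (hab' : a' < b') (ha : a ≤ a') (hb : b' ≤ b)
    (hγ : ContinuousOn γ (Icc a b)) (hγi : InjOn γ (Icc a b))
    (hsub : γ '' Icc a b ⊆ frontier W) {G : ℂ → ℂ} (hM : 0 ≤ M)
    (hG : HolBd W (γ '' Ioo a b) M G)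
    (h0 : ∀ t ∈ Ioo a' b', G (γ t) = 0) : ∀ t ∈ Ioo a b, G (γ t) = 0 := by
  have hs : Icc a' b' ⊆ Icc a b := Icc_subset_Icc ha hb
  have hall := smallAt_all hJ hab' (hγ.mono hs) (hγi.mono hs) ((image_mono hs).trans hsub)
  have hG' : HolBd W (γ '' Ioo a' b') M G :=
    ⟨hG.1.mono (union_subset_union_right _ (image_mono (Ioo_subset_Ioo ha hb))), hG.2.1, hG.2.2⟩
  have hz : ∀ z ∈ W, G z = 0 := by
    intro z hz
    obtain ⟨r, hr, h⟩ := hall z (Or.inl hz)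
    have : ‖G z‖ ≤ 0 := by
      apply le_of_forall_pos_le_add
      intro ε hε
      obtain ⟨δ, hδ, h'⟩ := h M ε hM hε
      have := h' G hG' (by rintro _ ⟨t, ht, rfl⟩; rw [h0 t ht, norm_zero]; exact hδ.le) z
        ⟨hz, mem_ball_self hr⟩
      linarith
    exact norm_le_zero_iff.1 this
  intro t ht
  have hcl : γ t ∈ closure W :=
    frontier_subset_closure (hsub ⟨t, Ioo_subset_Icc_self ht, rfl⟩)
  have hcw : ContinuousWithinAt G W (γ t) :=
    (hG.1 (γ t) (Or.inr ⟨t, ht, rfl⟩)).mono subset_union_left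
  have := hcw.mem_closure_image hcl
  have hsing : G '' W ⊆ {0} := by rintro _ ⟨z, hz', rfl⟩; exact hz z hz'
  exact closure_minimal hsing isClosed_singleton this

lemma ext_closed {W : Set ℂ} (hJ : IsJordanDomain W) {γ : ℝ → ℂ} {a b M : ℝ}
    (hab : a < b) (hγ : ContinuousOn γ (Icc a b)) (hγi : InjOn γ (Icc a b))
    (hsub : γ '' Icc a b ⊆ frontier W) (hM : 0 ≤ M) {f : ℂ → ℂ}
    (h : ∀ η > 0, ∃ G, HolBd W (γ '' Ioo a b) M G ∧ ∀ w ∈ γ '' Ioo a b, ‖G w - f w‖ ≤ η) :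
    ∃ F, HolBd W (γ '' Ioo a b) M F ∧ ∀ w ∈ γ '' Ioo a b, F w = f w := by
  set S := γ '' Ioo a b with hS
  have hall := smallAt_all hJ hab hγ hγi hsub
  rw [← hS] at hall
  choose G hG hGf using fun n : ℕ => h (1 / ((n : ℝ) + 1)) (by positivity)
  have hη : Tendsto (fun n : ℕ => 1 / ((n : ℝ) + 1)) atTop (𝓝 0) :=
    tendsto_one_div_add_atTop_nhds_zero_nat
  have hdiff : ∀ m n, HolBd W S (M + M) (fun z => G m z - G n z) := fun m n =>
    ⟨(hG m).1.sub (hG n).1, (hG m).2.1.sub (hG n).2.1, fun z hz =>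
      (norm_sub_le _ _).trans (add_le_add ((hG m).2.2 z hz) ((hG n).2.2 z hz))⟩
  have hcauchy : ∀ z ∈ W ∪ S, ∃ r > 0, UniformCauchySeqOn G atTop ((W ∪ S) ∩ ball z r) := by
    intro z hz
    obtain ⟨r, hr, hsm⟩ := hall z hz
    refine ⟨r, hr, Metric.uniformCauchySeqOn_iff.2 fun ε hε => ?_⟩
    obtain ⟨δ, hδ, hd⟩ := hsm (M + M) (ε / 2) (by linarith) (by linarith)
    have hmin : 0 < min δ (ε / 2) / 2 := by positivity
    obtain ⟨N, hN⟩ := (hη.eventually (gt_mem_nhds hmin)).exists_forall_of_atTop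
    have hSb : ∀ m ≥ N, ∀ n ≥ N, ∀ w ∈ S, ‖G m w - G n w‖ ≤ min δ (ε / 2) := by
      intro m hm n hn w hw
      have e : G m w - G n w = (G m w - f w) - (G n w - f w) := by ring
      rw [e]
      refine (norm_sub_le _ _).trans ?_
      have := hGf m w hw
      have := hGf n w hw
      have := hN m hm
      have := hN n hn
      linarith
    refine ⟨N, fun m hm n hn w hw => ?_⟩
    rw [dist_eq_norm]
    have : ‖G m w - G n w‖ ≤ ε / 2 := by
      rcases hw.1 with hwW | hwS
      · exact hd _ (hdiff m n) (fun w hw => (hSb m hm n hn w hw).trans (min_le_left _ _)) w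
          ⟨hwW, hw.2⟩
      · exact (hSb m hm n hn w hwS).trans (min_le_right _ _)
    linarith
  have hlim : ∀ z, ∃ l, z ∈ W ∪ S → Tendsto (fun n => G n z) atTop (𝓝 l) := by
    intro z
    by_cases hz : z ∈ W ∪ S
    · obtain ⟨r, hr, hc⟩ := hcauchy z hz
      obtain ⟨l, hl⟩ := cauchySeq_tendsto_of_complete (hc.cauchySeq ⟨hz, mem_ball_self hr⟩)
      exact ⟨l, fun _ => hl⟩
    · exact ⟨0, fun h => absurd h hz⟩
  choose F hF using hlim
  have hloc : TendstoLocallyUniformlyOn G F atTop (W ∪ S) := by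
    intro u hu z hz
    obtain ⟨r, hr, hc⟩ := hcauchy z hz
    have := hc.tendstoUniformlyOn_of_tendsto fun w hw => hF w hw.1
    exact ⟨(W ∪ S) ∩ ball z r, inter_mem self_mem_nhdsWithin
      (mem_nhdsWithin_of_mem_nhds (ball_mem_nhds z hr)), this u hu⟩
  refine ⟨F, ⟨hloc.continuousOn (Frequently.of_forall fun n => (hG n).1),
    (hloc.mono subset_union_left).differentiableOn (Eventually.of_forall fun n => (hG n).2.1) hJ.1,
    fun z hz => ?_⟩, fun w hw => ?_⟩
  · exact le_of_tendsto (hF z (Or.inl hz)).norm (Eventually.of_forall fun n => (hG n).2.2 z hz)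
  · refine tendsto_nhds_unique (hF w (Or.inr hw)) ?_
    rw [tendsto_iff_norm_sub_tendsto_zero]
    exact squeeze_zero (fun n => norm_nonneg _) (fun n => hGf n w hw) hη

end PartH

section PartI

open Set Metric Filter Topology

def ExtOn (γ : ℝ → ℂ) (T : Set ℂ × ℝ × ℝ) (M : ℝ) (f : ℂ → ℂ) : Prop :=
  ∃ F, HolBd T.1 (γ '' Ioo T.2.1 T.2.2) M F ∧ ∀ w ∈ γ '' Ioo T.2.1 T.2.2, F w = f w

lemma exists_bump (k : ℕ∞) (c : ℂ) : ∃ f0 : ℂ → ℂ, ContDiff ℝ k f0 ∧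
    ∀ z, z ≠ c → (f0 z ≠ 0 ↔ 0 < Real.sin (1 / ‖z - c‖)) := by
  have hco : ContinuousOn (fun z : ℂ => Real.sin (1 / ‖z - c‖)) {c}ᶜ := by
    intro z hz
    have : ‖z - c‖ ≠ 0 := norm_ne_zero_iff.2 (sub_ne_zero.2 hz)
    apply ContinuousAt.continuousWithinAt
    fun_prop (disch := assumption)
  have ho : IsOpen ({c}ᶜ ∩ (fun z : ℂ => Real.sin (1 / ‖z - c‖)) ⁻¹' Ioi 0) :=
    hco.isOpen_inter_preimage isOpen_compl_singleton isOpen_Ioi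
  obtain ⟨g, hg1, hg2, -⟩ := ho.exists_contDiff_support_eq (n := k)
  refine ⟨fun z => (g z : ℂ), Complex.ofRealCLM.contDiff.comp hg2, fun z hz => ?_⟩
  rw [Complex.ofReal_ne_zero, ← Function.mem_support, hg1]
  exact ⟨fun h => h.2, fun h => ⟨hz, h⟩⟩

lemma bump_not_ext {W : Set ℂ} (hJ : IsJordanDomain W) {γ : ℝ → ℂ} {a b t0 M : ℝ}
    (ha : a < t0) (hb : t0 < b)
    (hγ : ContinuousOn γ (Icc a b)) (hγi : InjOn γ (Icc a b))
    (hsub : γ '' Icc a b ⊆ frontier W) (hM : 0 ≤ M) {f0 : ℂ → ℂ}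
    (hf0 : ∀ z, z ≠ γ t0 → (f0 z ≠ 0 ↔ 0 < Real.sin (1 / ‖z - γ t0‖))) :
    ¬ ExtOn γ (W, a, b) M f0 := by
  rintro ⟨F, hF, hFf⟩
  obtain ⟨b', hb'0, hb'b⟩ := exists_between hb
  let g : ℝ → ℝ := fun t => ‖γ t - γ t0‖
  have hs : Icc t0 b' ⊆ Icc a b := Icc_subset_Icc ha.le hb'b.le
  have hgc : ContinuousOn g (Icc a b) := by fun_prop
  have hg0 : g t0 = 0 := by simp [g]
  have hinj : ∀ t ∈ Icc a b, t ≠ t0 → γ t ≠ γ t0 := fun t ht hne h =>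
    hne (hγi ht ⟨ha.le, hb.le⟩ h)
  have hgb : 0 < g b' := norm_pos_iff.2 (sub_ne_zero.2 (hinj b' (hs ⟨hb'0.le, le_rfl⟩) hb'0.ne'))
  obtain ⟨N, hN⟩ := exists_nat_gt (1 / g b')
  have hval : ∀ x : ℝ, (N : ℝ) ≤ x → ∃ t ∈ Ioo a b, t ≠ t0 ∧ 1 / g t = x := by
    intro x hx
    have hxb : 1 / g b' < x := lt_of_lt_of_le hN hx
    have hx0 : 0 < x := lt_trans (by positivity) hxb
    have h1 : 1 / x < g b' := by
      rw [div_lt_iff₀ hx0]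
      rw [div_lt_iff₀ hgb] at hxb
      linarith
    obtain ⟨t, ht, hgt⟩ := intermediate_value_Icc hb'0.le (hgc.mono hs)
      (show 1 / x ∈ Icc (g t0) (g b') from ⟨by rw [hg0]; positivity, h1.le⟩)
    refine ⟨t, ⟨by linarith [ht.1], by linarith [ht.2]⟩, ?_, by rw [hgt, one_div_one_div]⟩
    rintro rfl
    rw [hg0] at hgt
    have : 0 < 1 / x := by positivity
    linarith
  have hpi := Real.pi_gt_three
  have hNp : (N : ℝ) ≤ N * (2 * Real.pi) := by
    have : (0:ℝ) ≤ N := Nat.cast_nonneg N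
    nlinarith
  obtain ⟨t1, ht1, hne1, hv1⟩ := hval (-(Real.pi / 2) + ((N + 1 : ℕ) : ℝ) * (2 * Real.pi)) (by
    push_cast; nlinarith)
  obtain ⟨t2, ht2, hne2, hv2⟩ := hval (Real.pi / 2 + (N : ℝ) * (2 * Real.pi)) (by linarith)
  have hsin1 : Real.sin (1 / g t1) < 0 := by
    rw [hv1, Real.sin_add_nat_mul_two_pi, Real.sin_neg, Real.sin_pi_div_two]; norm_num
  have hsin2 : 0 < Real.sin (1 / g t2) := by
    rw [hv2, Real.sin_add_nat_mul_two_pi, Real.sin_pi_div_two]; norm_num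
  have hgt1 : g t1 ≠ 0 := norm_ne_zero_iff.2
    (sub_ne_zero.2 (hinj t1 (Ioo_subset_Icc_self ht1) hne1))
  have hca : ContinuousAt (fun t => Real.sin (1 / g t)) t1 := by
    have : ContinuousAt g t1 := hgc.continuousAt (Icc_mem_nhds ht1.1 ht1.2)
    fun_prop (disch := assumption)
  have hev : ∀ᶠ t in 𝓝 t1, Real.sin (1 / g t) < 0 := hca.eventually (gt_mem_nhds hsin1)
  have hev2 : ∀ᶠ t in 𝓝 t1, t ∈ Ioo a b ∧ t ≠ t0 :=
    Filter.Eventually.and (Ioo_mem_nhds ht1.1 ht1.2) (isOpen_ne.mem_nhds hne1)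
  obtain ⟨ε, hε, hball⟩ := Metric.eventually_nhds_iff.1 (hev.and hev2)
  have hz : ∀ t ∈ Ioo (t1 - ε) (t1 + ε), t ∈ Ioo a b ∧ F (γ t) = 0 := by
    intro t ht
    have hd : dist t t1 < ε := by
      rw [Real.dist_eq, abs_lt]; exact ⟨by linarith [ht.1], by linarith [ht.2]⟩
    obtain ⟨h1, h2, h3⟩ := hball hd
    refine ⟨h2, ?_⟩
    rw [hFf _ ⟨t, h2, rfl⟩]
    by_contra hne
    have := (hf0 (γ t) (hinj t (Ioo_subset_Icc_self h2) h3)).1 hne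
    exact absurd h1 (not_lt.2 this.le)
  have hz1 := hz (t1 - ε / 2) ⟨by linarith, by linarith⟩
  have hz2 := hz (t1 + ε / 2) ⟨by linarith, by linarith⟩
  have hall := hol_unique hJ (a' := t1 - ε / 2) (b' := t1 + ε / 2) (by linarith) hz1.1.1.le
    hz2.1.2.le hγ hγi hsub hM hF (fun t ht => (hz t ⟨by linarith [ht.1], by linarith [ht.2]⟩).2)
    t2 ht2
  rw [hFf _ ⟨t2, ht2, rfl⟩] at hall
  exact (hf0 (γ t2) (hinj t2 (Ioo_subset_Icc_self ht2) hne2)).2 hsin2 hall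

lemma ck_nhds (k : ℕ∞) (I : Set ℝ) (γ : ℝ → ℂ) (f : CkGamma k I γ) {a b η : ℝ}
    (hab : Icc a b ⊆ I) (hη : 0 < η) :
    {g : CkGamma k I γ | ∀ t ∈ Icc a b, dist (f.1 (γ t)) (g.1 (γ t)) < η} ∈
      @nhds _ (ckTop k I γ) f := by
  let _ := ckTop k I γ
  have hK : IsCompact (Subtype.val ⁻¹' Icc a b : Set ↥I) := by
    rw [Subtype.isCompact_iff, Subtype.image_preimage_coe, inter_eq_right.2 hab]
    exact isCompact_Icc
  have hc : Continuous (fun f : CkGamma k I γ => UniformOnFun.ofFun {K : Set ↥I | IsCompact K}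
        (fun t : ↥I => if ((0 : ℕ) : ℕ∞) ≤ k then
            iteratedDerivWithin 0 (fun s => f.1 (γ s)) I (t : ℝ) else 0)) :=
    (continuous_apply 0).comp (continuous_induced_dom (f := (fun f : CkGamma k I γ => fun j : ℕ =>
      UniformOnFun.ofFun {K : Set ↥I | IsCompact K}
        (fun t : ↥I => if (j : ℕ∞) ≤ k then
            iteratedDerivWithin j (fun s => f.1 (γ s)) I (t : ℝ) else 0))))
  have := hc.continuousAt (x := f) |>.preimage_mem_nhds
    (UniformOnFun.gen_mem_nhds ℂ _ _ (s := Subtype.val ⁻¹' Icc a b) hK (dist_mem_uniformity hη))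
  refine mem_of_superset this fun g hg t ht => ?_
  have h := hg ⟨t, hab ht⟩ ht
  simpa using h

def ckPert {k : ℕ∞} {I : Set ℝ} {γ : ℝ → ℂ} (f f0 : CkGamma k I γ) (x : ℝ) : CkGamma k I γ :=
  ⟨fun z => f.1 z + (x : ℂ) * f0.1 z, f.2.add (contDiffOn_const.mul f0.2)⟩

lemma ckPert_tendsto {k : ℕ∞} {I : Set ℝ} {γ : ℝ → ℂ} (f f0 : CkGamma k I γ)
    (hI : UniqueDiffOn ℝ I) :
    Tendsto (ckPert f f0) (𝓝 0) (@nhds _ (ckTop k I γ) f) := by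
  have e : @nhds _ (ckTop k I γ) f = _ := nhds_induced _ f
  rw [e, tendsto_comap_iff, tendsto_pi_nhds]
  intro j
  rw [UniformOnFun.tendsto_iff_tendstoUniformlyOn]
  intro K hK
  rw [Metric.tendstoUniformlyOn_iff]
  intro ε hε
  by_cases hj : (j : ℕ∞) ≤ k
  swap
  · refine Eventually.of_forall fun x t ht => ?_
    simp [hj, hε]
  have hj' : ((j : ℕ) : WithTop ℕ∞) ≤ (k : WithTop ℕ∞) := by exact_mod_cast hj
  have hcont := f0.2.continuousOn_iteratedDerivWithin hj' hI
  have hK' : IsCompact (Subtype.val '' K : Set ℝ) := Subtype.isCompact_iff.1 hK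
  obtain ⟨C, hC⟩ := hK'.exists_bound_of_continuousOn
    (hcont.mono (by rintro _ ⟨t, _, rfl⟩; exact t.2))
  have hlim : Tendsto (fun x : ℝ => |x| * C) (𝓝 0) (𝓝 0) := by
    have : Tendsto (fun x : ℝ => |x| * C) (𝓝 0) (𝓝 (|(0:ℝ)| * C)) :=
      (by fun_prop : Continuous fun x : ℝ => |x| * C).tendsto 0
    simpa using this
  filter_upwards [hlim.eventually (gt_mem_nhds hε)] with x hx t ht
  simp only [Function.comp, UniformOnFun.toFun_ofFun, hj, if_true]
  have h1 : ContDiffWithinAt ℝ j (fun s => f.1 (γ s)) I t := (f.2 t t.2).of_le hj'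
  have h2 : ContDiffWithinAt ℝ j (fun s => f0.1 (γ s)) I t := (f0.2 t t.2).of_le hj'
  have h3 : ContDiffWithinAt ℝ j (fun s => (x : ℂ) * f0.1 (γ s)) I t := contDiffWithinAt_const.mul h2
  have : iteratedDerivWithin j (fun s => (ckPert f f0 x).1 (γ s)) I t =
      iteratedDerivWithin j (fun s => f.1 (γ s)) I t +
        (x : ℂ) * iteratedDerivWithin j (fun s => f0.1 (γ s)) I t := by
    rw [← iteratedDerivWithin_const_mul t.2 hI _ h2, ← iteratedDerivWithin_fun_add t.2 hI h1 h3]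
    rfl
  rw [this, dist_self_add_right, norm_mul, Complex.norm_real, Real.norm_eq_abs]
  refine lt_of_le_of_lt ?_ hx
  have := hC t ⟨t, ht, rfl⟩
  gcongr

theorem main_thm
    (l k : ℕ∞) (hkl : k ≤ l) (I : Set ℝ) (hI : I.OrdConnected)
    (γ : ℝ → ℂ) (hloc : LocallyInjOn γ I) (hγ : ContDiffOn ℝ l γ I)
    (t0 : ℝ) (ht0 : t0 ∈ interior I) :
    @Dense (CkGamma k I γ) (ckTop k I γ) {f | ¬ OneSidedHolExtAt I γ f.1 t0} ∧
    @IsGδ (CkGamma k I γ) (ckTop k I γ) {f | ¬ OneSidedHolExtAt I γ f.1 t0} := by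
  let _ := ckTop k I γ
  have hγk : ContDiffOn ℝ k γ I := hγ.of_le (by exact_mod_cast hkl)
  obtain ⟨ε, hε, hinj⟩ := hloc t0 (interior_subset ht0)
  obtain ⟨r, hr, hball⟩ := Metric.isOpen_iff.1 isOpen_interior t0 ht0
  obtain ⟨δ, hδ, hδm⟩ := exists_between (lt_min hε hr)
  have hδε : δ < ε := hδm.trans_le (min_le_left _ _)
  have hδr : δ < r := hδm.trans_le (min_le_right _ _)
  have hIcc : Icc (t0 - δ) (t0 + δ) ⊆ I := fun t ht => interior_subset (hball (by
    rw [mem_ball, Real.dist_eq, abs_lt]; exact ⟨by linarith [ht.1], by linarith [ht.2]⟩))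
  have hγc : ContinuousOn γ (Icc (t0 - δ) (t0 + δ)) := hγ.continuousOn.mono hIcc
  have hγi : InjOn γ (Icc (t0 - δ) (t0 + δ)) := hinj.mono fun t ht =>
    (⟨hIcc ht, by linarith [ht.1], by linarith [ht.2]⟩ : t ∈ I ∩ Ioo (t0 - ε) (t0 + ε))
  obtain ⟨𝒯, hc, hT, hcov⟩ := countable_family hδ hγc hγi
  have hTsub : ∀ T ∈ 𝒯, Icc T.2.1 T.2.2 ⊆ Icc (t0 - δ) (t0 + δ) := fun T h =>
    Icc_subset_Icc (hT T h).2.1 (hT T h).2.2.2.2.1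
  have hiff : ∀ f : ℂ → ℂ, OneSidedHolExtAt I γ f t0 ↔ ∃ T ∈ 𝒯, ∃ M : ℕ, ExtOn γ T M f := by
    intro f
    constructor
    · rintro ⟨Ω, hJ, t1, ht1, t2, ht2, h1, h2, hfr, F, hFc, hFd, hFf⟩
      obtain ⟨T, hTm, hsub, ha, hb, hcl⟩ := hcov Ω t1 t2 hJ h1 h2 hfr
      have hcomp : IsCompact (closure T.1) := (hT T hTm).1.2.2.1.isCompact_closure
      obtain ⟨C, hC⟩ := hcomp.exists_bound_of_continuousOn (hFc.mono hcl)
      obtain ⟨M, hM⟩ := exists_nat_ge C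
      have hio : Ioo T.2.1 T.2.2 ⊆ Ioo t1 t2 := Ioo_subset_Ioo ha.le hb.le
      refine ⟨T, hTm, M, F, ⟨hFc.mono (union_subset_union hsub (image_mono hio)),
        hFd.mono hsub, fun z hz => (hC z (subset_closure hz)).trans hM⟩, ?_⟩
      rintro _ ⟨t, ht, rfl⟩
      exact hFf t (hio ht)
    · rintro ⟨T, hTm, M, F, hF, hFf⟩
      obtain ⟨hJ, h1, h2, h3, h4, h5⟩ := hT T hTm
      refine ⟨T.1, hJ, T.2.1, hIcc ⟨h1, by linarith⟩, T.2.2, hIcc ⟨by linarith, h4⟩, h2, h3, h5,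
        F, hF.1, hF.2.1, fun t ht => hFf _ ⟨t, ht, rfl⟩⟩
  constructor
  · intro f
    rw [mem_closure_iff_nhds]
    intro O hO
    obtain ⟨g0, hg0c, hg0⟩ := exists_bump k (γ t0)
    let f0 : CkGamma k I γ := ⟨g0, hg0c.comp_contDiffOn hγk⟩
    have hUD : UniqueDiffOn ℝ I := uniqueDiffOn_convex hI.convex ⟨t0, ht0⟩
    have hpre := ckPert_tendsto f f0 hUD hO
    have hbad : {x : ℝ | OneSidedHolExtAt I γ (ckPert f f0 x).1 t0}.Countable := by
      have : {x : ℝ | OneSidedHolExtAt I γ (ckPert f f0 x).1 t0} ⊆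
          ⋃ T ∈ 𝒯, {x : ℝ | ∃ M : ℕ, ExtOn γ T M (ckPert f f0 x).1} := by
        intro x hx
        obtain ⟨T, hTm, M, h⟩ := (hiff _).1 hx
        exact mem_biUnion hTm ⟨M, h⟩
      refine Countable.mono this (hc.biUnion fun T hTm => Subsingleton.countable ?_)
      rintro x ⟨M, F, hF, hFf⟩ y ⟨M', F', hF', hFf'⟩
      by_contra hxy
      obtain ⟨hJ, h1, h2, h3, h4, h5⟩ := hT T hTm
      have hxy' : ((x : ℂ) - y) ≠ 0 := by
        rw [sub_ne_zero]; exact_mod_cast hxy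
      refine bump_not_ext hJ h2 h3 (hγc.mono (hTsub T hTm)) (hγi.mono (hTsub T hTm)) h5
        (M := ‖((x : ℂ) - y)⁻¹‖ * (M + M')) (by positivity) hg0
        ⟨fun z => ((x : ℂ) - y)⁻¹ * (F z - F' z),
          ⟨continuousOn_const.mul (hF.1.sub hF'.1),
            (hF.2.1.sub hF'.2.1).const_mul _, fun z hz => ?_⟩, fun w hw => ?_⟩
      · rw [norm_mul]
        gcongr
        exact (norm_sub_le _ _).trans (add_le_add (hF.2.2 z hz) (hF'.2.2 z hz))
      · simp only
        rw [hFf w hw, hFf' w hw]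
        simp only [ckPert, f0]
        field_simp
        ring
    obtain ⟨x, hx1, hx2⟩ := (hbad.dense_compl ℝ).inter_nhds_nonempty hpre
    exact ⟨ckPert f f0 x, hx2, hx1⟩
  · have hset : {f : CkGamma k I γ | ¬ OneSidedHolExtAt I γ f.1 t0} =
        ⋂ T ∈ 𝒯, ⋂ M : ℕ, {f : CkGamma k I γ | ExtOn γ T M f.1}ᶜ := by
      ext f
      simp only [mem_iInter, mem_compl_iff]
      constructor
      · intro h T hTm M h'
        exact h ((hiff f.1).2 ⟨T, hTm, M, h'⟩)
      · intro h h'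
        obtain ⟨T, hTm, M, h''⟩ := (hiff f.1).1 h'
        exact h T hTm M h''
    rw [hset]
    refine IsGδ.biInter hc fun T hTm => IsGδ.iInter fun M => (isOpen_compl_iff.2 ?_).isGδ
    obtain ⟨hJ, h1, h2, h3, h4, h5⟩ := hT T hTm
    refine isClosed_of_closure_subset fun f hf => ?_
    refine ext_closed hJ (h2.trans h3) (hγc.mono (hTsub T hTm)) (hγi.mono (hTsub T hTm)) h5
      (Nat.cast_nonneg M) fun η hη => ?_
    obtain ⟨g, hg1, G, hG, hGg⟩ := mem_closure_iff_nhds.1 hf _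
      (ck_nhds k I γ f ((hTsub T hTm).trans hIcc) hη)
    refine ⟨G, hG, ?_⟩
    rintro _ ⟨t, ht, rfl⟩
    rw [hGg _ ⟨t, ht, rfl⟩, ← dist_eq_norm, dist_comm]
    exact (hg1 t (Ioo_subset_Icc_self ht)).le

end PartI

end Helpers

/-- Let `k ≤ l` in `{0,1,2,...} ∪ {∞}`, `I ⊆ ℝ` an interval, `γ : I → ℂ` locally
injective of class `C^l` on `I`, and `t0` an interior point of `I`. The class of
functions `f ∈ C^k(γ)` which are non one-sided holomorphically extendable at
`(t0, γ(t0))` is a dense and `Gδ` subset of `C^k(γ)`. -/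
theorem nonOneSidedHolExtAt_dense_Gdelta
    (l k : ℕ∞) (hkl : k ≤ l) (I : Set ℝ) (hI : I.OrdConnected)
    (γ : ℝ → ℂ) (hloc : LocallyInjOn γ I) (hγ : ContDiffOn ℝ l γ I)
    (t0 : ℝ) (ht0 : t0 ∈ interior I) :
    @Dense (CkGamma k I γ) (ckTop k I γ) {f | ¬ OneSidedHolExtAt I γ f.1 t0} ∧
    @IsGδ (CkGamma k I γ) (ckTop k I γ) {f | ¬ OneSidedHolExtAt I γ f.1 t0} :=
  main_thm l k hkl I hI γ hloc hγ t0 ht0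
end
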